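/- arXiv:2311.07267 — 5 statements merged into one kernel-verified Lean document; each statement's English description precedes it below -/
import Mathlib

section
/- Let ρ ≥ 0 and let f_k (k ∈ ℕ) and f be proper lower semicontinuous functions from ℝⁿ to ℝ ∪ {+∞} such that the functions f_k + (ρ/2)‖·‖² and f + (ρ/2)‖·‖² are convex and nonnegative. Then the following are equivalent: (i) f_k epi-converges to f, i.e., for every x ∈ ℝⁿ one has liminf_{k→∞} f_k(x_k) ≥ f(x) for every sequence x_k → x, and limsup_{k→∞} f_k(x_k) ≤ f(x) for some sequence x_k → x; (ii) there exists τ > 0 with τρ < 1 such that the Moreau envelopes converge pointwise: env_{τ f_k}(z) → env_{τ f}(z) for every z ∈ ℝⁿ. -/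
open Filter Topology

/-- The Moreau envelope with parameter `τ` of an extended-real-valued function. -/
noncomputable def moreauEnv {n : ℕ} (τ : ℝ) (f : EuclideanSpace ℝ (Fin n) → EReal)
    (z : EuclideanSpace ℝ (Fin n)) : EReal :=
  ⨅ y : EuclideanSpace ℝ (Fin n), f y + ((‖y - z‖ ^ 2 / (2 * τ) : ℝ) : EReal)

/-!
Epi-convergence of `f_k`, together with the coercive quadratic minorant shared by all the functions
`f_k + ‖· - z‖² / (2τ)`, gives convergence of the infima of these functions, that is, of the
envelopes.

Conversely, `f_k y ≥ env_{τ f_k} z - ‖y - z‖² / (2τ)` for all `y` and `z`, and for the weakly convex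
limit `f` the supremum over `z` of the right-hand side is `f y`. Indeed, let `p` minimize
`f + ‖· - x‖² / (2σ)` with `σ` small: then `p` also minimizes `f + ‖· - z‖² / (2τ)` for
`z = p + (τ / σ)(x - p)`, so the supremum at `x` is at least `env_{σ f} x`, which tends to `f x`.
This is the liminf half of epi-convergence. For the limsup half, `f + ‖· - z‖² / (2τ)` grows
quadratically away from `p`, so near-minimizers of `f_k + ‖· - z‖² / (2τ)` converge to `p` and their
`f_k`-values to `f p`; finally `p` is close to `x` and `f p ≤ f x`.
-/

section Sequences

variable {X : Type*}

lemma exists_seq_tendsto_eventually_mem {L : Filter X} [L.IsCountablyGenerated] [Nonempty X]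
    {A : ℕ → Set X} (hA : ∀ U ∈ L, ∀ᶠ k in atTop, (U ∩ A k).Nonempty) :
    ∃ u : ℕ → X, Tendsto u atTop L ∧ ∀ᶠ k in atTop, u k ∈ A k := by
  classical
  obtain ⟨V, hV⟩ := L.exists_antitone_basis
  -- At stage `k` use the smallest of `V 0, …, V k` that still meets `A k`.
  let level (k : ℕ) : ℕ := Nat.findGreatest (fun m => (V m ∩ A k).Nonempty) k
  have exists_mem (k : ℕ) : ∃ y, (V 0 ∩ A k).Nonempty → y ∈ V (level k) ∩ A k := by
    by_cases h : (V 0 ∩ A k).Nonempty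
    · obtain ⟨y, hy⟩ := Nat.findGreatest_spec (P := fun m => (V m ∩ A k).Nonempty) k.zero_le h
      exact ⟨y, fun _ => hy⟩
    · exact ⟨Classical.arbitrary X, fun h' => absurd h' h⟩
  choose u hu using exists_mem
  have meets_zero := hA _ (hV.mem 0)
  refine ⟨u, hV.tendsto_right_iff.2 fun m _ => ?_, meets_zero.mono fun k hk => (hu k hk).2⟩
  filter_upwards [meets_zero, hA _ (hV.mem m), eventually_ge_atTop m] with k hk0 hkm hmk
  exact hV.antitone (Nat.le_findGreatest hmk hkm) (hu k hk0).1

variable [TopologicalSpace X]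

lemma tendsto_extend_const {φ : ℕ → ℕ} (hφ : StrictMono φ) {v : ℕ → X} {x : X}
    (hv : Tendsto v atTop (𝓝 x)) :
    Tendsto (Function.extend φ v fun _ => x) atTop (𝓝 x) := by
  refine tendsto_def.2 fun U hU => ?_
  obtain ⟨N, hN⟩ := eventually_atTop.1 (hv.eventually hU)
  filter_upwards [eventually_ge_atTop (φ N)] with k hk
  change Function.extend φ v (fun _ => x) k ∈ U
  by_cases hrange : ∃ m, φ m = k
  · obtain ⟨m, rfl⟩ := hrange
    rw [hφ.injective.extend_apply]
    exact hN m (hφ.le_iff_le.1 hk)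
  · rw [Function.extend_apply' _ _ _ hrange]
    exact mem_of_mem_nhds hU

lemma eventually_atTop_prod_nhds_iff_forall_seq [FirstCountableTopology X] {x : X}
    {P : ℕ → X → Prop} :
    (∀ᶠ p in atTop ×ˢ 𝓝 x, P p.1 p.2) ↔
      ∀ u : ℕ → X, Tendsto u atTop (𝓝 x) → ∀ᶠ k in atTop, P k (u k) := by
  refine ⟨fun h u hu => (tendsto_id.prodMk hu).eventually h, fun h => ?_⟩
  by_contra hP
  obtain ⟨V, hV⟩ := (𝓝 x).exists_antitone_basis
  have frequently_bad (m : ℕ) : ∃ᶠ k in atTop, ∃ y ∈ V m, ¬ P k y := fun hgood =>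
    hP <| by
      have hprod := prod_mem_prod hgood (hV.mem m)
      filter_upwards [hprod] with p hp
      by_contra hbad
      exact hp.1 ⟨p.2, hp.2, hbad⟩
  obtain ⟨φ, hφ, hbad⟩ := extraction_forall_of_frequently frequently_bad
  choose v hvV hvP using hbad
  have hgood := h _ (tendsto_extend_const hφ (hV.tendsto hvV))
  obtain ⟨m, hm⟩ := (hφ.tendsto_atTop.eventually hgood).exists
  rw [hφ.injective.extend_apply] at hm
  exact hvP m hm

end Sequences

section EpiLimits

variable {ι X β : Type*} [TopologicalSpace X]

/-- The lower half of epi-convergence of `F` to `f` at `x`, along a filter `l`: every value below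
`f x` is eventually below `F i y`, jointly in `i` and in `y` near `x`. -/
def EpiLiminfGEAt [Preorder β] (l : Filter ι) (F : ι → X → β) (f : X → β) (x : X) : Prop :=
  ∀ a < f x, ∀ᶠ p in l ×ˢ 𝓝 x, a < F p.1 p.2

/-- The upper half of epi-convergence of `F` to `f` at `x`, along a filter `l`: for every value
above `f x`, eventually `F i` goes below it somewhere in any prescribed neighbourhood of `x`. -/
def EpiLimsupLEAt [Preorder β] (l : Filter ι) (F : ι → X → β) (f : X → β) (x : X) : Prop :=
  ∀ a > f x, ∀ U ∈ 𝓝 x, ∀ᶠ i in l, ∃ y ∈ U, F i y < a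

section Sequential

variable [FirstCountableTopology X] [CompleteLinearOrder β] {F : ℕ → X → β} {f : X → β} {x : X}

lemma epiLiminfGEAt_iff_forall_seq :
    EpiLiminfGEAt atTop F f x ↔
      ∀ u : ℕ → X, Tendsto u atTop (𝓝 x) → f x ≤ liminf (fun k => F k (u k)) atTop := by
  refine ⟨fun h u hu => (le_liminf_iff).2 fun a ha => ?_, fun h a ha => ?_⟩
  · exact eventually_atTop_prod_nhds_iff_forall_seq (P := fun k y => a < F k y) |>.1 (h a ha) u hu
  · exact eventually_atTop_prod_nhds_iff_forall_seq (P := fun k y => a < F k y) |>.2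
      fun u hu => (le_liminf_iff).1 (h u hu) a ha

variable [TopologicalSpace β] [OrderTopology β] [FirstCountableTopology β]

-- A sequence in `X × β` converging to `(x, f x)` and lying in the epigraphs of the `F k` carries
-- both the convergence to `x` and the bound on the values.
lemma EpiLimsupLEAt.exists_seq (h : EpiLimsupLEAt atTop F f x) :
    ∃ u : ℕ → X, Tendsto u atTop (𝓝 x) ∧ limsup (fun k => F k (u k)) atTop ≤ f x := by
  have meets_epigraph : ∀ W ∈ 𝓝 (x, f x),
      ∀ᶠ k in atTop, (W ∩ {p | F k p.1 ≤ p.2}).Nonempty := by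
    intro W hW
    obtain ⟨U, hU, T, hT, hUT⟩ := mem_nhds_prod_iff.1 hW
    by_cases htop : f x = ⊤
    · refine Eventually.of_forall fun k => ⟨(x, f x), mem_of_mem_nhds hW, ?_⟩
      exact le_top.trans_eq htop.symm
    · obtain ⟨a, ha, haT⟩ := exists_Ico_subset_of_mem_nhds hT ⟨⊤, Ne.lt_top htop⟩
      filter_upwards [h a ha U hU] with k ⟨y, hyU, hya⟩
      exact ⟨(y, max (F k y) (f x)), hUT ⟨hyU, haT ⟨le_max_right _ _, max_lt hya ha⟩⟩,
        le_max_left _ _⟩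
  have : Nonempty (X × β) := ⟨(x, f x)⟩
  obtain ⟨u, hu, hmem⟩ := exists_seq_tendsto_eventually_mem meets_epigraph
  rw [nhds_prod_eq] at hu
  refine ⟨fun k => (u k).1, tendsto_fst.comp hu, ?_⟩
  calc limsup (fun k => F k (u k).1) atTop
      ≤ limsup (fun k => (u k).2) atTop := limsup_le_limsup hmem
    _ = f x := (tendsto_snd.comp hu).limsup_eq

lemma epiLimsupLEAt_iff_exists_seq :
    EpiLimsupLEAt atTop F f x ↔
      ∃ u : ℕ → X, Tendsto u atTop (𝓝 x) ∧ limsup (fun k => F k (u k)) atTop ≤ f x := by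
  refine ⟨EpiLimsupLEAt.exists_seq, fun ⟨u, hu, hlimsup⟩ a ha U hU => ?_⟩
  filter_upwards [hu.eventually hU, eventually_lt_of_limsup_lt (hlimsup.trans_lt ha)] with k hkU hka
  exact ⟨u k, hkU, hka⟩

end Sequential

section Perturbation

variable {l : Filter ι} {F : ι → X → EReal} {f : X → EReal} {g : X → ℝ} {x : X}

lemma continuousAt_const_sub_coe (hg : ContinuousAt g x) (a : EReal) :
    ContinuousAt (fun y => a - (g y : EReal)) x := by
  have hneg : ContinuousAt (fun y => -(g y : EReal)) x :=
    continuous_neg.continuousAt.comp (continuous_coe_real_ereal.continuousAt.comp hg)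
  have hadd := EReal.continuousAt_add (p := (a, -(g x : EReal)))
    (Or.inr (by simp [← EReal.coe_neg])) (Or.inr (by simp [← EReal.coe_neg]))
  exact hadd.comp_of_eq (continuousAt_const.prodMk hneg) rfl

lemma EpiLiminfGEAt.add_coe (h : EpiLiminfGEAt l F f x) (hg : ContinuousAt g x) :
    EpiLiminfGEAt l (fun i y => F i y + (g y : EReal)) (fun y => f y + (g y : EReal)) x := by
  intro a ha
  have sub_lt_iff (y : X) (b : EReal) : a - g y < b ↔ a < b + g y :=
    EReal.sub_lt_iff (Or.inl (EReal.coe_ne_bot _)) (Or.inl (EReal.coe_ne_top _))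
  obtain ⟨b, hab, hbf⟩ := exists_between ((sub_lt_iff x (f x)).2 ha)
  have hb := (continuousAt_const_sub_coe hg a).eventually_lt_const hab
  filter_upwards [h b hbf, hb.prod_inr l] with p hbF hab
  exact (sub_lt_iff p.2 (F p.1 p.2)).1 (hab.trans hbF)

lemma EpiLimsupLEAt.add_coe (h : EpiLimsupLEAt l F f x) (hg : ContinuousAt g x) :
    EpiLimsupLEAt l (fun i y => F i y + (g y : EReal)) (fun y => f y + (g y : EReal)) x := by
  intro a ha U hU
  have lt_sub_iff (y : X) (b : EReal) : b < a - g y ↔ b + g y < a :=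
    EReal.lt_sub_iff_add_lt (Or.inl (EReal.coe_ne_bot _)) (Or.inl (EReal.coe_ne_top _))
  obtain ⟨b, hfb, hba⟩ := exists_between ((lt_sub_iff x (f x)).2 ha)
  have hb := (continuousAt_const_sub_coe hg a).eventually_const_lt hba
  filter_upwards [h b hfb _ (inter_mem hU hb)] with i ⟨y, ⟨hyU, hby⟩, hFb⟩
  exact ⟨y, hyU, (lt_sub_iff y (F i y)).1 (hFb.trans hby)⟩

end Perturbation

section Infima

variable {l : Filter ι} {F : ι → X → EReal} {f m : X → EReal}

lemma eventually_forall_mem_lt_of_epiLiminfGEAt (h : ∀ x, EpiLiminfGEAt l F f x)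
    (hm : Tendsto m (cocompact X) (𝓝 ⊤)) (hmF : ∀ i y, m y ≤ F i y) {S : Set X}
    (hS : IsClosed S) {a : ℝ} (ha : ∀ y ∈ S, a < f y) :
    ∀ᶠ i in l, ∀ y ∈ S, a < F i y := by
  obtain ⟨K, hK, hKm⟩ := mem_cocompact.1 (hm.eventually_const_lt (EReal.coe_lt_top a))
  have on_compact : ∀ᶠ p in l ×ˢ 𝓝ˢ (K ∩ S), a < F p.1 p.2 := by
    simp only [(hK.inter_right hS).prod_nhdsSet_eq_biSup, eventually_iSup]
    exact fun y hy => h y a (ha y hy.2)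
  filter_upwards [on_compact.curry] with i hi y hyS
  by_cases hyK : y ∈ K
  · exact hi.self_of_nhdsSet y ⟨hyK, hyS⟩
  · exact (hKm hyK).trans_le (hmF i y)

theorem tendsto_iInf_of_epi (hlower : ∀ x, EpiLiminfGEAt l F f x)
    (hupper : ∀ x, EpiLimsupLEAt l F f x)
    (hm : Tendsto m (cocompact X) (𝓝 ⊤)) (hmF : ∀ i y, m y ≤ F i y) :
    Tendsto (fun i => ⨅ y, F i y) l (𝓝 (⨅ y, f y)) := by
  refine tendsto_order.2 ⟨fun a ha => ?_, fun a ha => ?_⟩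
  · obtain ⟨b, hab, hbf⟩ := EReal.lt_iff_exists_real_btwn.1 ha
    filter_upwards [eventually_forall_mem_lt_of_epiLiminfGEAt hlower hm hmF isClosed_univ
      fun y _ => hbf.trans_le (iInf_le f y)] with i hi
    exact hab.trans_le (le_iInf fun y => (hi y trivial).le)
  · obtain ⟨y, hy⟩ := iInf_lt_iff.1 ha
    filter_upwards [hupper y a hy Set.univ univ_mem] with i ⟨y', _, hy'⟩
    exact (iInf_le _ y').trans_lt hy'

lemma epiLimsupLEAt_of_tendsto_iInf (hlower : ∀ x, EpiLiminfGEAt l F f x)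
    (hm : Tendsto m (cocompact X) (𝓝 ⊤)) (hmF : ∀ i y, m y ≤ F i y)
    (hinf : Tendsto (fun i => ⨅ y, F i y) l (𝓝 (⨅ y, f y))) {p : X}
    (hp : ∀ U ∈ 𝓝 p, ∃ a > f p, ∀ y ∉ U, a ≤ f y) : EpiLimsupLEAt l F f p := by
  intro a ha U hU
  obtain ⟨b, hb, hbU⟩ := hp (interior U) (interior_mem_nhds.2 hU)
  obtain ⟨c, hpc, hc⟩ := EReal.lt_iff_exists_real_btwn.1 (lt_min ha hb)
  have lt_off : ∀ᶠ i in l, ∀ y ∈ (interior U)ᶜ, c < F i y :=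
    eventually_forall_mem_lt_of_epiLiminfGEAt hlower hm hmF isOpen_interior.isClosed_compl
      fun y hy => hc.trans_le ((min_le_right a b).trans (hbU y hy))
  filter_upwards [lt_off, hinf.eventually_lt_const ((iInf_le f p).trans_lt hpc)] with i hi hic
  obtain ⟨y, hy⟩ := iInf_lt_iff.1 hic
  refine ⟨y, interior_subset (by_contra fun hyU => hy.not_gt (hi y hyU)), ?_⟩
  exact hy.trans (hc.trans_le (min_le_left a b))

lemma exists_forall_le_of_tendsto_cocompact [Nonempty X] (hf : LowerSemicontinuous f)
    (hlim : Tendsto f (cocompact X) (𝓝 ⊤)) : ∃ p, ∀ y, f p ≤ f y := by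
  by_cases htop : ∀ y, f y = ⊤
  · exact ⟨Classical.arbitrary X, fun y => by rw [htop, htop]⟩
  · obtain ⟨x₀, hx₀⟩ := not_forall.1 htop
    obtain ⟨K, hK, hKf⟩ := mem_cocompact.1 (hlim.eventually_const_lt (Ne.lt_top hx₀))
    have hx₀K : x₀ ∈ K := by_contra fun h => lt_irrefl (f x₀) (hKf h)
    obtain ⟨p, -, hp⟩ := (hf.lowerSemicontinuousOn K).exists_isMinOn ⟨x₀, hx₀K⟩ hK
    refine ⟨p, fun y => ?_⟩
    by_cases hy : y ∈ K
    · exact hp hy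
    · exact (hp hx₀K).trans (hKf hy).le

end Infima

end EpiLimits

section Quadratic

variable {E : Type*} [NormedAddCommGroup E]

lemma tendsto_quadratic_cocompact_atTop [ProperSpace E] {ρ τ : ℝ} (hτ : 0 < τ) (hτρ : τ * ρ < 1)
    (z : E) :
    Tendsto (fun y => -(ρ / 2 * ‖y‖ ^ 2) + ‖y - z‖ ^ 2 / (2 * τ)) (cocompact E) atTop := by
  have hcoeff : 0 < (1 - τ * ρ) / (2 * τ) := by
    have := sub_pos.2 hτρ
    positivity
  have hradial : Tendsto (fun r : ℝ => r * ((1 - τ * ρ) / (2 * τ) * r - ‖z‖ / τ)) atTop atTop :=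
    tendsto_id.atTop_mul_atTop₀
      (tendsto_atTop_add_const_right _ _ (tendsto_id.const_mul_atTop hcoeff))
  refine tendsto_atTop_mono (fun y => ?_) (hradial.comp (tendsto_norm_cocompact_atTop (E := E)))
  calc ‖y‖ * ((1 - τ * ρ) / (2 * τ) * ‖y‖ - ‖z‖ / τ)
      = -(ρ / 2 * ‖y‖ ^ 2) + (‖y‖ ^ 2 - 2 * ‖y‖ * ‖z‖) / (2 * τ) := by
        field_simp
        ring
    _ ≤ -(ρ / 2 * ‖y‖ ^ 2) + ‖y - z‖ ^ 2 / (2 * τ) := by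
        have : (‖y‖ - ‖z‖) ^ 2 ≤ ‖y - z‖ ^ 2 :=
          sq_le_sq.2 (by simpa only [abs_norm] using abs_norm_sub_norm_le y z)
        gcongr
        nlinarith [sq_nonneg ‖z‖]

lemma eventually_forall_lt_quadratic_of_le_norm_sub (ρ M : ℝ) (x : E) {δ : ℝ} (hδ : 0 < δ) :
    ∀ᶠ σ : ℝ in 𝓝[>] 0, ∀ y, δ ≤ ‖y - x‖ →
      M < -(ρ / 2 * ‖y‖ ^ 2) + ‖y - x‖ ^ 2 / (2 * σ) := by
  filter_upwards [tendsto_inv_nhdsGT_zero.eventually_gt_atTop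
    (2 * (|ρ| + (|M| + |ρ| * ‖x‖ ^ 2) / δ ^ 2))] with σ hσ y hy
  have norm_sq_le : ‖y‖ ^ 2 ≤ 2 * ‖y - x‖ ^ 2 + 2 * ‖x‖ ^ 2 := by
    have : ‖y‖ ≤ ‖y - x‖ + ‖x‖ := by simpa using norm_add_le (y - x) x
    nlinarith [norm_nonneg y, sq_nonneg (‖y - x‖ - ‖x‖)]
  have weight_le : |M| + |ρ| * ‖x‖ ^ 2 ≤ (|M| + |ρ| * ‖x‖ ^ 2) / δ ^ 2 * ‖y - x‖ ^ 2 := by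
    rw [div_mul_eq_mul_div, le_div_iff₀ (by positivity)]
    gcongr
  have : 0 < ‖y - x‖ ^ 2 := by
    have := hδ.trans_le hy
    positivity
  calc M ≤ |M| := le_abs_self M
    _ ≤ -(|ρ| / 2 * ‖y‖ ^ 2) + (|ρ| + (|M| + |ρ| * ‖x‖ ^ 2) / δ ^ 2) * ‖y - x‖ ^ 2 := by
        nlinarith [mul_le_mul_of_nonneg_left norm_sq_le (abs_nonneg ρ)]
    _ < -(|ρ| / 2 * ‖y‖ ^ 2) + σ⁻¹ / 2 * ‖y - x‖ ^ 2 := by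
        gcongr
        linarith
    _ ≤ -(ρ / 2 * ‖y‖ ^ 2) + ‖y - x‖ ^ 2 / (2 * σ) := by
        have : ρ * ‖y‖ ^ 2 ≤ |ρ| * ‖y‖ ^ 2 := by
          gcongr
          exact le_abs_self ρ
        have : σ⁻¹ / 2 * ‖y - x‖ ^ 2 = ‖y - x‖ ^ 2 / (2 * σ) := by
          rw [div_mul_eq_mul_div, inv_mul_eq_div, div_div, mul_comm σ]
        linarith

lemma nonneg_of_forall_nonneg_add_mul {a b : ℝ} (h : ∀ t, 0 < t → t < 1 → 0 ≤ a + t * b) :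
    0 ≤ a := by
  have hlim : Tendsto (fun t : ℝ => a + t * b) (𝓝[>] 0) (𝓝 a) := by
    have : Continuous fun t : ℝ => a + t * b := by fun_prop
    simpa using (this.tendsto 0).mono_left nhdsWithin_le_nhds
  refine ge_of_tendsto hlim ?_
  filter_upwards [Ioo_mem_nhdsGT (zero_lt_one (α := ℝ))] with t ht
  exact h t ht.1 ht.2

end Quadratic

section MoreauEnvelope

section Normed

variable {E : Type*} [NormedAddCommGroup E]

/-- The function `f + ‖· - z‖² / (2τ)` minimized by the proximal map of `f` at `z`. -/
noncomputable def proxObjective (τ : ℝ) (f : E → EReal) (z y : E) : EReal :=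
  f y + ((‖y - z‖ ^ 2 / (2 * τ) : ℝ) : EReal)

/-- The Moreau envelope on an arbitrary normed group; on `EuclideanSpace ℝ (Fin n)` it is
definitionally `moreauEnv`. -/
noncomputable def moreauEnvelope (τ : ℝ) (f : E → EReal) (z : E) : EReal :=
  ⨅ y, proxObjective τ f z y

variable {ρ τ : ℝ} {f : E → EReal} {x z : E}

lemma continuous_norm_sub_sq_div (τ : ℝ) (z : E) :
    Continuous fun y : E => ‖y - z‖ ^ 2 / (2 * τ) := by
  fun_prop

lemma add_coe_add_coe_neg (a : EReal) (r : ℝ) : a + (r : EReal) + ((-r : ℝ) : EReal) = a := by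
  rw [add_assoc, ← EReal.coe_add, add_neg_cancel, EReal.coe_zero, add_zero]

lemma coe_neg_le_of_nonneg_add {a : EReal} {r : ℝ} (h : 0 ≤ a + (r : EReal)) :
    ((-r : ℝ) : EReal) ≤ a := by
  simpa only [zero_add, add_coe_add_coe_neg] using add_le_add_left h ((-r : ℝ) : EReal)

lemma le_proxObjective (hτ : 0 < τ) (f : E → EReal) (z y : E) : f y ≤ proxObjective τ f z y :=
  le_add_of_nonneg_right (EReal.coe_nonneg.2 (by positivity))

lemma proxObjective_self (τ : ℝ) (f : E → EReal) (z : E) : proxObjective τ f z z = f z := by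
  simp [proxObjective]

lemma proxObjective_lt_top_iff {y : E} : proxObjective τ f z y < ⊤ ↔ f y < ⊤ := by
  rw [proxObjective]
  induction f y <;> simp [← EReal.coe_add, EReal.coe_lt_top]

lemma coe_quadratic_le_proxObjective (hf : ∀ y, ((-(ρ / 2 * ‖y‖ ^ 2) : ℝ) : EReal) ≤ f y)
    (τ : ℝ) (z y : E) :
    ((-(ρ / 2 * ‖y‖ ^ 2) + ‖y - z‖ ^ 2 / (2 * τ) : ℝ) : EReal) ≤ proxObjective τ f z y := by
  rw [EReal.coe_add]
  exact add_le_add_left (hf y) _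

lemma moreauEnvelope_le (τ : ℝ) (f : E → EReal) (z : E) : moreauEnvelope τ f z ≤ f z :=
  (iInf_le _ z).trans_eq (proxObjective_self τ f z)

lemma moreauEnvelope_add_coe_neg_le (τ : ℝ) (f : E → EReal) (z y : E) :
    moreauEnvelope τ f z + ((-(‖y - z‖ ^ 2 / (2 * τ)) : ℝ) : EReal) ≤ f y :=
  (add_le_add_left (iInf_le _ y) _).trans_eq (add_coe_add_coe_neg (f y) _)

lemma tendsto_coe_quadratic_cocompact [ProperSpace E] (hτ : 0 < τ) (hτρ : τ * ρ < 1) (z : E) :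
    Tendsto (fun y => ((-(ρ / 2 * ‖y‖ ^ 2) + ‖y - z‖ ^ 2 / (2 * τ) : ℝ) : EReal))
      (cocompact E) (𝓝 ⊤) :=
  EReal.tendsto_coe_nhds_top_iff.2 (tendsto_quadratic_cocompact_atTop hτ hτρ z)

lemma exists_forall_proxObjective_le [ProperSpace E] (hlsc : LowerSemicontinuous f)
    (hf : ∀ y, ((-(ρ / 2 * ‖y‖ ^ 2) : ℝ) : EReal) ≤ f y) (hτ : 0 < τ) (hτρ : τ * ρ < 1) (z : E) :
    ∃ p, ∀ y, proxObjective τ f z p ≤ proxObjective τ f z y := by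
  refine exists_forall_le_of_tendsto_cocompact ?_ ?_
  · refine hlsc.add' (continuous_coe_real_ereal.comp
      (continuous_norm_sub_sq_div τ z)).lowerSemicontinuous fun y => ?_
    exact EReal.continuousAt_add (Or.inr (EReal.coe_ne_bot _)) (Or.inr (EReal.coe_ne_top _))
  · exact tendsto_of_tendsto_of_tendsto_of_le_of_le (tendsto_coe_quadratic_cocompact hτ hτρ z)
      tendsto_const_nhds (coe_quadratic_le_proxObjective hf τ z) fun _ => le_top

theorem tendsto_moreauEnvelope_nhdsGT_zero
    (hf : ∀ y, ((-(ρ / 2 * ‖y‖ ^ 2) : ℝ) : EReal) ≤ f y) (hlsc : LowerSemicontinuousAt f x) :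
    Tendsto (fun σ => moreauEnvelope σ f x) (𝓝[>] 0) (𝓝 (f x)) := by
  refine tendsto_order.2 ⟨fun a ha => ?_, fun a ha => ?_⟩
  · obtain ⟨b, hab, hbf⟩ := EReal.lt_iff_exists_real_btwn.1 ha
    obtain ⟨δ, hδ, hball⟩ := Metric.eventually_nhds_iff.1 (hlsc b hbf)
    filter_upwards [eventually_forall_lt_quadratic_of_le_norm_sub ρ b x hδ,
      self_mem_nhdsWithin] with σ hfar hσ
    refine hab.trans_le (le_iInf fun y => ?_)
    rcases lt_or_ge ‖y - x‖ δ with hy | hy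
    · exact (hball (by rwa [dist_eq_norm])).le.trans (le_proxObjective hσ f x y)
    · exact (EReal.coe_le_coe_iff.2 (hfar y hy).le).trans
        (coe_quadratic_le_proxObjective hf σ x y)
  · exact Eventually.of_forall fun σ => (moreauEnvelope_le σ f x).trans_lt ha

lemma eventually_forall_minimizer_mem (hf : ∀ y, ((-(ρ / 2 * ‖y‖ ^ 2) : ℝ) : EReal) ≤ f y)
    (hx : f x < ⊤) {U : Set E} (hU : U ∈ 𝓝 x) :
    ∀ᶠ σ in 𝓝[>] 0, ∀ p, (∀ y, proxObjective σ f x p ≤ proxObjective σ f x y) → p ∈ U := by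
  obtain ⟨δ, hδ, hball⟩ := Metric.mem_nhds_iff.1 hU
  obtain ⟨M, hxM, -⟩ := EReal.lt_iff_exists_real_btwn.1 hx
  filter_upwards [eventually_forall_lt_quadratic_of_le_norm_sub ρ M x hδ] with σ hfar p hp
  refine hball (mem_ball_iff_norm.2 (lt_of_not_ge fun hδp => ?_))
  refine lt_irrefl (M : EReal) ?_
  calc (M : EReal) < _ := EReal.coe_lt_coe_iff.2 (hfar p hδp)
    _ ≤ proxObjective σ f x p := coe_quadratic_le_proxObjective hf σ x p
    _ ≤ proxObjective σ f x x := hp x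
    _ = f x := proxObjective_self σ f x
    _ < M := hxM

end Normed

section WeaklyConvex

variable {E : Type*} [NormedAddCommGroup E] [InnerProductSpace ℝ E]

/-- `ρ`-weak convexity: convexity of the extended-real-valued function `f + (ρ / 2)‖·‖²`. -/
def WeaklyConvex (ρ : ℝ) (f : E → EReal) : Prop :=
  ∀ x y : E, ∀ a b : ℝ, 0 ≤ a → 0 ≤ b → a + b = 1 →
    f (a • x + b • y) + ((ρ / 2 * ‖a • x + b • y‖ ^ 2 : ℝ) : EReal) ≤
      (a : EReal) * (f x + ((ρ / 2 * ‖x‖ ^ 2 : ℝ) : EReal)) +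
        (b : EReal) * (f y + ((ρ / 2 * ‖y‖ ^ 2 : ℝ) : EReal))

variable {ρ σ τ : ℝ} {f : E → EReal} {p x y : E}

lemma norm_sq_segment (p y : E) (t : ℝ) :
    ‖(1 - t) • p + t • y‖ ^ 2 =
      (1 - t) * ‖p‖ ^ 2 + t * ‖y‖ ^ 2 - t * (1 - t) * ‖y - p‖ ^ 2 := by
  rw [norm_add_sq_real, norm_sub_sq_real, norm_smul, norm_smul, mul_pow, mul_pow,
    Real.norm_eq_abs, Real.norm_eq_abs, sq_abs, sq_abs, real_inner_smul_left,
    real_inner_smul_right, real_inner_comm y p]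
  ring

lemma norm_sub_sq_segment (p y x : E) (t : ℝ) :
    ‖(1 - t) • p + t • y - x‖ ^ 2 =
      ‖p - x‖ ^ 2 - 2 * t * inner ℝ (x - p) (y - p) + t ^ 2 * ‖y - p‖ ^ 2 := by
  have : (1 - t) • p + t • y - x = t • (y - p) - (x - p) := by module
  rw [this, norm_sub_sq_real, norm_smul, mul_pow, Real.norm_eq_abs, sq_abs, real_inner_smul_left,
    real_inner_comm, norm_sub_rev x p]
  ring

lemma WeaklyConvex.le_segment (hf : WeaklyConvex ρ f) {α β : ℝ} (hp : f p = α) (hy : f y = β)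
    {t : ℝ} (ht₀ : 0 ≤ t) (ht₁ : t ≤ 1) :
    f ((1 - t) • p + t • y) ≤
      (((1 - t) * α + t * β + ρ / 2 * (t * (1 - t)) * ‖y - p‖ ^ 2 : ℝ) : EReal) := by
  have h := hf p y (1 - t) t (sub_nonneg.2 ht₁) ht₀ (sub_add_cancel 1 t)
  rw [hp, hy] at h
  norm_cast at h
  have h' := add_le_add_left h ((-(ρ / 2 * ‖(1 - t) • p + t • y‖ ^ 2) : ℝ) : EReal)
  rw [add_coe_add_coe_neg, ← EReal.coe_add] at h'
  refine h'.trans_eq (congrArg _ ?_)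
  rw [norm_sq_segment]
  ring

-- Compare `p` with the points of the segment towards `y` and let them tend to `p`.
lemma WeaklyConvex.add_inner_le (hf : WeaklyConvex ρ f)
    (hmin : ∀ y, proxObjective σ f x p ≤ proxObjective σ f x y) (hp : f p < ⊤) (y : E) :
    f p + ((inner ℝ (x - p) (y - p) / σ - ρ / 2 * ‖y - p‖ ^ 2 : ℝ) : EReal) ≤ f y := by
  rcases eq_or_ne (f p) ⊥ with hpbot | hpbot
  · simp [hpbot]
  rcases eq_or_ne (f y) ⊤ with hytop | hytop
  · simp [hytop]
  have hybot : f y ≠ ⊥ := fun hybot => hpbot <| by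
    simpa [proxObjective, hybot, EReal.add_eq_bot_iff] using hmin y
  lift f p to ℝ using ⟨hp.ne, hpbot⟩ with α hα
  lift f y to ℝ using ⟨hytop, hybot⟩ with β hβ
  rw [← EReal.coe_add, EReal.coe_le_coe_iff]
  have along_segment : ∀ t : ℝ, 0 < t → t < 1 →
      0 ≤ (β - α - inner ℝ (x - p) (y - p) / σ + ρ / 2 * ‖y - p‖ ^ 2)
        + t * (‖y - p‖ ^ 2 / (2 * σ) - ρ / 2 * ‖y - p‖ ^ 2) := by
    intro t ht₀ ht₁
    have h := (hmin ((1 - t) • p + t • y)).trans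
      (add_le_add_left (hf.le_segment hα.symm hβ.symm ht₀.le ht₁.le) _)
    rw [proxObjective, ← hα, ← EReal.coe_add, ← EReal.coe_add, EReal.coe_le_coe_iff,
      norm_sub_sq_segment] at h
    refine nonneg_of_mul_nonneg_right (a := t) ?_ ht₀
    linear_combination h
  linarith [nonneg_of_forall_nonneg_add_mul along_segment]

-- The quadratic centred at `p + (τ / σ) • (x - p)` has at `p` the same slope `(p - x) / σ` as the
-- one centred at `x`, so `p` stays a minimizer when the parameter `σ` is replaced by `τ`.
lemma WeaklyConvex.proxObjective_add_le (hf : WeaklyConvex ρ f)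
    (hmin : ∀ y, proxObjective σ f x p ≤ proxObjective σ f x y) (hp : f p < ⊤) (hτ : 0 < τ)
    (y : E) :
    proxObjective τ f (p + (τ / σ) • (x - p)) p +
        (((1 - τ * ρ) / (2 * τ) * ‖y - p‖ ^ 2 : ℝ) : EReal) ≤
      proxObjective τ f (p + (τ / σ) • (x - p)) y := by
  set z := p + (τ / σ) • (x - p) with hz
  have expand : ‖y - z‖ ^ 2 / (2 * τ) =
      ‖p - z‖ ^ 2 / (2 * τ) - inner ℝ (x - p) (y - p) / σ + ‖y - p‖ ^ 2 / (2 * τ) := by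
    have hyz : y - z = (y - p) - (τ / σ) • (x - p) := by rw [hz]; abel
    have hpz : p - z = -((τ / σ) • (x - p)) := by rw [hz]; abel
    rw [hyz, hpz, norm_neg, norm_sub_sq_real, real_inner_smul_right, real_inner_comm]
    field_simp
    ring
  calc proxObjective τ f z p + (((1 - τ * ρ) / (2 * τ) * ‖y - p‖ ^ 2 : ℝ) : EReal)
      = f p + ((inner ℝ (x - p) (y - p) / σ - ρ / 2 * ‖y - p‖ ^ 2 : ℝ) : EReal) +
          ((‖y - z‖ ^ 2 / (2 * τ) : ℝ) : EReal) := by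
        rw [proxObjective, add_assoc, add_assoc, ← EReal.coe_add, ← EReal.coe_add, expand]
        congr 2
        field_simp
        ring
    _ ≤ proxObjective τ f z y := add_le_add_left (hf.add_inner_le hmin hp y) _

lemma WeaklyConvex.moreauEnvelope_eq_proxObjective (hf : WeaklyConvex ρ f)
    (hmin : ∀ y, proxObjective σ f x p ≤ proxObjective σ f x y) (hp : f p < ⊤) (hτ : 0 < τ)
    (hτρ : τ * ρ ≤ 1) :
    moreauEnvelope τ f (p + (τ / σ) • (x - p)) =
      proxObjective τ f (p + (τ / σ) • (x - p)) p := by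
  refine le_antisymm (iInf_le _ p) (le_iInf fun y => ?_)
  have : 0 ≤ 1 - τ * ρ := sub_nonneg.2 hτρ
  exact (le_add_of_nonneg_right (EReal.coe_nonneg.2 (by positivity))).trans
    (hf.proxObjective_add_le hmin hp hτ y)

lemma WeaklyConvex.exists_lt_forall_notMem_le_proxObjective (hf : WeaklyConvex ρ f)
    (hmin : ∀ y, proxObjective σ f x p ≤ proxObjective σ f x y) (hp : f p < ⊤) (hpbot : f p ≠ ⊥)
    (hτ : 0 < τ) (hτρ : τ * ρ < 1) {U : Set E} (hU : U ∈ 𝓝 p) :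
    ∃ a > proxObjective τ f (p + (τ / σ) • (x - p)) p,
      ∀ y ∉ U, a ≤ proxObjective τ f (p + (τ / σ) • (x - p)) y := by
  set z := p + (τ / σ) • (x - p)
  obtain ⟨δ, hδ, hball⟩ := Metric.mem_nhds_iff.1 hU
  have : 0 < 1 - τ * ρ := sub_pos.2 hτρ
  refine ⟨proxObjective τ f z p + (((1 - τ * ρ) / (2 * τ) * δ ^ 2 : ℝ) : EReal), ?_, ?_⟩
  · have hgap : 0 < (1 - τ * ρ) / (2 * τ) * δ ^ 2 := by positivity
    rw [proxObjective]
    lift f p to ℝ using ⟨hp.ne, hpbot⟩ with α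
    rw [gt_iff_lt, ← EReal.coe_add, ← EReal.coe_add]
    exact EReal.coe_lt_coe_iff.2 (lt_add_of_pos_right _ hgap)
  · intro y hy
    have hδy : δ ≤ ‖y - p‖ := le_of_not_gt fun h => hy (hball (mem_ball_iff_norm.2 h))
    refine le_trans ?_ (hf.proxObjective_add_le hmin hp hτ y)
    gcongr

lemma WeaklyConvex.moreauEnvelope_le_sub (hf : WeaklyConvex ρ f)
    (hmin : ∀ y, proxObjective σ f x p ≤ proxObjective σ f x y) (hp : f p < ⊤) (hσ : 0 < σ)
    (hστ : σ ≤ τ) (hτρ : τ * ρ ≤ 1) :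
    moreauEnvelope σ f x ≤ moreauEnvelope τ f (p + (τ / σ) • (x - p)) +
      ((-(‖x - (p + (τ / σ) • (x - p))‖ ^ 2 / (2 * τ)) : ℝ) : EReal) := by
  have hτ : 0 < τ := hσ.trans_le hστ
  rw [hf.moreauEnvelope_eq_proxObjective hmin hp hτ hτρ]
  refine (iInf_le _ p).trans ?_
  have hpz : p - (p + (τ / σ) • (x - p)) = -((τ / σ) • (x - p)) := by abel
  have hxz : x - (p + (τ / σ) • (x - p)) = (1 - τ / σ) • (x - p) := by module
  rw [proxObjective, proxObjective, add_assoc, ← EReal.coe_add, hpz, hxz, norm_neg, norm_smul,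
    norm_smul, mul_pow, mul_pow, Real.norm_eq_abs, Real.norm_eq_abs, sq_abs, sq_abs,
    norm_sub_rev p x]
  gcongr
  have hdiff : (τ / σ) ^ 2 * ‖x - p‖ ^ 2 / (2 * τ) + -((1 - τ / σ) ^ 2 * ‖x - p‖ ^ 2 / (2 * τ)) -
      ‖x - p‖ ^ 2 / (2 * σ) = (τ - σ) * ‖x - p‖ ^ 2 / (2 * σ * τ) := by
    field_simp
    ring
  have : 0 ≤ τ - σ := sub_nonneg.2 hστ
  rw [← sub_nonneg, hdiff]
  positivity

lemma eventually_nhdsGT_zero_mul_lt_one (ρ : ℝ) : ∀ᶠ σ : ℝ in 𝓝[>] 0, σ * ρ < 1 := by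
  have : Tendsto (fun σ : ℝ => σ * ρ) (𝓝[>] 0) (𝓝 0) := by
    simpa using ((continuous_mul_const ρ).tendsto 0).mono_left nhdsWithin_le_nhds
  exact this.eventually_lt_const one_pos

theorem WeaklyConvex.exists_lt_moreauEnvelope_sub [ProperSpace E] (hconv : WeaklyConvex ρ f)
    (hlsc : LowerSemicontinuous f) (hf : ∀ y, ((-(ρ / 2 * ‖y‖ ^ 2) : ℝ) : EReal) ≤ f y)
    (hτ : 0 < τ) (hτρ : τ * ρ ≤ 1) {a : EReal} (ha : a < f x) :
    ∃ z, a < moreauEnvelope τ f z + ((-(‖x - z‖ ^ 2 / (2 * τ)) : ℝ) : EReal) := by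
  by_cases htop : ∀ y, f y = ⊤
  · refine ⟨x, ?_⟩
    have : moreauEnvelope τ f x = ⊤ := by simp [moreauEnvelope, proxObjective, htop]
    rw [this, EReal.top_add_coe]
    exact ha.trans_le le_top
  obtain ⟨x₀, hx₀⟩ := not_forall.1 htop
  have hsmall : ∀ᶠ σ : ℝ in 𝓝[>] 0, 0 < σ ∧ σ ≤ τ ∧ σ * ρ < 1 ∧ a < moreauEnvelope σ f x := by
    filter_upwards [Ioc_mem_nhdsGT hτ, eventually_nhdsGT_zero_mul_lt_one ρ,
      (tendsto_moreauEnvelope_nhdsGT_zero hf (hlsc x)).eventually_const_lt ha] with σ h₁ h₂ h₃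
    exact ⟨h₁.1, h₁.2, h₂, h₃⟩
  obtain ⟨σ, hσ, hστ, hσρ, haσ⟩ := hsmall.exists
  obtain ⟨p, hmin⟩ := exists_forall_proxObjective_le hlsc hf hσ hσρ x
  have hp : f p < ⊤ := proxObjective_lt_top_iff.1
    ((hmin x₀).trans_lt (proxObjective_lt_top_iff.2 (Ne.lt_top hx₀)))
  exact ⟨p + (τ / σ) • (x - p), haσ.trans_le (hconv.moreauEnvelope_le_sub hmin hp hσ hστ hτρ)⟩

end WeaklyConvex

end MoreauEnvelope

section EpiConvergence

variable {ι E : Type*} [NormedAddCommGroup E] [ProperSpace E] {l : Filter ι}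
  {F : ι → E → EReal} {f : E → EReal} {ρ τ : ℝ}

theorem tendsto_moreauEnvelope_of_epi
    (hlower : ∀ x, EpiLiminfGEAt l F f x) (hupper : ∀ x, EpiLimsupLEAt l F f x)
    (hF : ∀ i y, ((-(ρ / 2 * ‖y‖ ^ 2) : ℝ) : EReal) ≤ F i y) (hτ : 0 < τ) (hτρ : τ * ρ < 1)
    (z : E) : Tendsto (fun i => moreauEnvelope τ (F i) z) l (𝓝 (moreauEnvelope τ f z)) :=
  have hq (x : E) := (continuous_norm_sub_sq_div τ z).continuousAt (x := x)
  tendsto_iInf_of_epi (fun x => (hlower x).add_coe (hq x)) (fun x => (hupper x).add_coe (hq x))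
    (tendsto_coe_quadratic_cocompact hτ hτρ z) fun i => coe_quadratic_le_proxObjective (hF i) τ z

variable [InnerProductSpace ℝ E]

theorem WeaklyConvex.epiLiminfGEAt (hconv : WeaklyConvex ρ f) (hlsc : LowerSemicontinuous f)
    (hf : ∀ y, ((-(ρ / 2 * ‖y‖ ^ 2) : ℝ) : EReal) ≤ f y) (hτ : 0 < τ) (hτρ : τ * ρ ≤ 1)
    (henv : ∀ z, Tendsto (fun i => moreauEnvelope τ (F i) z) l (𝓝 (moreauEnvelope τ f z))) (x : E) :
    EpiLiminfGEAt l F f x := by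
  intro a ha
  obtain ⟨z, hz⟩ := hconv.exists_lt_moreauEnvelope_sub hlsc hf hτ hτρ ha
  have henv_lower : EpiLiminfGEAt l (fun i _ => moreauEnvelope τ (F i) z)
      (fun _ => moreauEnvelope τ f z) x :=
    fun b hb => ((henv z).eventually_const_lt hb).prod_inl _
  filter_upwards [henv_lower.add_coe (continuous_norm_sub_sq_div τ z).neg.continuousAt a hz]
    with p hp
  exact hp.trans_le (moreauEnvelope_add_coe_neg_le τ (F p.1) z p.2)

lemma WeaklyConvex.epiLimsupLEAt_of_minimizer (hconv : WeaklyConvex ρ f)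
    (hF : ∀ i y, ((-(ρ / 2 * ‖y‖ ^ 2) : ℝ) : EReal) ≤ F i y) (hτ : 0 < τ) (hτρ : τ * ρ < 1)
    (henv : ∀ z, Tendsto (fun i => moreauEnvelope τ (F i) z) l (𝓝 (moreauEnvelope τ f z)))
    (hlower : ∀ x, EpiLiminfGEAt l F f x) {σ : ℝ} {x p : E}
    (hmin : ∀ y, proxObjective σ f x p ≤ proxObjective σ f x y) (hp : f p < ⊤) (hpbot : f p ≠ ⊥) :
    EpiLimsupLEAt l F f p := by
  have hq (z x : E) := (continuous_norm_sub_sq_div τ z).continuousAt (x := x)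
  set z := p + (τ / σ) • (x - p)
  have hobjective : EpiLimsupLEAt l (fun i => proxObjective τ (F i) z) (proxObjective τ f z) p :=
    epiLimsupLEAt_of_tendsto_iInf (fun x => (hlower x).add_coe (hq z x))
      (tendsto_coe_quadratic_cocompact hτ hτρ z)
      (fun i => coe_quadratic_le_proxObjective (hF i) τ z) (henv z) fun U hU =>
        hconv.exists_lt_forall_notMem_le_proxObjective hmin hp hpbot hτ hτρ hU
  simpa only [proxObjective, Pi.neg_apply, add_coe_add_coe_neg] using
    hobjective.add_coe (hq z p).neg

theorem WeaklyConvex.epiLimsupLEAt (hconv : WeaklyConvex ρ f) (hlsc : LowerSemicontinuous f)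
    (hf : ∀ y, ((-(ρ / 2 * ‖y‖ ^ 2) : ℝ) : EReal) ≤ f y)
    (hF : ∀ i y, ((-(ρ / 2 * ‖y‖ ^ 2) : ℝ) : EReal) ≤ F i y) (hτ : 0 < τ) (hτρ : τ * ρ < 1)
    (henv : ∀ z, Tendsto (fun i => moreauEnvelope τ (F i) z) l (𝓝 (moreauEnvelope τ f z))) (x : E) :
    EpiLimsupLEAt l F f x := by
  intro a ha U hU
  have hx : f x < ⊤ := ha.trans_le le_top
  have hsmall := (eventually_forall_minimizer_mem hf hx (interior_mem_nhds.2 hU)).and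
    ((eventually_nhdsGT_zero_mul_lt_one ρ).and self_mem_nhdsWithin)
  obtain ⟨σ, hnear, hσρ, hσ⟩ := hsmall.exists
  obtain ⟨p, hmin⟩ := exists_forall_proxObjective_le hlsc hf hσ hσρ x
  have hpx : f p ≤ f x :=
    (le_proxObjective hσ f x p).trans ((hmin x).trans_eq (proxObjective_self σ f x))
  have hpbot : f p ≠ ⊥ := ((EReal.bot_lt_coe _).trans_le (hf p)).ne'
  have hlower := hconv.epiLiminfGEAt hlsc hf hτ hτρ.le henv
  exact hconv.epiLimsupLEAt_of_minimizer hF hτ hτρ henv hlower hmin (hpx.trans_lt hx) hpbot a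
    (hpx.trans_lt ha) U (mem_interior_iff_mem_nhds.1 (hnear p hmin))

theorem stmt1_general {F : ℕ → E → EReal} (hlsc : LowerSemicontinuous f)
    (hconv : WeaklyConvex ρ f)
    (hF : ∀ k x, (0 : EReal) ≤ F k x + ((ρ / 2 * ‖x‖ ^ 2 : ℝ) : EReal))
    (hf : ∀ x, (0 : EReal) ≤ f x + ((ρ / 2 * ‖x‖ ^ 2 : ℝ) : EReal)) :
    (∀ x, (∀ u : ℕ → E, Tendsto u atTop (𝓝 x) → f x ≤ liminf (fun k => F k (u k)) atTop) ∧
        ∃ u : ℕ → E, Tendsto u atTop (𝓝 x) ∧ limsup (fun k => F k (u k)) atTop ≤ f x) ↔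
      ∃ τ : ℝ, 0 < τ ∧ τ * ρ < 1 ∧
        ∀ z, Tendsto (fun k => moreauEnvelope τ (F k) z) atTop (𝓝 (moreauEnvelope τ f z)) := by
  have hF' k x := coe_neg_le_of_nonneg_add (hF k x)
  have hf' x := coe_neg_le_of_nonneg_add (hf x)
  simp only [← epiLiminfGEAt_iff_forall_seq, ← epiLimsupLEAt_iff_exists_seq, forall_and]
  constructor
  · rintro ⟨hlower, hupper⟩
    obtain ⟨τ, hτρ, hτ⟩ :=
      ((eventually_nhdsGT_zero_mul_lt_one ρ).and self_mem_nhdsWithin).exists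
    exact ⟨τ, hτ, hτρ, tendsto_moreauEnvelope_of_epi hlower hupper hF' hτ hτρ⟩
  · rintro ⟨τ, hτ, hτρ, henv⟩
    exact ⟨hconv.epiLiminfGEAt hlsc hf' hτ hτρ.le henv,
      hconv.epiLimsupLEAt hlsc hf' hF' hτ hτρ henv⟩

end EpiConvergence

theorem stmt1 {n : ℕ} (ρ : ℝ) (hρ : 0 ≤ ρ)
    (fk : ℕ → EuclideanSpace ℝ (Fin n) → EReal) (f : EuclideanSpace ℝ (Fin n) → EReal)
    (hfkprop : ∀ k, ∃ x, fk k x ≠ ⊤) (hfprop : ∃ x, f x ≠ ⊤)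
    (hfkbot : ∀ k x, fk k x ≠ ⊥) (hfbot : ∀ x, f x ≠ ⊥)
    (hfklsc : ∀ k, LowerSemicontinuous (fk k)) (hflsc : LowerSemicontinuous f)
    (hfkconv : ∀ k, ∀ x y : EuclideanSpace ℝ (Fin n), ∀ a b : ℝ, 0 ≤ a → 0 ≤ b → a + b = 1 →
      fk k (a • x + b • y) + ((ρ / 2 * ‖a • x + b • y‖ ^ 2 : ℝ) : EReal) ≤
        (a : EReal) * (fk k x + ((ρ / 2 * ‖x‖ ^ 2 : ℝ) : EReal)) +
          (b : EReal) * (fk k y + ((ρ / 2 * ‖y‖ ^ 2 : ℝ) : EReal)))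
    (hfconv : ∀ x y : EuclideanSpace ℝ (Fin n), ∀ a b : ℝ, 0 ≤ a → 0 ≤ b → a + b = 1 →
      f (a • x + b • y) + ((ρ / 2 * ‖a • x + b • y‖ ^ 2 : ℝ) : EReal) ≤
        (a : EReal) * (f x + ((ρ / 2 * ‖x‖ ^ 2 : ℝ) : EReal)) +
          (b : EReal) * (f y + ((ρ / 2 * ‖y‖ ^ 2 : ℝ) : EReal)))
    (hfknn : ∀ k x, (0 : EReal) ≤ fk k x + ((ρ / 2 * ‖x‖ ^ 2 : ℝ) : EReal))
    (hfnn : ∀ x, (0 : EReal) ≤ f x + ((ρ / 2 * ‖x‖ ^ 2 : ℝ) : EReal)) :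
    ((∀ x : EuclideanSpace ℝ (Fin n),
        (∀ u : ℕ → EuclideanSpace ℝ (Fin n), Tendsto u atTop (𝓝 x) →
          f x ≤ liminf (fun k => fk k (u k)) atTop) ∧
        (∃ u : ℕ → EuclideanSpace ℝ (Fin n), Tendsto u atTop (𝓝 x) ∧
          limsup (fun k => fk k (u k)) atTop ≤ f x)) ↔
      (∃ τ : ℝ, 0 < τ ∧ τ * ρ < 1 ∧ ∀ z, Tendsto (fun k => moreauEnv τ (fk k) z) atTop
          (𝓝 (moreauEnv τ f z)))) :=
  stmt1_general hflsc hfconv hfknn hfnn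
end

section
/- Let Q ⊆ ℝ^m be a nonempty closed convex set, let U be an open neighborhood of x̄ ∈ ℝⁿ, and let F : U → ℝ^m be twice continuously differentiable with F(x̄) = 0. Assume Robinson's constraint qualification 0 ∈ int{DF(x̄)h − y : h ∈ ℝⁿ, y ∈ ℝ^m with σ_Q(y) < +∞}. Let v̄ ∈ ℝⁿ be such that Λ := {λ ∈ Q : DF(x̄)ᵀλ = v̄} is nonempty, and set φ(x) = σ_Q(F(x)) for x ∈ U. Then for every h ∈ ℝⁿ: if σ_Q(DF(x̄)h) = ⟨v̄, h⟩ then d²φ(x̄|v̄)(h) = sup_{λ ∈ Λ} ⟨λ, D²F(x̄)[h,h]⟩, and otherwise d²φ(x̄|v̄)(h) = +∞. -/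
open Filter Topology Set
open scoped InnerProductSpace

noncomputable section

/-- Support function of `Q ⊆ ℝ^m`, with values in the extended reals. -/
def supportFn {m : ℕ} (Q : Set (EuclideanSpace ℝ (Fin m))) (x : EuclideanSpace ℝ (Fin m)) :
    EReal :=
  ⨆ z ∈ Q, ((⟪z, x⟫_ℝ : ℝ) : EReal)

/-- Second-order difference quotient `Δ²_t f(x|v)(h)`. -/
def secondDQ {n : ℕ} (f : EuclideanSpace ℝ (Fin n) → EReal)
    (x v : EuclideanSpace ℝ (Fin n)) (t : ℝ) (h : EuclideanSpace ℝ (Fin n)) : EReal :=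
  ((2 / t ^ 2 : ℝ) : EReal) * (f (x + t • h) - f x - ((t * ⟪v, h⟫_ℝ : ℝ) : EReal))

/-- Second subderivative `d²f(x|v)(h) = liminf_{t↓0, h̃→h} Δ²_t f(x|v)(h̃)`. -/
def secondSubderivative {n : ℕ} (f : EuclideanSpace ℝ (Fin n) → EReal)
    (x v h : EuclideanSpace ℝ (Fin n)) : EReal :=
  liminf (fun p : ℝ × EuclideanSpace ℝ (Fin n) => secondDQ f x v p.1 p.2)
    ((𝓝[>] (0 : ℝ)) ×ˢ 𝓝 h)

/-!
Let `A = DF(x̄)` and `a = D²F(x̄)[h,h]`. Testing `σ_Q` with a fixed `z ∈ Q` bounds the difference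
quotient from below by `⟪z, a⟫ + 2 (⟪z, A h⟫ - ⟪v̄, h⟫) / t + o(1)`. For a multiplier `z` the middle
term vanishes; if `⟪z, A h⟫ > ⟪v̄, h⟫` it blows up.

For the upper bound let `β` exceed `⟪l, a⟫` for all multipliers `l`. The dual value
`u ↦ inf_w (σ_Q (A w + u) - ⟪v̄, w⟫)` is finite and sublinear under Robinson's condition, and by
Hahn–Banach it equals `⟪l, a⟫` at `u = a` for some linear minorant `l`, which is a multiplier. So
`σ_Q (A w + a) - ⟪v̄, w⟫ < β` for some `w`. Along the parabola `x̄ + t h + (t² / 2) w` the value of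
`F` differs from `t A h + (t² / 2) (A w + a)` by `o(t²)`; Robinson's condition allows us to move the
parabola by `o(t²)` so that the difference becomes a combination, with nonnegative coefficients of
size `o(t²)`, of vectors on which `σ_Q` is finite.
-/

theorem eventually_fst_pos_nhdsGT_prod {X : Type*} (l : Filter X) :
    ∀ᶠ p : ℝ × X in 𝓝[>] 0 ×ˢ l, 0 < p.1 :=
  tendsto_fst.eventually self_mem_nhdsWithin

section SecondOrderExpansion

variable {V W : Type*} [NormedAddCommGroup V] [NormedSpace ℝ V] [NormedAddCommGroup W]
  [NormedSpace ℝ W] {F : V → W} {F' : V → V →L[ℝ] W} {B : V →L[ℝ] V →L[ℝ] W} {x : V}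

/-- The second-order difference quotient of a vector-valued map `F` at `x`, relative to a candidate
derivative `A`, at step `t` in direction `h`. -/
def secondOrderQuotient (F : V → W) (A : V →L[ℝ] W) (x : V) (t : ℝ) (h : V) : W :=
  (2 / t ^ 2) • (F (x + t • h) - F x - t • A h)

theorem apply_parabola_sub {A : V →L[ℝ] W} {h w : V} {a : W} {t : ℝ} (ht : t ≠ 0) :
    F (x + t • (h + (t / 2) • w)) - (F x + t • A h + (t ^ 2 / 2) • (A w + a)) =
      (t ^ 2 / 2) • (secondOrderQuotient F A x t (h + (t / 2) • w) - a) := by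
  simp only [secondOrderQuotient, map_add, map_smul]
  match_scalars <;> field_simp

theorem isLittleO_sub_sq_of_hasFDerivAt_isLittleO (hF : ∀ᶠ y in 𝓝 x, HasFDerivAt F (F' y) y)
    (hF' : F' =o[𝓝 x] fun y => y - x) :
    (fun y => F y - F x) =o[𝓝 x] fun y => ‖y - x‖ ^ 2 := by
  refine Asymptotics.isLittleO_iff.2 fun ε hε => ?_
  obtain ⟨δ, hδ, hball⟩ := Metric.eventually_nhds_iff_ball.1 (hF.and (hF'.def hε))
  refine Metric.eventually_nhds_iff_ball.2 ⟨δ, hδ, fun y hy => ?_⟩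
  have hsub : Metric.closedBall x ‖y - x‖ ⊆ Metric.ball x δ :=
    Metric.closedBall_subset_ball (by rwa [← dist_eq_norm])
  have hbound : ∀ z ∈ Metric.closedBall x ‖y - x‖, ‖F' z‖ ≤ ε * ‖y - x‖ := fun z hz =>
    (hball z (hsub hz)).2.trans (by gcongr; exact mem_closedBall_iff_norm.1 hz)
  calc ‖F y - F x‖ ≤ ε * ‖y - x‖ * ‖y - x‖ :=
        Convex.norm_image_sub_le_of_norm_hasFDerivWithin_le
          (fun z hz => (hball z (hsub hz)).1.hasFDerivWithinAt) hbound
          (convex_closedBall x ‖y - x‖) (Metric.mem_closedBall_self (norm_nonneg _))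
          (mem_closedBall_iff_norm.2 le_rfl)
    _ = ε * ‖‖y - x‖ ^ 2‖ := by rw [norm_pow, norm_norm]; ring

theorem isLittleO_taylor_two (hF : ∀ᶠ y in 𝓝 x, HasFDerivAt F (F' y) y)
    (hF' : HasFDerivAt F' B x) :
    (fun y => F y - F x - F' x (y - x) - (1 / 2 : ℝ) • B (y - x) (y - x)) =o[𝓝 x]
      fun y => ‖y - x‖ ^ 2 := by
  have hsymm := second_derivative_symmetric_of_eventually hF hF'
  have hrem : ∀ᶠ y in 𝓝 x,
      HasFDerivAt (fun y => F y - F x - F' x (y - x) - (1 / 2 : ℝ) • B (y - x) (y - x))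
        (F' y - F' x - B (y - x)) y := by
    filter_upwards [hF] with y hy
    have hid : HasFDerivAt (fun y : V => y - x) (.id ℝ V) y := (hasFDerivAt_id y).sub_const x
    have hlin : HasFDerivAt (fun y => F' x (y - x)) (F' x) y := (F' x).hasFDerivAt.comp y hid
    have hquad : HasFDerivAt (fun y => B (y - x) (y - x)) (B (y - x) + B.flip (y - x)) y := by
      simpa using (B.hasFDerivAt.comp y hid).clm_apply hid
    refine (((hy.sub_const (F x)).sub hlin).sub (hquad.const_smul (1 / 2 : ℝ))).congr_fderiv ?_
    ext w
    simp only [sub_apply, smul_apply, add_apply, ContinuousLinearMap.flip_apply, hsymm w]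
    module
  simpa using isLittleO_sub_sq_of_hasFDerivAt_isLittleO hrem hF'.isLittleO

theorem tendsto_secondOrderQuotient (hF : ∀ᶠ y in 𝓝 x, HasFDerivAt F (F' y) y)
    (hF' : HasFDerivAt F' B x) (h : V) :
    Tendsto (fun p : ℝ × V => secondOrderQuotient F (F' x) x p.1 p.2) (𝓝[>] 0 ×ˢ 𝓝 h)
      (𝓝 (B h h)) := by
  have hray : Tendsto (fun p : ℝ × V => x + p.1 • p.2) (𝓝[>] 0 ×ˢ 𝓝 h) (𝓝 x) := by
    have hfst : Tendsto Prod.fst (𝓝[>] (0 : ℝ) ×ˢ 𝓝 h) (𝓝 0) :=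
      tendsto_fst.mono_right nhdsWithin_le_nhds
    simpa using (hfst.smul tendsto_snd).const_add x
  have hsq : (fun p : ℝ × V => ‖x + p.1 • p.2 - x‖ ^ 2) =O[𝓝[>] 0 ×ˢ 𝓝 h] fun p => p.1 ^ 2 := by
    have hsnd : (fun p : ℝ × V => p.2) =O[𝓝[>] 0 ×ˢ 𝓝 h] fun _ => (1 : ℝ) :=
      tendsto_snd.isBigO_one ℝ
    simpa using (((Asymptotics.isBigO_refl Prod.fst _).smul hsnd).norm_left.pow 2)
  have hrem := ((isLittleO_taylor_two hF hF').comp_tendsto hray).trans_isBigO hsq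
  have hquad : Tendsto (fun p : ℝ × V => B p.2 p.2) (𝓝[>] 0 ×ˢ 𝓝 h) (𝓝 (B h h)) :=
    ((by fun_prop : Continuous fun y : V => B y y).tendsto h).comp tendsto_snd
  have hlim := (hrem.tendsto_inv_smul_nhds_zero.const_smul (2 : ℝ)).add hquad
  rw [smul_zero, zero_add] at hlim
  refine hlim.congr' ?_
  filter_upwards [eventually_fst_pos_nhdsGT_prod (𝓝 h)] with p hp
  simp only [secondOrderQuotient, Function.comp_apply, add_sub_cancel_left, map_smul, smul_apply]
  match_scalars <;> field_simp
  ring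

end SecondOrderExpansion

section MetricRegularity

theorem continuousAt_norm_apply_fst_sub_snd {E G : Type*} [TopologicalSpace E]
    [SeminormedAddCommGroup G] {f : E → G} {x : E} (hf : ContinuousAt f x) :
    ContinuousAt (fun p : E × G => ‖f p.1 - p.2‖) (x, f x) :=
  ((hf.comp (f := Prod.fst) (x := (x, f x)) continuousAt_fst).sub continuousAt_snd).norm

variable {E G : Type*} [NormedAddCommGroup E] [NormedSpace ℝ E] [CompleteSpace E]
  [NormedAddCommGroup G] [NormedSpace ℝ G] [CompleteSpace G] {f : E → G} {f' : E →L[ℝ] G} {x : E}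

theorem exists_eventually_exists_eq_norm_sub_le (hf : HasStrictFDerivAt f f' x)
    (hsurj : f'.range = ⊤) :
    ∃ C > 0, ∀ᶠ p in 𝓝 (x, f x), ∃ x', f x' = p.2 ∧ ‖x' - p.1‖ ≤ C * ‖f p.1 - p.2‖ := by
  let R := f'.nonlinearRightInverseOfSurjective hsurj
  have hR : 0 < R.nnnorm := f'.nonlinearRightInverseOfSurjective_nnnorm_pos hsurj
  obtain ⟨s, hs, happrox⟩ :=
    hf.approximates_deriv_on_nhds (c := R.nnnorm⁻¹ / 2) (by right; positivity)
  obtain ⟨δ, hδ, hδs⟩ := Metric.mem_nhds_iff.1 hs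
  let C : ℝ := 2 * R.nnnorm
  have hC : ((R.nnnorm : ℝ)⁻¹ - (R.nnnorm⁻¹ / 2 : NNReal)) * C = 1 := by
    push_cast; simp only [C]; field_simp; ring
  have hsmall : ∀ᶠ p in 𝓝 (x, f x), C * ‖f p.1 - p.2‖ + dist p.1 x < δ := by
    have hcont : ContinuousAt (fun p : E × G => C * ‖f p.1 - p.2‖ + dist p.1 x) (x, f x) := by
      have := continuousAt_norm_apply_fst_sub_snd hf.continuousAt
      fun_prop
    exact hcont.eventually_lt continuousAt_const (by simpa using hδ)
  refine ⟨C, by positivity, hsmall.mono fun p hp => ?_⟩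
  have hball : Metric.closedBall p.1 (C * ‖f p.1 - p.2‖) ⊆ s :=
    (Metric.closedBall_subset_ball' hp).trans hδs
  obtain ⟨x', hx', heq⟩ :=
    happrox.surjOn_closedBall_of_nonlinearRightInverse R (by positivity) hball (a := p.2)
      (by rw [← mul_assoc, hC, one_mul, mem_closedBall_iff_norm'])
  exact ⟨x', heq, mem_closedBall_iff_norm.1 hx'⟩

theorem exists_eventually_exists_eq_norm_sub_smul_le (hf : HasStrictFDerivAt f f' x)
    (hsurj : f'.range = ⊤) {k : E} (hk : f' k = 0) :
    ∃ C : ℝ, ∀ᶠ p in 𝓝 (x, f x), ∃ x', f x' = p.2 ∧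
      ‖x' - (p.1 + (C * ‖f p.1 - p.2‖) • k)‖ ≤ C * ‖f p.1 - p.2‖ := by
  obtain ⟨C, hC, hreg⟩ := exists_eventually_exists_eq_norm_sub_le hf hsurj
  let shift : E × G → E := fun p => p.1 + (2 * C * ‖f p.1 - p.2‖) • k
  have hshift : Tendsto shift (𝓝 (x, f x)) (𝓝 x) := by
    have := continuousAt_norm_apply_fst_sub_snd hf.continuousAt
    have hcont : ContinuousAt shift (x, f x) := by simp only [shift]; fun_prop
    simpa [ContinuousAt, shift] using hcont
  have hstrict : ∀ᶠ p in 𝓝 (x, f x), ‖f (shift p) - f p.1 - f' (shift p - p.1)‖ ≤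
      (2 * C * (‖k‖ + 1))⁻¹ * ‖shift p - p.1‖ :=
    (hshift.prodMk_nhds continuousAt_fst).eventually (hf.isLittleO.def (by positivity))
  refine ⟨2 * C, ?_⟩
  filter_upwards [(hshift.prodMk_nhds continuousAt_snd).eventually hreg, hstrict]
    with p ⟨x', heq, hx'⟩ hp
  refine ⟨x', heq, hx'.trans ?_⟩
  have hmove : ‖f (shift p) - f p.1‖ ≤ ‖f p.1 - p.2‖ := by
    simp only [shift, add_sub_cancel_left, map_smul, hk, smul_zero, sub_zero, norm_smul] at hp
    refine hp.trans ?_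
    rw [Real.norm_of_nonneg (by positivity), inv_mul_le_iff₀ (by positivity)]
    nlinarith [mul_nonneg hC.le (norm_nonneg (f p.1 - p.2))]
  calc C * ‖f (shift p) - p.2‖ ≤ C * (‖f (shift p) - f p.1‖ + ‖f p.1 - p.2‖) := by
        gcongr; exact norm_sub_le_norm_sub_add_norm_sub _ _ _
    _ ≤ 2 * C * ‖f p.1 - p.2‖ := by nlinarith

end MetricRegularity

section Robinson

variable {W : Type*} [NormedAddCommGroup W] [InnerProductSpace ℝ W] {Q : Set W} {y : W} {c : ℝ}

/-- The barrier cone of `Q`: the directions `y` in which `Q` is bounded above, that is, the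
effective domain of the support function of `Q`. -/
def barrierCone (Q : Set W) : Set W :=
  {y | ∃ M : ℝ, ∀ z ∈ Q, ⟪z, y⟫_ℝ ≤ M}

theorem smul_mem_barrierCone (hc : 0 ≤ c) (hy : y ∈ barrierCone Q) : c • y ∈ barrierCone Q := by
  obtain ⟨M, hM⟩ := hy
  refine ⟨c * M, fun z hz => ?_⟩
  rw [inner_smul_right]
  exact mul_le_mul_of_nonneg_left (hM z hz) hc

/-- Robinson's condition `range A - barrierCone Q = W`. For linear `A` the left-hand side is a cone,
so this is the same as requiring `0` to be an interior point of it. -/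
def RobinsonCondition {V : Type*} (A : V → W) (Q : Set W) : Prop :=
  ∀ u, ∃ h, ∃ y ∈ barrierCone Q, A h - y = u

theorem robinsonCondition_of_zero_mem_interior {V : Type*} [AddCommGroup V] [Module ℝ V]
    {A : V →ₗ[ℝ] W}
    (hA : (0 : W) ∈ interior {u | ∃ h, ∃ y ∈ barrierCone Q, A h - y = u}) :
    RobinsonCondition A Q := by
  intro u
  have hray : Tendsto (fun c : ℝ => c • u) (𝓝[>] 0) (𝓝 0) := by
    simpa using (tendsto_nhdsWithin_of_tendsto_nhds (s := Ioi 0) tendsto_id).smul_const u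
      (f := fun c : ℝ => c) (c := 0)
  obtain ⟨c, ⟨h, y, hy, hu⟩, hc : 0 < c⟩ :=
    ((hray.eventually (mem_interior_iff_mem_nhds.1 hA)).and self_mem_nhdsWithin).exists
  refine ⟨c⁻¹ • h, c⁻¹ • y, smul_mem_barrierCone (by positivity) hy, ?_⟩
  rw [map_smul, ← smul_sub, hu, inv_smul_smul₀ hc.ne']

theorem RobinsonCondition.exists_finite_family {V : Type*} [AddCommGroup V] [Module ℝ V]
    [FiniteDimensional ℝ W] {A : V →ₗ[ℝ] W} (hA : RobinsonCondition A Q) :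
    ∃ (ι : Type) (_ : Fintype ι) (y : ι → W), (∀ i, y i ∈ barrierCone Q) ∧
      (∃ k, A k = ∑ i, y i) ∧ ∀ u, ∃ (h : V) (c : ι → ℝ), A h - ∑ i, c i • y i = u := by
  let b := Module.finBasis ℝ W
  choose g y hy hgy using fun i => hA (b i)
  -- Adjoining `y₀` puts the sum of the whole family into the range of `A`.
  obtain ⟨k, y₀, hy₀, hk⟩ := hA (∑ i, y i)
  refine ⟨Option (Fin (Module.finrank ℝ W)), inferInstance, fun i => i.elim y₀ y,
    Option.rec hy₀ hy, ⟨k, ?_⟩, fun u => ⟨∑ i, b.repr u i • g i, fun i => i.elim 0 (b.repr u), ?_⟩⟩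
  · simp [Fintype.sum_option, ← hk]
  · conv_rhs => rw [← b.sum_repr u]
    simp [Fintype.sum_option, ← hgy, smul_sub]

theorem inner_sum_smul_le_of_mem_Icc {ι : Type*} [Fintype ι] {y : ι → W} {M c : ι → ℝ} {L : ℝ}
    {z : W} (hM : ∀ i, ⟪z, y i⟫_ℝ ≤ M i) (hc : ∀ i, c i ∈ Icc 0 L) :
    ⟪z, ∑ i, c i • y i⟫_ℝ ≤ L * ∑ i, |M i| := by
  rw [inner_sum, Finset.mul_sum]
  refine Finset.sum_le_sum fun i _ => ?_
  calc ⟪z, c i • y i⟫_ℝ = c i * ⟪z, y i⟫_ℝ := inner_smul_right _ _ _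
    _ ≤ c i * |M i| := mul_le_mul_of_nonneg_left ((hM i).trans (le_abs_self _)) (hc i).1
    _ ≤ L * |M i| := mul_le_mul_of_nonneg_right (hc i).2 (abs_nonneg _)

theorem norm_sub_le_and_mem_Icc_of_norm_prod_sub_le {V ι : Type*} [NormedAddCommGroup V]
    [NormedSpace ℝ V] [Fintype ι] {x x' k : V} {c : ι → ℝ} {L : ℝ}
    (hL : ‖(x', c) - ((x, 0) + L • (k, 1))‖ ≤ L) :
    ‖x' - x‖ ≤ L * (2 + ‖k‖) ∧ ∀ i, c i ∈ Icc 0 (L * (2 + ‖k‖)) := by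
  have hL₀ : 0 ≤ L := (norm_nonneg _).trans hL
  refine ⟨?_, fun i => ?_⟩
  · have hx' : ‖x' - (x + L • k)‖ ≤ L := (norm_fst_le _).trans hL
    calc ‖x' - x‖ = ‖x' - (x + L • k) + L • k‖ := by congr 1; abel
      _ ≤ L + L * ‖k‖ := norm_add_le_of_le hx' (by rw [norm_smul, Real.norm_of_nonneg hL₀])
      _ ≤ L * (2 + ‖k‖) := by linarith
  · have hi : |c i - L| ≤ L := by
      simpa using (norm_le_pi_norm _ i).trans ((norm_snd_le _).trans hL)
    constructor <;> nlinarith [abs_le.1 hi, norm_nonneg k]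

variable {V : Type*} [NormedAddCommGroup V] [NormedSpace ℝ V] [CompleteSpace V]
  [FiniteDimensional ℝ W] {F : V → W} {A : V →L[ℝ] W} {x h : V} {a : W}

theorem RobinsonCondition.exists_eventually_exists_sub_eq_sum (hA : RobinsonCondition A Q)
    (hF : HasStrictFDerivAt F A x) :
    ∃ (ι : Type) (_ : Fintype ι) (y : ι → W), (∀ i, y i ∈ barrierCone Q) ∧
      ∃ C : ℝ, ∀ᶠ p in 𝓝 (x, F x), ∃ (x' : V) (c : ι → ℝ), F x' - p.2 = ∑ i, c i • y i ∧
        ‖x' - p.1‖ ≤ C * ‖F p.1 - p.2‖ ∧ ∀ i, c i ∈ Icc 0 (C * ‖F p.1 - p.2‖) := by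
  obtain ⟨ι, _, y, hy, ⟨k, hk⟩, hspan⟩ :=
    RobinsonCondition.exists_finite_family (A := A.toLinearMap) hA
  let Y : (ι → ℝ) →L[ℝ] W := (Fintype.linearCombination ℝ y).toContinuousLinearMap
  have hY : ∀ c, Y c = ∑ i, c i • y i := Fintype.linearCombination_apply ℝ y
  have hG : HasStrictFDerivAt (fun q : V × (ι → ℝ) => F q.1 - Y q.2)
      (A ∘L .fst ℝ V (ι → ℝ) - Y ∘L .snd ℝ V (ι → ℝ)) (x, 0) :=
    (HasStrictFDerivAt.comp (x, 0) (g := F) hF hasStrictFDerivAt_fst).sub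
      (Y.hasStrictFDerivAt.comp (x, 0) hasStrictFDerivAt_snd)
  have hsurj : (A ∘L .fst ℝ V (ι → ℝ) - Y ∘L .snd ℝ V (ι → ℝ)).range = ⊤ := by
    refine LinearMap.range_eq_top.2 fun u => ?_
    obtain ⟨h, c, hu⟩ := hspan u
    exact ⟨(h, c), by simpa [hY] using hu⟩
  -- Since `(k, 1)` lies in the kernel, solutions can be sought near `(x, 0) + L • (k, 1)`, at a
  -- distance at most `L`: this is what keeps the coefficients `c i` nonnegative.
  obtain ⟨C, hreg⟩ := exists_eventually_exists_eq_norm_sub_smul_le hG hsurj (k := (k, 1))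
    (by simpa [hY, sub_eq_zero] using hk)
  have hincl : Tendsto (fun p : V × W => ((p.1, (0 : ι → ℝ)), p.2)) (𝓝 (x, F x))
      (𝓝 ((x, 0), F x - Y 0)) := by
    rw [map_zero, sub_zero]
    exact Continuous.tendsto (by fun_prop) (x, F x)
  refine ⟨ι, inferInstance, y, hy, C * (2 + ‖k‖), (hincl.eventually hreg).mono ?_⟩
  rintro ⟨x₁, y₁⟩ ⟨⟨x', c⟩, heq, hnear⟩
  simp only [map_zero, sub_zero] at heq hnear ⊢
  rw [mul_right_comm]
  obtain ⟨hx', hc⟩ := norm_sub_le_and_mem_Icc_of_norm_prod_sub_le hnear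
  exact ⟨x', c, by rw [← hY, ← heq, sub_sub_cancel], hx', hc⟩

theorem RobinsonCondition.exists_eventually_exists_inner_sub_le (hA : RobinsonCondition A Q)
    (hF : HasStrictFDerivAt F A x) :
    ∃ C : ℝ, ∀ᶠ p in 𝓝 (x, F x), ∃ x', ‖x' - p.1‖ ≤ C * ‖F p.1 - p.2‖ ∧
      ∀ z ∈ Q, ⟪z, F x' - p.2⟫_ℝ ≤ C * ‖F p.1 - p.2‖ := by
  obtain ⟨ι, _, y, hy, C, hreg⟩ := hA.exists_eventually_exists_sub_eq_sum hF
  choose M hM using hy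
  refine ⟨max C (C * ∑ i, |M i|), hreg.mono ?_⟩
  rintro p ⟨x', c, hsub, hx', hc⟩
  refine ⟨x', hx'.trans (by gcongr; exact le_max_left _ _), fun z hz => ?_⟩
  calc ⟪z, F x' - p.2⟫_ℝ = ⟪z, ∑ i, c i • y i⟫_ℝ := by rw [hsub]
    _ ≤ C * ‖F p.1 - p.2‖ * ∑ i, |M i| := inner_sum_smul_le_of_mem_Icc (fun i => hM i z hz) hc
    _ = C * (∑ i, |M i|) * ‖F p.1 - p.2‖ := by ring
    _ ≤ max C (C * ∑ i, |M i|) * ‖F p.1 - p.2‖ := by gcongr; exact le_max_right _ _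

theorem RobinsonCondition.exists_eventually_exists_near_parabola (hA : RobinsonCondition A Q)
    (hF : HasStrictFDerivAt F A x)
    (ha : Tendsto (fun p : ℝ × V => secondOrderQuotient F A x p.1 p.2) (𝓝[>] 0 ×ˢ 𝓝 h) (𝓝 a))
    (w : V) :
    ∃ δ : ℝ → ℝ, Tendsto δ (𝓝[>] 0) (𝓝 0) ∧ ∀ᶠ t in 𝓝[>] (0 : ℝ), ∃ k : V,
      ‖k - (h + (t / 2) • w)‖ ≤ t / 2 * δ t ∧ ∀ z ∈ Q,
        ⟪z, F (x + t • k) - F x⟫_ℝ ≤ t * ⟪z, A h⟫_ℝ + t ^ 2 / 2 * (⟪z, A w + a⟫_ℝ + δ t) := by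
  obtain ⟨C, hstab⟩ := hA.exists_eventually_exists_inner_sub_le hF
  let γ : ℝ → V := fun t => h + (t / 2) • w
  let target : ℝ → W := fun t => F x + t • A h + (t ^ 2 / 2) • (A w + a)
  have hγ : Tendsto γ (𝓝[>] 0) (𝓝 h) :=
    tendsto_nhdsWithin_of_tendsto_nhds
      (by simpa [γ] using (by fun_prop : Continuous γ).tendsto 0)
  have herr : Tendsto (fun t => ‖secondOrderQuotient F A x t (γ t) - a‖) (𝓝[>] 0) (𝓝 0) := by
    simpa using ((ha.comp (tendsto_id.prodMk hγ)).sub_const a).norm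
  have hpair : Tendsto (fun t => (x + t • γ t, target t)) (𝓝[>] 0) (𝓝 (x, F x)) :=
    tendsto_nhdsWithin_of_tendsto_nhds (by
      simpa [target] using
        (by fun_prop : Continuous fun t : ℝ => (x + t • γ t, target t)).tendsto 0)
  refine ⟨fun t => C * ‖secondOrderQuotient F A x t (γ t) - a‖, by simpa using herr.const_mul C, ?_⟩
  filter_upwards [hpair.eventually hstab, self_mem_nhdsWithin] with t ⟨x', hx', hQ⟩ (ht : 0 < t)
  have hres : ‖F (x + t • γ t) - target t‖ =
      t ^ 2 / 2 * ‖secondOrderQuotient F A x t (γ t) - a‖ := by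
    rw [apply_parabola_sub ht.ne', norm_smul, Real.norm_of_nonneg (by positivity)]
  rw [hres] at hx' hQ
  refine ⟨t⁻¹ • (x' - x), ?_, fun z hz => ?_⟩
  · have hk : t⁻¹ • (x' - x) - γ t = t⁻¹ • (x' - (x + t • γ t)) := by
      match_scalars <;> field_simp
    rw [hk, norm_smul, Real.norm_of_nonneg (by positivity), inv_mul_le_iff₀ ht]
    exact hx'.trans_eq (by ring)
  · have hz' := hQ z hz
    rw [smul_inv_smul₀ ht.ne', add_sub_cancel]
    simp only [target, inner_sub_right, inner_add_right, inner_smul_right] at hz' ⊢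
    linarith

theorem RobinsonCondition.exists_tendsto_eventually_inner_le (hA : RobinsonCondition A Q)
    (hF : HasStrictFDerivAt F A x)
    (ha : Tendsto (fun p : ℝ × V => secondOrderQuotient F A x p.1 p.2) (𝓝[>] 0 ×ˢ 𝓝 h) (𝓝 a))
    {f : V →L[ℝ] ℝ} (hh : ∀ z ∈ Q, ⟪z, A h⟫_ℝ ≤ f h) {w : V} {r β : ℝ}
    (hw : ∀ z ∈ Q, ⟪z, A w + a⟫_ℝ ≤ r + f w) (hrβ : r < β) :
    ∃ η : ℝ → V, Tendsto η (𝓝[>] 0) (𝓝 h) ∧ ∀ᶠ t in 𝓝[>] (0 : ℝ), ∀ z ∈ Q,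
      ⟪z, F (x + t • η t) - F x⟫_ℝ ≤ t * f (η t) + t ^ 2 / 2 * β := by
  obtain ⟨δ, hδ, hev⟩ := hA.exists_eventually_exists_near_parabola hF ha w
  obtain ⟨η, hη⟩ := hev.choice
  have hid : Tendsto (fun t : ℝ => t) (𝓝[>] 0) (𝓝 0) :=
    tendsto_nhdsWithin_of_tendsto_nhds tendsto_id
  refine ⟨η, ?_, ?_⟩
  · have hdiff : Tendsto (fun t => η t - (h + (t / 2) • w)) (𝓝[>] 0) (𝓝 0) :=
      squeeze_zero_norm' (hη.mono fun t ht => ht.1) (by simpa using (hid.div_const 2).mul hδ)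
    simpa using hdiff.add (((hid.div_const 2).smul_const w).const_add h)
  · have hslack : ∀ᶠ t in 𝓝[>] (0 : ℝ), (1 + ‖f‖) * δ t < β - r :=
      (hδ.const_mul _).eventually_lt_const (by simpa using hrβ)
    filter_upwards [hη, hslack, self_mem_nhdsWithin] with t ⟨hnear, hQ⟩ hslack (ht : 0 < t) z hz
    have hf : f h + t / 2 * f w ≤ f (η t) + ‖f‖ * (t / 2 * δ t) := by
      have hle := (neg_le_abs _).trans (f.le_of_opNorm_le_of_le le_rfl hnear)
      simp only [map_sub, map_add, map_smul, smul_eq_mul] at hle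
      linarith
    calc ⟪z, F (x + t • η t) - F x⟫_ℝ
        ≤ t * ⟪z, A h⟫_ℝ + t ^ 2 / 2 * (⟪z, A w + a⟫_ℝ + δ t) := hQ z hz
      _ ≤ t * f h + t ^ 2 / 2 * (r + f w + δ t) := by gcongr; exacts [hh z hz, hw z hz]
      _ = t * (f h + t / 2 * f w) + t ^ 2 / 2 * (r + δ t) := by ring
      _ ≤ t * (f (η t) + ‖f‖ * (t / 2 * δ t)) + t ^ 2 / 2 * (r + δ t) := by gcongr
      _ = t * f (η t) + t ^ 2 / 2 * (r + (1 + ‖f‖) * δ t) := by ring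
      _ ≤ t * f (η t) + t ^ 2 / 2 * β := by gcongr; linarith

end Robinson

theorem exists_linearMap_le_sublinear_eq {E : Type*} [AddCommGroup E] [Module ℝ E] {N : E → ℝ}
    (hsmul : ∀ c : ℝ, 0 < c → ∀ u, N (c • u) = c * N u)
    (hadd : ∀ u v, N (u + v) ≤ N u + N v) (a : E) :
    ∃ g : E →ₗ[ℝ] ℝ, g a = N a ∧ ∀ u, g u ≤ N u := by
  have hzero : N 0 = 0 := by
    have := hsmul 2 two_pos 0
    rw [smul_zero] at this
    linarith
  have hspan : ∀ c : ℝ, c • a = 0 → c • N a = 0 := fun c hc => by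
    rcases smul_eq_zero.1 hc with rfl | rfl <;> simp [hzero]
  obtain ⟨g, hg, hgN⟩ := exists_extension_of_le_sublinear
    (LinearPMap.mkSpanSingleton' a (N a) hspan) N hsmul hadd (by
      rintro ⟨_, hx⟩
      obtain ⟨c, rfl⟩ := Submodule.mem_span_singleton.1 hx
      rw [LinearPMap.mkSpanSingleton'_apply, RingHom.id_apply, smul_eq_mul]
      rcases lt_trichotomy c 0 with hc | rfl | hc
      · have := hadd (c • a) (-c • a)
        rw [hsmul (-c) (neg_pos.2 hc), ← add_smul, add_neg_cancel, zero_smul, hzero] at this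
        linarith
      · simp [hzero]
      · rw [hsmul c hc])
  refine ⟨g, ?_, hgN⟩
  exact (hg ⟨a, Submodule.mem_span_singleton_self a⟩).trans
    (LinearPMap.mkSpanSingleton'_apply_self a (N a) hspan _)

section Duality

open scoped Pointwise

variable {V W : Type*} [AddCommGroup V] [Module ℝ V] [NormedAddCommGroup W] [InnerProductSpace ℝ W]
  {Q : Set W} {A : V →ₗ[ℝ] W} {f : V →ₗ[ℝ] ℝ} {l u u' : W} {r c : ℝ}

/-- The set `Λ` of multipliers `l ∈ Q` with `Aᵀ l = f`, the transposed equation being written out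
as an identity of functionals on `V`. -/
def multipliers (Q : Set W) (A : V →ₗ[ℝ] W) (f : V →ₗ[ℝ] ℝ) : Set W :=
  {l ∈ Q | ∀ w, ⟪l, A w⟫_ℝ = f w}

/-- The real numbers `r` such that `σ_Q (A w + u) - f w ≤ r` for some `w`. -/
def attainableBounds (Q : Set W) (A : V →ₗ[ℝ] W) (f : V →ₗ[ℝ] ℝ) (u : W) : Set ℝ :=
  {r | ∃ w, ∀ z ∈ Q, ⟪z, A w + u⟫_ℝ ≤ r + f w}

/-- The value `inf_w (σ_Q (A w + u) - f w)` of the problem dual to maximising `⟪l, u⟫` over the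
multipliers `l`, as a function of the perturbation `u`. It is `0` by convention when the infimum
is infinite. -/
def perturbedValue (Q : Set W) (A : V →ₗ[ℝ] W) (f : V →ₗ[ℝ] ℝ) (u : W) : ℝ :=
  sInf (attainableBounds Q A f u)

theorem attainableBounds_nonempty (hA : RobinsonCondition A Q) (f : V →ₗ[ℝ] ℝ) (u : W) :
    (attainableBounds Q A f u).Nonempty := by
  obtain ⟨w, y, ⟨M, hM⟩, hwy⟩ := hA (-u)
  have hy : A w + u = y := by rw [← sub_neg_eq_add, ← hwy, sub_sub_cancel]
  exact ⟨M - f w, w, fun z hz => by rw [hy, sub_add_cancel]; exact hM z hz⟩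

theorem inner_le_of_mem_attainableBounds (hl : l ∈ multipliers Q A f)
    (hr : r ∈ attainableBounds Q A f u) : ⟪l, u⟫_ℝ ≤ r := by
  obtain ⟨w, hw⟩ := hr
  have := hw l hl.1
  rw [inner_add_right, hl.2] at this
  linarith

theorem bddBelow_attainableBounds (hΛ : (multipliers Q A f).Nonempty) (u : W) :
    BddBelow (attainableBounds Q A f u) :=
  hΛ.elim fun _ hl => ⟨_, fun _ hr => inner_le_of_mem_attainableBounds hl hr⟩

theorem mul_mem_attainableBounds_smul (hc : 0 ≤ c) (hr : r ∈ attainableBounds Q A f u) :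
    c * r ∈ attainableBounds Q A f (c • u) := by
  obtain ⟨w, hw⟩ := hr
  refine ⟨c • w, fun z hz => ?_⟩
  rw [map_smul, map_smul, ← smul_add, inner_smul_right, smul_eq_mul, ← mul_add]
  exact mul_le_mul_of_nonneg_left (hw z hz) hc

theorem attainableBounds_smul (hc : 0 < c) :
    attainableBounds Q A f (c • u) = c • attainableBounds Q A f u := by
  ext r
  rw [Set.mem_smul_set_iff_inv_smul_mem₀ hc.ne', smul_eq_mul]
  refine ⟨fun hr => ?_, fun hr => ?_⟩
  · simpa [smul_smul, hc.ne'] using mul_mem_attainableBounds_smul (inv_nonneg.2 hc.le) hr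
  · simpa [hc.ne'] using mul_mem_attainableBounds_smul hc.le hr

theorem attainableBounds_add_subset :
    attainableBounds Q A f u + attainableBounds Q A f u' ⊆ attainableBounds Q A f (u + u') := by
  rintro _ ⟨r, ⟨w, hw⟩, r', ⟨w', hw'⟩, rfl⟩
  refine ⟨w + w', fun z hz => ?_⟩
  have hle := add_le_add (hw z hz) (hw' z hz)
  simp only [map_add, inner_add_right] at hle ⊢
  linarith

theorem perturbedValue_smul (hc : 0 < c) (u : W) :
    perturbedValue Q A f (c • u) = c * perturbedValue Q A f u := by
  rw [perturbedValue, attainableBounds_smul hc, Real.sInf_smul_of_nonneg hc.le, smul_eq_mul,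
    perturbedValue]

theorem perturbedValue_add_le (hA : RobinsonCondition A Q) (hΛ : (multipliers Q A f).Nonempty)
    (u u' : W) :
    perturbedValue Q A f (u + u') ≤ perturbedValue Q A f u + perturbedValue Q A f u' := by
  have hne := attainableBounds_nonempty hA f
  have hbdd := bddBelow_attainableBounds hΛ
  calc perturbedValue Q A f (u + u')
      ≤ sInf (attainableBounds Q A f u + attainableBounds Q A f u') :=
        csInf_le_csInf (hbdd _) ((hne u).add (hne u')) attainableBounds_add_subset
    _ = perturbedValue Q A f u + perturbedValue Q A f u' :=
        csInf_add (hne u) (hbdd u) (hne u') (hbdd u')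

theorem mem_of_forall_inner_le [CompleteSpace W] (hQc : IsClosed Q) (hQconv : Convex ℝ Q)
    (hl : ∀ (y : W) (M : ℝ), (∀ z ∈ Q, ⟪z, y⟫_ℝ ≤ M) → ⟪l, y⟫_ℝ ≤ M) : l ∈ Q := by
  by_contra hlQ
  obtain ⟨g, M, hgQ, hgl⟩ := geometric_hahn_banach_closed_point hQconv hQc hlQ
  have hg : ∀ z, ⟪z, (InnerProductSpace.toDual ℝ W).symm g⟫_ℝ = g z := fun z => by
    rw [real_inner_comm, InnerProductSpace.toDual_symm_apply]
  have hle := hl ((InnerProductSpace.toDual ℝ W).symm g) M fun z hz => (hg z).trans_le (hgQ z hz).le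
  rw [hg] at hle
  exact hgl.not_ge hle

theorem mem_multipliers_of_forall_inner_le_perturbedValue [CompleteSpace W] (hQc : IsClosed Q)
    (hQconv : Convex ℝ Q) (hΛ : (multipliers Q A f).Nonempty)
    (hl : ∀ u, ⟪l, u⟫_ℝ ≤ perturbedValue Q A f u) : l ∈ multipliers Q A f := by
  have hle : ∀ {u r}, r ∈ attainableBounds Q A f u → ⟪l, u⟫_ℝ ≤ r := fun hr =>
    (hl _).trans (csInf_le (bddBelow_attainableBounds hΛ _) hr)
  refine ⟨mem_of_forall_inner_le hQc hQconv fun y M hM => hle ⟨0, by simpa using hM⟩, fun w => ?_⟩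
  have hdiff : ∀ w, f w ≤ ⟪l, A w⟫_ℝ := fun w => by
    have := hle (u := -A w) (r := -f w) ⟨w, by simp⟩
    rw [inner_neg_right] at this
    linarith
  have := hdiff (-w)
  rw [map_neg, map_neg, inner_neg_right, neg_le_neg_iff] at this
  exact this.antisymm (hdiff w)

theorem exists_mem_multipliers_inner_eq_perturbedValue [FiniteDimensional ℝ W] (hQc : IsClosed Q)
    (hQconv : Convex ℝ Q) (hA : RobinsonCondition A Q) (hΛ : (multipliers Q A f).Nonempty)
    (a : W) : ∃ l ∈ multipliers Q A f, ⟪l, a⟫_ℝ = perturbedValue Q A f a := by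
  obtain ⟨g, hga, hg⟩ := exists_linearMap_le_sublinear_eq (N := perturbedValue Q A f)
    (fun _ hc => perturbedValue_smul hc) (perturbedValue_add_le hA hΛ) a
  let l := (InnerProductSpace.toDual ℝ W).symm g.toContinuousLinearMap
  have hl : ∀ u, ⟪l, u⟫_ℝ = g u := fun u => InnerProductSpace.toDual_symm_apply
  exact ⟨l, mem_multipliers_of_forall_inner_le_perturbedValue hQc hQconv hΛ
    fun u => (hl u).trans_le (hg u), (hl a).trans hga⟩

theorem exists_mem_attainableBounds_lt [FiniteDimensional ℝ W] (hQc : IsClosed Q)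
    (hQconv : Convex ℝ Q) (hA : RobinsonCondition A Q) (hΛ : (multipliers Q A f).Nonempty)
    {a : W} {β : ℝ} (hβ : ∀ l ∈ multipliers Q A f, ⟪l, a⟫_ℝ < β) :
    ∃ r ∈ attainableBounds Q A f a, r < β := by
  obtain ⟨l, hl, hla⟩ := exists_mem_multipliers_inner_eq_perturbedValue hQc hQconv hA hΛ a
  exact exists_lt_of_csInf_lt (attainableBounds_nonempty hA f a) (hla.symm.trans_lt (hβ l hl))

end Duality

section SupportFunction

variable {m : ℕ} {Q : Set (EuclideanSpace ℝ (Fin m))} {y z : EuclideanSpace ℝ (Fin m)}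

theorem coe_inner_le_supportFn (hz : z ∈ Q) (y : EuclideanSpace ℝ (Fin m)) :
    (⟪z, y⟫_ℝ : EReal) ≤ supportFn Q y :=
  le_iSup₂_of_le z hz le_rfl

theorem supportFn_le_coe_iff {M : ℝ} : supportFn Q y ≤ M ↔ ∀ z ∈ Q, ⟪z, y⟫_ℝ ≤ M := by
  simp only [supportFn, iSup_le_iff, EReal.coe_le_coe_iff]

theorem supportFn_ne_top_iff : supportFn Q y ≠ ⊤ ↔ y ∈ barrierCone Q := by
  refine ⟨fun hy => ⟨_, supportFn_le_coe_iff.1 (EReal.le_coe_toReal hy)⟩, fun ⟨M, hM⟩ => ?_⟩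
  exact ((supportFn_le_coe_iff.2 hM).trans_lt (EReal.coe_lt_top M)).ne

theorem supportFn_zero (hQ : Q.Nonempty) : supportFn Q 0 = 0 := by
  obtain ⟨z, hz⟩ := hQ
  refine le_antisymm (supportFn_le_coe_iff.2 fun z _ => (inner_zero_right z).le) ?_
  simpa using coe_inner_le_supportFn hz 0

end SupportFunction

section SecondSubderivative

variable {n m : ℕ} {Q : Set (EuclideanSpace ℝ (Fin m))}
  {F : EuclideanSpace ℝ (Fin n) → EuclideanSpace ℝ (Fin m)}
  {A : EuclideanSpace ℝ (Fin n) →L[ℝ] EuclideanSpace ℝ (Fin m)}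
  {x v h : EuclideanSpace ℝ (Fin n)} {a z : EuclideanSpace ℝ (Fin m)} {t β : ℝ}

theorem secondSubderivative_le_of_tendsto_of_eventually_le {f : EuclideanSpace ℝ (Fin n) → EReal}
    {c : EReal} {η : ℝ → EuclideanSpace ℝ (Fin n)} (hη : Tendsto η (𝓝[>] 0) (𝓝 h))
    (hc : ∀ᶠ t in 𝓝[>] (0 : ℝ), secondDQ f x v t (η t) ≤ c) :
    secondSubderivative f x v h ≤ c :=
  liminf_le_of_frequently_le' ((tendsto_id.prodMk hη).frequently hc.frequently)

theorem coe_le_secondDQ_supportFn_comp (hF : F x = 0) (hz : z ∈ Q) (ht : t ≠ 0) :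
    ((⟪z, secondOrderQuotient F A x t h⟫_ℝ + 2 * (t⁻¹ * (⟪z, A h⟫_ℝ - ⟪v, h⟫_ℝ)) : ℝ) : EReal) ≤
      secondDQ (fun x => supportFn Q (F x)) x v t h := by
  have hsplit : ⟪z, secondOrderQuotient F A x t h⟫_ℝ + 2 * (t⁻¹ * (⟪z, A h⟫_ℝ - ⟪v, h⟫_ℝ)) =
      2 / t ^ 2 * (⟪z, F (x + t • h)⟫_ℝ - t * ⟪v, h⟫_ℝ) := by
    simp only [secondOrderQuotient, hF, sub_zero, inner_smul_right, inner_sub_right]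
    field_simp
    ring
  rw [hsplit, secondDQ, hF, supportFn_zero ⟨z, hz⟩, sub_zero, EReal.coe_mul, EReal.coe_sub]
  exact mul_le_mul_of_nonneg_left (EReal.sub_le_sub (coe_inner_le_supportFn hz _) le_rfl)
    (EReal.coe_nonneg.2 (by positivity))

theorem secondDQ_supportFn_comp_le (hQ : Q.Nonempty) (hF : F x = 0) (ht : t ≠ 0)
    (hβ : ∀ z ∈ Q, ⟪z, F (x + t • h)⟫_ℝ ≤ t * ⟪v, h⟫_ℝ + t ^ 2 / 2 * β) :
    secondDQ (fun x => supportFn Q (F x)) x v t h ≤ β := by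
  have hcancel : β = 2 / t ^ 2 * (t * ⟪v, h⟫_ℝ + t ^ 2 / 2 * β - t * ⟪v, h⟫_ℝ) := by
    field_simp
    ring
  rw [hcancel, EReal.coe_mul, EReal.coe_sub, secondDQ, hF, supportFn_zero hQ, sub_zero]
  exact mul_le_mul_of_nonneg_left (EReal.sub_le_sub (supportFn_le_coe_iff.2 hβ) le_rfl)
    (EReal.coe_nonneg.2 (by positivity))

theorem le_secondSubderivative_supportFn_comp_of_tendsto (hF : F x = 0) (hz : z ∈ Q) {c : EReal}
    (hc : Tendsto (fun p : ℝ × EuclideanSpace ℝ (Fin n) =>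
      ((⟪z, secondOrderQuotient F A x p.1 p.2⟫_ℝ +
        2 * (p.1⁻¹ * (⟪z, A p.2⟫_ℝ - ⟪v, p.2⟫_ℝ)) : ℝ) : EReal)) (𝓝[>] 0 ×ˢ 𝓝 h) (𝓝 c)) :
    c ≤ secondSubderivative (fun x => supportFn Q (F x)) x v h := by
  rw [← hc.liminf_eq]
  refine liminf_le_liminf ?_
  filter_upwards [eventually_fst_pos_nhdsGT_prod (𝓝 h)] with p hp
  exact coe_le_secondDQ_supportFn_comp hF hz hp.ne'

theorem setOf_adjoint_eq_eq_multipliers :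
    {l ∈ Q | ContinuousLinearMap.adjoint A l = v} =
      multipliers Q A.toLinearMap (innerSL ℝ v).toLinearMap := by
  ext l
  refine and_congr_right fun _ => ⟨?_, fun hl => ext_inner_right ℝ fun w => ?_⟩
  · rintro rfl w
    exact (A.adjoint_inner_left w l).symm
  · exact (A.adjoint_inner_left w l).trans (hl w)

theorem inner_le_secondSubderivative_supportFn_comp
    (ha : Tendsto (fun p : ℝ × EuclideanSpace ℝ (Fin n) => secondOrderQuotient F A x p.1 p.2)
      (𝓝[>] 0 ×ˢ 𝓝 h) (𝓝 a))
    (hF : F x = 0) {l : EuclideanSpace ℝ (Fin m)}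
    (hl : l ∈ multipliers Q A.toLinearMap (innerSL ℝ v).toLinearMap) :
    (⟪l, a⟫_ℝ : EReal) ≤ secondSubderivative (fun x => supportFn Q (F x)) x v h := by
  have hlv : ∀ w, ⟪l, A w⟫_ℝ = ⟪v, w⟫_ℝ := hl.2
  refine le_secondSubderivative_supportFn_comp_of_tendsto (A := A) hF hl.1 ?_
  simp only [hlv, sub_self, mul_zero, add_zero]
  exact (continuous_coe_real_ereal.tendsto _).comp (tendsto_const_nhds.inner ha)

theorem secondSubderivative_supportFn_comp_eq_top
    (ha : Tendsto (fun p : ℝ × EuclideanSpace ℝ (Fin n) => secondOrderQuotient F A x p.1 p.2)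
      (𝓝[>] 0 ×ˢ 𝓝 h) (𝓝 a))
    (hF : F x = 0) (hz : z ∈ Q) (hzh : ⟪v, h⟫_ℝ < ⟪z, A h⟫_ℝ) :
    secondSubderivative (fun x => supportFn Q (F x)) x v h = ⊤ := by
  have hgap : Tendsto (fun p : ℝ × EuclideanSpace ℝ (Fin n) => ⟪z, A p.2⟫_ℝ - ⟪v, p.2⟫_ℝ)
      (𝓝[>] 0 ×ˢ 𝓝 h) (𝓝 (⟪z, A h⟫_ℝ - ⟪v, h⟫_ℝ)) :=
    ((by fun_prop : Continuous fun y => ⟪z, A y⟫_ℝ - ⟪v, y⟫_ℝ).tendsto h).comp tendsto_snd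
  have hinv : Tendsto (fun p : ℝ × EuclideanSpace ℝ (Fin n) => p.1⁻¹) (𝓝[>] 0 ×ˢ 𝓝 h) atTop :=
    tendsto_inv_nhdsGT_zero.comp tendsto_fst
  have hblowup := (hinv.atTop_mul_pos (sub_pos.2 hzh) hgap).const_mul_atTop (zero_lt_two (α := ℝ))
  exact top_le_iff.1 (le_secondSubderivative_supportFn_comp_of_tendsto hF hz
    (EReal.tendsto_coe_nhds_top_iff.2 ((tendsto_const_nhds.inner ha).add_atTop hblowup)))

theorem secondSubderivative_supportFn_comp_le
    (ha : Tendsto (fun p : ℝ × EuclideanSpace ℝ (Fin n) => secondOrderQuotient F A x p.1 p.2)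
      (𝓝[>] 0 ×ˢ 𝓝 h) (𝓝 a))
    (hQc : IsClosed Q) (hQconv : Convex ℝ Q)
    (hA : RobinsonCondition A Q) (hF : HasStrictFDerivAt F A x) (hFx : F x = 0)
    (hΛ : (multipliers Q A.toLinearMap (innerSL ℝ v).toLinearMap).Nonempty)
    (hh : ∀ z ∈ Q, ⟪z, A h⟫_ℝ ≤ ⟪v, h⟫_ℝ)
    (hβ : ∀ l ∈ multipliers Q A.toLinearMap (innerSL ℝ v).toLinearMap, ⟪l, a⟫_ℝ < β) :
    secondSubderivative (fun x => supportFn Q (F x)) x v h ≤ β := by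
  obtain ⟨r, ⟨w, hw⟩, hrβ⟩ := exists_mem_attainableBounds_lt hQc hQconv hA hΛ hβ
  obtain ⟨η, hη, hηβ⟩ :=
    hA.exists_tendsto_eventually_inner_le hF ha (f := innerSL ℝ v) hh hw hrβ
  refine secondSubderivative_le_of_tendsto_of_eventually_le hη ?_
  filter_upwards [hηβ, self_mem_nhdsWithin] with t hQβ (ht : 0 < t)
  refine secondDQ_supportFn_comp_le (hΛ.mono fun _ hl => hl.1) hFx ht.ne' fun z hz => ?_
  simpa only [hFx, sub_zero, innerSL_apply_apply] using hQβ z hz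

end SecondSubderivative

theorem stmt5_general {n m : ℕ} {Q : Set (EuclideanSpace ℝ (Fin m))} (hQc : IsClosed Q)
    (hQconv : Convex ℝ Q) {F : EuclideanSpace ℝ (Fin n) → EuclideanSpace ℝ (Fin m)}
    {F' : EuclideanSpace ℝ (Fin n) → EuclideanSpace ℝ (Fin n) →L[ℝ] EuclideanSpace ℝ (Fin m)}
    {B : EuclideanSpace ℝ (Fin n) →L[ℝ] EuclideanSpace ℝ (Fin n) →L[ℝ] EuclideanSpace ℝ (Fin m)}
    {x v : EuclideanSpace ℝ (Fin n)} (hF : ∀ᶠ y in 𝓝 x, HasFDerivAt F (F' y) y)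
    (hF' : HasFDerivAt F' B x) (hFx : F x = 0)
    (hRob : (0 : EuclideanSpace ℝ (Fin m)) ∈
      interior {z | ∃ h, ∃ y, supportFn Q y ≠ ⊤ ∧ z = F' x h - y})
    (hΛ : {l ∈ Q | ContinuousLinearMap.adjoint (F' x) l = v}.Nonempty)
    (h : EuclideanSpace ℝ (Fin n)) :
    (supportFn Q (F' x h) = (⟪v, h⟫_ℝ : EReal) →
      secondSubderivative (fun x => supportFn Q (F x)) x v h =
        ⨆ l ∈ {l ∈ Q | ContinuousLinearMap.adjoint (F' x) l = v}, (⟪l, B h h⟫_ℝ : EReal)) ∧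
    (supportFn Q (F' x h) ≠ (⟪v, h⟫_ℝ : EReal) →
      secondSubderivative (fun x => supportFn Q (F x)) x v h = ⊤) := by
  have hA : RobinsonCondition (F' x) Q := robinsonCondition_of_zero_mem_interior
    (A := (F' x).toLinearMap)
    (by simpa only [supportFn_ne_top_iff, eq_comm, ContinuousLinearMap.coe_coe] using hRob)
  have hstrict := hasStrictFDerivAt_of_hasFDerivAt_of_continuousAt hF hF'.continuousAt
  have ha := tendsto_secondOrderQuotient hF hF' h
  rw [setOf_adjoint_eq_eq_multipliers] at hΛ ⊢
  refine ⟨fun heq => le_antisymm ?_ ?_, fun hne => ?_⟩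
  · refine EReal.le_of_forall_lt_iff_le.1 fun β hβ => ?_
    exact secondSubderivative_supportFn_comp_le ha hQc hQconv hA hstrict hFx hΛ
      (supportFn_le_coe_iff.1 heq.le) fun l hl =>
        EReal.coe_lt_coe_iff.1 ((le_iSup₂_of_le l hl le_rfl).trans_lt hβ)
  · exact iSup₂_le fun l hl => inner_le_secondSubderivative_supportFn_comp ha hFx hl
  · obtain ⟨l, hlQ, hlv⟩ := hΛ
    have hle : (⟪v, h⟫_ℝ : EReal) ≤ supportFn Q (F' x h) :=
      (EReal.coe_le_coe (hlv h).ge).trans (coe_inner_le_supportFn hlQ _)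
    obtain ⟨z, hz, hzh⟩ : ∃ z ∈ Q, ⟪v, h⟫_ℝ < ⟪z, F' x h⟫_ℝ := by
      by_contra! hQ
      exact hne (le_antisymm (supportFn_le_coe_iff.2 hQ) hle)
    exact secondSubderivative_supportFn_comp_eq_top ha hFx hz hzh

theorem stmt5 {n m : ℕ} (Q : Set (EuclideanSpace ℝ (Fin m)))
    (hQne : Q.Nonempty) (hQc : IsClosed Q) (hQconv : Convex ℝ Q)
    (U : Set (EuclideanSpace ℝ (Fin n))) (hU : IsOpen U)
    (xbar : EuclideanSpace ℝ (Fin n)) (hxbar : xbar ∈ U)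
    (F : EuclideanSpace ℝ (Fin n) → EuclideanSpace ℝ (Fin m))
    (F' : EuclideanSpace ℝ (Fin n) → (EuclideanSpace ℝ (Fin n) →L[ℝ] EuclideanSpace ℝ (Fin m)))
    (F'' : EuclideanSpace ℝ (Fin n) →
      (EuclideanSpace ℝ (Fin n) →L[ℝ] EuclideanSpace ℝ (Fin n) →L[ℝ] EuclideanSpace ℝ (Fin m)))
    (hF' : ∀ x ∈ U, HasFDerivAt F (F' x) x)
    (hF'' : ∀ x ∈ U, HasFDerivAt F' (F'' x) x)
    (hF''cont : ContinuousOn F'' U)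
    (hF0 : F xbar = 0)
    (hRob : (0 : EuclideanSpace ℝ (Fin m)) ∈
      interior {z | ∃ h : EuclideanSpace ℝ (Fin n), ∃ y : EuclideanSpace ℝ (Fin m),
        supportFn Q y ≠ ⊤ ∧ z = F' xbar h - y})
    (vbar : EuclideanSpace ℝ (Fin n))
    (hΛne : {lam ∈ Q | ContinuousLinearMap.adjoint (F' xbar) lam = vbar}.Nonempty) :
    ∀ h : EuclideanSpace ℝ (Fin n),
      (supportFn Q (F' xbar h) = ((⟪vbar, h⟫_ℝ : ℝ) : EReal) →
        secondSubderivative (fun x => supportFn Q (F x)) xbar vbar h =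
          ⨆ lam ∈ {lam ∈ Q | ContinuousLinearMap.adjoint (F' xbar) lam = vbar},
            ((⟪lam, F'' xbar h h⟫_ℝ : ℝ) : EReal)) ∧
      (supportFn Q (F' xbar h) ≠ ((⟪vbar, h⟫_ℝ : ℝ) : EReal) →
        secondSubderivative (fun x => supportFn Q (F x)) xbar vbar h = ⊤) :=
  stmt5_general hQc hQconv ((hU.eventually_mem hxbar).mono hF') (hF'' xbar hxbar) hF0 hRob hΛne

end
end

section
/- Let Q ⊆ ℝ^m be a nonempty closed convex set, let U be an open neighborhood of x̄ ∈ ℝⁿ, let F : U → ℝ^m be twice continuously differentiable with F(x̄) = 0, and let λ̄ ∈ Q. Assume Robinson's constraint qualification 0 ∈ int{DF(x̄)h − y : h ∈ ℝⁿ, y ∈ ℝ^m with σ_Q(y) < +∞} and the strict constraint qualification {DF(x̄)h − v : h ∈ ℝⁿ, v ∈ N_Q(λ̄)} = ℝ^m. Set φ(x) = σ_Q(F(x)) for x ∈ U. Then for every h ∈ ℝⁿ: d²_s φ(x̄ | DF(x̄)ᵀλ̄)(h) ≥ d²_s σ_Q(0|λ̄)(DF(x̄)h) + ⟨λ̄,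 D²F(x̄)[h,h]⟩. -/
open Filter Topology Set
open scoped InnerProductSpace

noncomputable section

/-- The normal cone of a convex set `Q ⊆ ℝ^m` at a point `lam ∈ Q`. -/
def normalCone {m : ℕ} (Q : Set (EuclideanSpace ℝ (Fin m))) (lam : EuclideanSpace ℝ (Fin m)) :
    Set (EuclideanSpace ℝ (Fin m)) :=
  {v | ∀ y ∈ Q, ⟪v, y - lam⟫_ℝ ≤ 0}

/-- Strict second subderivative of the support function `σ_Q` at `0` for `lam0` in direction `w`:
the liminf of `Δ²_t σ_Q(x|λ)(w̃)` over `t ↓ 0`, `w̃ → w`, `x → 0`, `Q ∋ λ → lam0` subject to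
`σ_Q(x) = ⟨λ, x⟩`. -/
def strictD2supp {m : ℕ} (Q : Set (EuclideanSpace ℝ (Fin m))) (lam0 : EuclideanSpace ℝ (Fin m))
    (w : EuclideanSpace ℝ (Fin m)) : EReal :=
  liminf
    (fun p : ℝ × EuclideanSpace ℝ (Fin m) × EuclideanSpace ℝ (Fin m) × EuclideanSpace ℝ (Fin m) =>
      secondDQ (supportFn Q) p.2.2.1 p.2.2.2 p.1 p.2.1)
    (((𝓝[>] (0 : ℝ)) ×ˢ (𝓝 w ×ˢ (𝓝 (0 : EuclideanSpace ℝ (Fin m)) ×ˢ 𝓝 lam0))) ⊓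
      Filter.principal
        {p : ℝ × EuclideanSpace ℝ (Fin m) × EuclideanSpace ℝ (Fin m) × EuclideanSpace ℝ (Fin m) |
          p.2.2.2 ∈ Q ∧ supportFn Q p.2.2.1 = ((⟪p.2.2.2, p.2.2.1⟫_ℝ : ℝ) : EReal)})

/-- Strict second subderivative of `φ = σ_Q ∘ F` at `xbar` for `vbar` in direction `h`:
the liminf of `Δ²_t φ(x|v)(h̃)` over `t ↓ 0`, `h̃ → h`, `x → xbar`, `v → vbar` subject to
`v = DF(x)ᵀ λ` for some `λ ∈ Q` with `σ_Q(F x) = ⟨λ, F x⟩`. -/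
def strictD2phi {n m : ℕ} (Q : Set (EuclideanSpace ℝ (Fin m)))
    (F : EuclideanSpace ℝ (Fin n) → EuclideanSpace ℝ (Fin m))
    (F' : EuclideanSpace ℝ (Fin n) → (EuclideanSpace ℝ (Fin n) →L[ℝ] EuclideanSpace ℝ (Fin m)))
    (xbar vbar h : EuclideanSpace ℝ (Fin n)) : EReal :=
  liminf
    (fun p : ℝ × EuclideanSpace ℝ (Fin n) × EuclideanSpace ℝ (Fin n) × EuclideanSpace ℝ (Fin n) =>
      secondDQ (fun x => supportFn Q (F x)) p.2.2.1 p.2.2.2 p.1 p.2.1)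
    (((𝓝[>] (0 : ℝ)) ×ˢ (𝓝 h ×ˢ (𝓝 xbar ×ˢ 𝓝 vbar))) ⊓
      Filter.principal
        {p : ℝ × EuclideanSpace ℝ (Fin n) × EuclideanSpace ℝ (Fin n) × EuclideanSpace ℝ (Fin n) |
          ∃ lam ∈ Q, p.2.2.2 = ContinuousLinearMap.adjoint (F' p.2.2.1) lam ∧
            supportFn Q (F p.2.2.1) = ((⟪lam, F p.2.2.1⟫_ℝ : ℝ) : EReal)})

/-!
Write `A = DF(x̄)`. A point `v → Aᵀλ̄` entering `d²_s φ` is `v = DF(x)ᵀλ` with `λ ∈ Q`. The strict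
constraint qualification writes every `z` as `A h - u` with `u ∈ N_Q(λ̄)`, so that
`⟨-z, λ - λ̄⟩ ≤ ‖h‖ ‖Aᵀ(λ - λ̄)‖` on `Q`; by the uniform boundedness principle
`‖λ - λ̄‖ ≤ C ‖Aᵀ(λ - λ̄)‖` on `Q`, and this error bound forces `λ → λ̄`.

With the difference quotient `w = (F(x + t k) - F(x)) / t → A h`, one has `F(x + t k) = F(x) + t w`,
hence the exact identity
`Δ²_t φ(x|v)(k) = Δ²_t σ_Q(F(x)|λ)(w) + ⟨λ, 2 (F(x + t k) - F(x) - t DF(x)k) / t²⟩`.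
The last vector tends to `D²F(x̄)[h,h]` by a Taylor expansion that is uniform in the base point `x`.
-/

section ErrorBound

variable {E G : Type*} [NormedAddCommGroup E] [InnerProductSpace ℝ E] [CompleteSpace E]
  [NormedAddCommGroup G] [InnerProductSpace ℝ G] [CompleteSpace G]

theorem exists_norm_le_mul_of_forall_inner_le {D : Set G} {f : G → ℝ} (hf : ∀ d ∈ D, 0 ≤ f d)
    (hD : ∀ z : G, ∃ c : ℝ, ∀ d ∈ D, ⟪z, d⟫_ℝ ≤ c * f d) :
    ∃ C : ℝ, 0 < C ∧ ∀ d ∈ D, ‖d‖ ≤ C * f d := by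
  have abs_inner_le (z : G) : ∃ c : ℝ, 0 ≤ c ∧ ∀ d ∈ D, |⟪d, z⟫_ℝ| ≤ c * f d := by
    obtain ⟨c₁, hc₁⟩ := hD z
    obtain ⟨c₂, hc₂⟩ := hD (-z)
    refine ⟨max (max c₁ c₂) 0, le_max_right _ _, fun d hd => ?_⟩
    rw [real_inner_comm, abs_le']
    constructor
    · exact (hc₁ d hd).trans
        (mul_le_mul_of_nonneg_right ((le_max_left _ _).trans (le_max_left _ _)) (hf d hd))
    · rw [← inner_neg_left]
      exact (hc₂ d hd).trans
        (mul_le_mul_of_nonneg_right ((le_max_right _ _).trans (le_max_left _ _)) (hf d hd))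
  obtain ⟨C, hC⟩ : ∃ C, ∀ d : D, ‖(f d)⁻¹ • innerSL ℝ (d : G)‖ ≤ C := by
    refine banach_steinhaus fun z => ?_
    obtain ⟨c, hc0, hc⟩ := abs_inner_le z
    refine ⟨c, fun ⟨d, hd⟩ => ?_⟩
    rw [smul_apply, innerSL_apply_apply, norm_smul, norm_inv,
      Real.norm_of_nonneg (hf d hd), Real.norm_eq_abs]
    exact inv_mul_le_of_le_mul₀ (hf d hd) hc0 (by simpa only [mul_comm] using hc d hd)
  refine ⟨max C 1, by positivity, fun d hd => ?_⟩
  rcases (hf d hd).eq_or_lt with hfd | hfd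
  · obtain ⟨c, -, hc⟩ := abs_inner_le d
    have hd0 : |⟪d, d⟫_ℝ| ≤ 0 := by simpa only [← hfd, mul_zero] using hc d hd
    have : d = 0 := inner_self_eq_zero.1 (abs_nonpos_iff.1 hd0)
    rw [← hfd, this, norm_zero, mul_zero]
  · have := hC ⟨d, hd⟩
    rw [norm_smul, norm_inv, Real.norm_of_nonneg hfd.le, innerSL_apply_norm,
      inv_mul_le_iff₀ hfd, mul_comm] at this
    exact this.trans (mul_le_mul_of_nonneg_right (le_max_left _ _) hfd.le)

theorem exists_norm_le_mul_norm_adjoint {D : Set G} (A : E →L[ℝ] G)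
    (hA : ∀ z : G, ∃ h : E, ∃ v : G, (∀ d ∈ D, ⟪v, d⟫_ℝ ≤ 0) ∧ z = A h - v) :
    ∃ C : ℝ, 0 < C ∧ ∀ d ∈ D, ‖d‖ ≤ C * ‖ContinuousLinearMap.adjoint A d‖ := by
  refine exists_norm_le_mul_of_forall_inner_le (fun d _ => norm_nonneg _) fun z => ?_
  obtain ⟨h, v, hv, hz⟩ := hA (-z)
  refine ⟨‖h‖, fun d hd => ?_⟩
  calc ⟪z, d⟫_ℝ = ⟪v, d⟫_ℝ - ⟪A h, d⟫_ℝ := by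
        rw [← neg_neg z, hz, inner_neg_left, inner_sub_left, neg_sub]
    _ ≤ -⟪h, ContinuousLinearMap.adjoint A d⟫_ℝ := by
        rw [ContinuousLinearMap.adjoint_inner_right]; linarith [hv d hd]
    _ ≤ ‖h‖ * ‖ContinuousLinearMap.adjoint A d‖ :=
        (neg_le_abs _).trans (abs_real_inner_le_norm _ _)

end ErrorBound

section Perturbation

variable {ι E G : Type*} [NormedAddCommGroup E] [NormedSpace ℝ E]
  [NormedAddCommGroup G] [NormedSpace ℝ G] {L : Filter ι}

theorem tendsto_of_tendsto_apply_of_norm_sub_le {T : ι → E →L[ℝ] G} {T₀ : E →L[ℝ] G}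
    {y : ι → E} {y₀ : E} {C : ℝ} (hC : 0 < C)
    (hbound : ∀ᶠ i in L, ‖y i - y₀‖ ≤ C * ‖T₀ (y i - y₀)‖)
    (hT : Tendsto T L (𝓝 T₀)) (hTy : Tendsto (fun i => T i (y i)) L (𝓝 (T₀ y₀))) :
    Tendsto y L (𝓝 y₀) := by
  have hTdiff : Tendsto (fun i => T i (y i - y₀)) L (𝓝 0) := by
    have hTy₀ : Tendsto (fun i => T i y₀) L (𝓝 (T₀ y₀)) :=
      ((ContinuousLinearMap.apply ℝ G y₀).continuous.tendsto T₀).comp hT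
    simpa only [map_sub, sub_self] using hTy.sub hTy₀
  have hsmall : ∀ᶠ i in L, ‖T i - T₀‖ < (2 * C)⁻¹ :=
    (tendsto_iff_norm_sub_tendsto_zero.1 hT).eventually (gt_mem_nhds (by positivity))
  rw [tendsto_iff_norm_sub_tendsto_zero]
  refine squeeze_zero' (.of_forall fun i => norm_nonneg _) ?_
    (by simpa only [norm_zero, mul_zero] using hTdiff.norm.const_mul (2 * C))
  filter_upwards [hbound, hsmall] with i hi hTi
  set d := y i - y₀
  have hperturb : ‖T₀ d‖ ≤ ‖T i d‖ + (2 * C)⁻¹ * ‖d‖ := by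
    calc ‖T₀ d‖ = ‖T i d - (T i - T₀) d‖ := by
          rw [sub_apply, sub_sub_cancel]
      _ ≤ ‖T i d‖ + ‖(T i - T₀) d‖ := norm_sub_le _ _
      _ ≤ ‖T i d‖ + (2 * C)⁻¹ * ‖d‖ := by
          gcongr; exact (T i - T₀).le_of_opNorm_le hTi.le d
  have habsorb : ‖d‖ ≤ C * ‖T i d‖ + ‖d‖ / 2 :=
    calc ‖d‖ ≤ C * (‖T i d‖ + (2 * C)⁻¹ * ‖d‖) := by grw [hi, hperturb]
      _ = C * ‖T i d‖ + ‖d‖ / 2 := by field_simp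
  linarith

end Perturbation

section StrictExpansion

variable {ι E G : Type*} [NormedAddCommGroup E] [NormedSpace ℝ E]
  [NormedAddCommGroup G] [NormedSpace ℝ G] {L : Filter ι}
  {F : E → G} {F' : E → E →L[ℝ] G} {F'' : E →L[ℝ] E →L[ℝ] G} {x₀ : E}

theorem norm_taylor_two_sub_le {A : E →L[ℝ] G} {x k : E} {c : ℝ} (hc : 0 ≤ c)
    (hF : ∀ s ∈ Icc (0 : ℝ) 1, HasFDerivAt F (F' (x + s • k)) (x + s • k))
    (hF' : ∀ s ∈ Icc (0 : ℝ) 1, ‖F' (x + s • k) - A - F'' (s • k)‖ ≤ c * ‖s • k‖) :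
    ‖F (x + k) - F x - A k - (1 / 2 : ℝ) • F'' k k‖ ≤ c * ‖k‖ ^ 2 := by
  have hderiv (s : ℝ) (hs : s ∈ Icc (0 : ℝ) 1) :
      HasDerivAt (fun s : ℝ => F (x + s • k) - s • A k - (s ^ 2 / 2) • F'' k k)
        (F' (x + s • k) k - A k - s • F'' k k) s := by
    have hline : HasDerivAt (fun s : ℝ => x + s • k) k s := by
      simpa only [one_smul, id_eq] using ((hasDerivAt_id s).smul_const k).const_add x
    have hlinear : HasDerivAt (fun s : ℝ => s • A k) (A k) s := by
      simpa only [one_smul, id_eq] using (hasDerivAt_id s).smul_const (A k)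
    have hsquare : HasDerivAt (fun s : ℝ => s ^ 2 / 2) s s := by
      simpa using (hasDerivAt_pow 2 s).div_const 2
    exact (((hF s hs).comp_hasDerivAt s hline).sub hlinear).sub (hsquare.smul_const _)
  have hbound (s : ℝ) (hs : s ∈ Ico (0 : ℝ) 1) :
      ‖F' (x + s • k) k - A k - s • F'' k k‖ ≤ c * ‖k‖ ^ 2 := by
    have hsk : ‖s • k‖ ≤ ‖k‖ := by
      rw [norm_smul, Real.norm_of_nonneg hs.1]
      exact mul_le_of_le_one_left (norm_nonneg _) hs.2.le
    calc ‖F' (x + s • k) k - A k - s • F'' k k‖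
        = ‖(F' (x + s • k) - A - F'' (s • k)) k‖ := by simp
      _ ≤ c * ‖s • k‖ * ‖k‖ :=
          ContinuousLinearMap.le_of_opNorm_le _ (hF' s (Ico_subset_Icc_self hs)) k
      _ ≤ c * ‖k‖ * ‖k‖ := by gcongr
      _ = c * ‖k‖ ^ 2 := by ring
  convert norm_image_sub_le_of_norm_deriv_le_segment_01'
    (fun s hs => (hderiv s hs).hasDerivWithinAt) hbound using 2
  simp only [one_smul, zero_smul, add_zero, one_pow, sub_zero, ne_eq, OfNat.ofNat_ne_zero,
    not_false_eq_true, zero_pow, zero_div]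
  abel

theorem isLittleO_taylor_two_of_hasStrictFDerivAt
    (hF : ∀ᶠ x in 𝓝 x₀, HasFDerivAt F (F' x) x) (hF' : HasStrictFDerivAt F' F'' x₀) :
    (fun p : E × E => F p.1 - F p.2 - F' p.2 (p.1 - p.2)
      - (1 / 2 : ℝ) • F'' (p.1 - p.2) (p.1 - p.2)) =o[𝓝 (x₀, x₀)]
      fun p => ‖p.1 - p.2‖ ^ 2 := by
  refine Asymptotics.isLittleO_iff.2 fun c hc => ?_
  have hstrict : ∀ᶠ p : E × E in 𝓝 (x₀, x₀),
      ‖F' p.1 - F' p.2 - F'' (p.1 - p.2)‖ ≤ c * ‖p.1 - p.2‖ :=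
    hF'.isLittleO.def hc
  have hdiff : ∀ᶠ p : E × E in 𝓝 (x₀, x₀), HasFDerivAt F (F' p.1) p.1 :=
    (continuous_fst.tendsto (x₀, x₀)).eventually hF
  obtain ⟨δ, hδ, hball⟩ := Metric.eventually_nhds_iff_ball.1 (hstrict.and hdiff)
  refine Metric.eventually_nhds_iff_ball.2 ⟨δ, hδ, fun ⟨y, x⟩ hyx => ?_⟩
  rw [← ball_prod_same] at hyx hball
  have hsegment (s : ℝ) (hs : s ∈ Icc (0 : ℝ) 1) :
      (x + s • (y - x), x) ∈ Metric.ball x₀ δ ×ˢ Metric.ball x₀ δ :=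
    ⟨(convex_ball x₀ δ).add_smul_sub_mem hyx.2 hyx.1 hs, hyx.2⟩
  have := norm_taylor_two_sub_le (F := F) (F' := F') (F'' := F'') (A := F' x) (x := x)
    (k := y - x) hc.le (fun s hs => (hball _ (hsegment s hs)).2) fun s hs => by
      simpa only [add_sub_cancel_left] using (hball _ (hsegment s hs)).1
  simpa only [add_sub_cancel, norm_pow, norm_norm] using this

variable {t : ι → ℝ} {k x : ι → E} {h : E}

theorem tendsto_add_smul_prodMk (ht : Tendsto t L (𝓝 0)) (hk : Tendsto k L (𝓝 h))
    (hx : Tendsto x L (𝓝 x₀)) : Tendsto (fun i => (x i + t i • k i, x i)) L (𝓝 (x₀, x₀)) := by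
  have htk := ht.smul hk
  rw [zero_smul] at htk
  simpa only [add_zero] using (hx.add htk).prodMk_nhds hx

theorem tendsto_inv_smul_sub_of_hasStrictFDerivAt {A : E →L[ℝ] G} (hF : HasStrictFDerivAt F A x₀)
    (ht : Tendsto t L (𝓝[≠] 0)) (hk : Tendsto k L (𝓝 h)) (hx : Tendsto x L (𝓝 x₀)) :
    Tendsto (fun i => (t i)⁻¹ • (F (x i + t i • k i) - F (x i))) L (𝓝 (A h)) := by
  have hrem : (fun i => F (x i + t i • k i) - F (x i) - t i • A (k i)) =o[L] t := by
    have hO : (fun i => t i • k i) =O[L] t := by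
      simpa only [smul_eq_mul, mul_one] using
        (Asymptotics.isBigO_refl t L).smul (hk.isBigO_one ℝ)
    have ho := hF.isLittleO.comp_tendsto
      (tendsto_add_smul_prodMk (ht.mono_right nhdsWithin_le_nhds) hk hx)
    simp only [Function.comp_def, add_sub_cancel_left, map_smul] at ho
    exact ho.trans_isBigO hO
  have hlim := hrem.tendsto_inv_smul_nhds_zero.add ((A.continuous.tendsto h).comp hk)
  rw [zero_add] at hlim
  refine hlim.congr' ?_
  filter_upwards [ht.eventually self_mem_nhdsWithin] with i (hi : t i ≠ 0)
  rw [Function.comp_apply, smul_sub _ _ (t i • A (k i)), inv_smul_smul₀ hi, sub_add_cancel]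

theorem tendsto_two_div_sq_smul_sub_of_hasStrictFDerivAt
    (hF : ∀ᶠ x in 𝓝 x₀, HasFDerivAt F (F' x) x) (hF' : HasStrictFDerivAt F' F'' x₀)
    (ht : Tendsto t L (𝓝[≠] 0)) (hk : Tendsto k L (𝓝 h)) (hx : Tendsto x L (𝓝 x₀)) :
    Tendsto (fun i => (2 / t i ^ 2) • (F (x i + t i • k i) - F (x i) - t i • F' (x i) (k i)))
      L (𝓝 (F'' h h)) := by
  have hrem : (fun i => F (x i + t i • k i) - F (x i) - t i • F' (x i) (k i)
      - (1 / 2 : ℝ) • t i • t i • F'' (k i) (k i)) =o[L] fun i => t i ^ 2 := by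
    have hO : (fun i => ‖t i • k i‖ ^ 2) =O[L] fun i => t i ^ 2 := by
      simpa only [smul_eq_mul, mul_one] using
        (((Asymptotics.isBigO_refl t L).smul (hk.isBigO_one ℝ)).norm_left).pow 2
    have ho := (isLittleO_taylor_two_of_hasStrictFDerivAt hF hF').comp_tendsto
      (tendsto_add_smul_prodMk (ht.mono_right nhdsWithin_le_nhds) hk hx)
    simp only [Function.comp_def, add_sub_cancel_left, map_smul, smul_apply] at ho
    exact ho.trans_isBigO hO
  have hquad : Tendsto (fun i => F'' (k i) (k i)) L (𝓝 (F'' h h)) :=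
    ((by fun_prop : Continuous fun k => F'' k k).tendsto h).comp hk
  have hlim := (hrem.tendsto_inv_smul_nhds_zero.const_smul (2 : ℝ)).add hquad
  rw [smul_zero, zero_add] at hlim
  refine hlim.congr' ?_
  filter_upwards [ht.eventually self_mem_nhdsWithin] with i (hi : t i ≠ 0)
  match_scalars <;> field_simp
  ring

end StrictExpansion

section ChainRule

theorem ereal_coe_mul_sub_coe_eq_add {c : ℝ} (hc : 0 < c) (z : EReal) (a b : ℝ) :
    (c : EReal) * (z - b) = c * (z - a) + ((c * (a - b) : ℝ) : EReal) := by
  induction z with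
  | bot => simp [EReal.coe_mul_bot_of_pos hc]
  | top =>
    generalize c * (a - b) = r
    simp [EReal.coe_mul_top_of_pos hc]
  | coe z => norm_cast; ring

variable {ι : Type*} {n m : ℕ} {L : Filter ι} {t : ι → ℝ}

theorem secondDQ_comp (f : EuclideanSpace ℝ (Fin m) → EReal)
    (F : EuclideanSpace ℝ (Fin n) → EuclideanSpace ℝ (Fin m))
    (A : EuclideanSpace ℝ (Fin n) →L[ℝ] EuclideanSpace ℝ (Fin m))
    (x k : EuclideanSpace ℝ (Fin n)) (lam : EuclideanSpace ℝ (Fin m)) {t : ℝ} (ht : t ≠ 0) :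
    secondDQ (fun x => f (F x)) x (ContinuousLinearMap.adjoint A lam) t k =
      secondDQ f (F x) lam t (t⁻¹ • (F (x + t • k) - F x)) +
        ((⟪lam, (2 / t ^ 2) • (F (x + t • k) - F x - t • A k)⟫_ℝ : ℝ) : EReal) := by
  set w := t⁻¹ • (F (x + t • k) - F x)
  have htw : t • w = F (x + t • k) - F x := smul_inv_smul₀ ht _
  have hinner : ⟪lam, (2 / t ^ 2) • (t • w - t • A k)⟫_ℝ =
      2 / t ^ 2 * (t * ⟪lam, w⟫_ℝ - t * ⟪lam, A k⟫_ℝ) := by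
    simp only [inner_smul_right, inner_sub_right]
  rw [← htw, hinner, secondDQ, secondDQ, htw, add_sub_cancel,
    ContinuousLinearMap.adjoint_inner_left]
  exact ereal_coe_mul_sub_coe_eq_add (by positivity) _ _ _

variable {Q : Set (EuclideanSpace ℝ (Fin m))} {lam₀ : EuclideanSpace ℝ (Fin m)}
  {lam : ι → EuclideanSpace ℝ (Fin m)}

theorem strictD2supp_le_liminf {w₀ : EuclideanSpace ℝ (Fin m)}
    {w y : ι → EuclideanSpace ℝ (Fin m)} (ht : Tendsto t L (𝓝[>] 0)) (hw : Tendsto w L (𝓝 w₀))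
    (hy : Tendsto y L (𝓝 0)) (hlam : Tendsto lam L (𝓝 lam₀))
    (hsubgrad : ∀ᶠ i in L, lam i ∈ Q ∧ supportFn Q (y i) = ((⟪lam i, y i⟫_ℝ : ℝ) : EReal)) :
    strictD2supp Q lam₀ w₀ ≤
      liminf (fun i => secondDQ (supportFn Q) (y i) (lam i) (t i) (w i)) L := by
  rw [strictD2supp]
  refine (liminf_le_liminf_of_le ?_).trans_eq
    (liminf_comp _ (fun i => (t i, w i, y i, lam i)) L).symm
  exact tendsto_inf.2 ⟨ht.prodMk (hw.prodMk (hy.prodMk hlam)), tendsto_principal.2 hsubgrad⟩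

theorem tendsto_multiplier_of_forall_exists_sub_normalCone
    {A : EuclideanSpace ℝ (Fin n) →L[ℝ] EuclideanSpace ℝ (Fin m)}
    {B : ι → EuclideanSpace ℝ (Fin n) →L[ℝ] EuclideanSpace ℝ (Fin m)}
    (hA : ∀ z, ∃ h, ∃ v ∈ normalCone Q lam₀, z = A h - v)
    (hB : Tendsto B L (𝓝 A)) (hlam : ∀ᶠ i in L, lam i ∈ Q)
    (hBlam : Tendsto (fun i => ContinuousLinearMap.adjoint (B i) (lam i)) L
      (𝓝 (ContinuousLinearMap.adjoint A lam₀))) :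
    Tendsto lam L (𝓝 lam₀) := by
  obtain ⟨C, hC, hbound⟩ := exists_norm_le_mul_norm_adjoint (D := (· - lam₀) '' Q) A fun z => by
    obtain ⟨h, v, hv, hz⟩ := hA z
    exact ⟨h, v, forall_mem_image.2 hv, hz⟩
  have hadjoint := (ContinuousLinearMap.adjoint.continuous.tendsto A).comp hB
  exact tendsto_of_tendsto_apply_of_norm_sub_le hC
    (hlam.mono fun i hi => hbound _ (mem_image_of_mem _ hi)) hadjoint hBlam

variable {F : EuclideanSpace ℝ (Fin n) → EuclideanSpace ℝ (Fin m)}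
  {F' : EuclideanSpace ℝ (Fin n) → EuclideanSpace ℝ (Fin n) →L[ℝ] EuclideanSpace ℝ (Fin m)}
  {F'' : EuclideanSpace ℝ (Fin n) →L[ℝ] EuclideanSpace ℝ (Fin n) →L[ℝ] EuclideanSpace ℝ (Fin m)}
  {x₀ h : EuclideanSpace ℝ (Fin n)}

theorem strictD2supp_add_le_liminf_secondDQ_comp {k x : ι → EuclideanSpace ℝ (Fin n)}
    (hF : ∀ᶠ x in 𝓝 x₀, HasFDerivAt F (F' x) x) (hF' : HasStrictFDerivAt F' F'' x₀)
    (hF₀ : F x₀ = 0) (ht : Tendsto t L (𝓝[>] 0)) (hk : Tendsto k L (𝓝 h))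
    (hx : Tendsto x L (𝓝 x₀)) (hlam : Tendsto lam L (𝓝 lam₀))
    (hsubgrad : ∀ᶠ i in L,
      lam i ∈ Q ∧ supportFn Q (F (x i)) = ((⟪lam i, F (x i)⟫_ℝ : ℝ) : EReal)) :
    strictD2supp Q lam₀ (F' x₀ h) + ((⟪lam₀, F'' h h⟫_ℝ : ℝ) : EReal) ≤
      liminf (fun i => secondDQ (fun x => supportFn Q (F x)) (x i)
        (ContinuousLinearMap.adjoint (F' (x i)) (lam i)) (t i) (k i)) L := by
  rcases L.eq_or_neBot with rfl | _
  · simp only [liminf_bot, le_top]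
  have htne : Tendsto t L (𝓝[≠] 0) := ht.mono_right (nhdsGT_le_nhdsNE 0)
  have hstrict : HasStrictFDerivAt F (F' x₀) x₀ :=
    hasStrictFDerivAt_of_hasFDerivAt_of_continuousAt hF hF'.continuousAt
  have hFx : Tendsto (fun i => F (x i)) L (𝓝 0) := hF₀ ▸ hstrict.continuousAt.tendsto.comp hx
  have hsupp := strictD2supp_le_liminf ht
    (tendsto_inv_smul_sub_of_hasStrictFDerivAt hstrict htne hk hx) hFx hlam hsubgrad
  have hcurv := (continuous_coe_real_ereal.tendsto _).comp
    (hlam.inner (tendsto_two_div_sq_smul_sub_of_hasStrictFDerivAt hF hF' htne hk hx))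
  rw [← hcurv.liminf_eq]
  refine (add_le_add_left hsupp _).trans (EReal.le_liminf_add.trans_eq (liminf_congr ?_))
  filter_upwards [ht.eventually self_mem_nhdsWithin] with i (hi : 0 < t i)
  exact (secondDQ_comp (supportFn Q) F (F' (x i)) (x i) (k i) (lam i) hi.ne').symm

theorem stmt6_general (hF : ∀ᶠ x in 𝓝 x₀, HasFDerivAt F (F' x) x)
    (hF' : HasStrictFDerivAt F' F'' x₀) (hF₀ : F x₀ = 0)
    (hStrict : {z | ∃ h, ∃ v ∈ normalCone Q lam₀, z = F' x₀ h - v} = univ)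
    (h : EuclideanSpace ℝ (Fin n)) :
    strictD2supp Q lam₀ (F' x₀ h) + ((⟪lam₀, F'' h h⟫_ℝ : ℝ) : EReal) ≤
      strictD2phi Q F F' x₀ (ContinuousLinearMap.adjoint (F' x₀) lam₀) h := by
  rw [strictD2phi]
  set S := {p : ℝ × EuclideanSpace ℝ (Fin n) × EuclideanSpace ℝ (Fin n) ×
    EuclideanSpace ℝ (Fin n) | ∃ lam ∈ Q, p.2.2.2 = ContinuousLinearMap.adjoint (F' p.2.2.1) lam ∧
      supportFn Q (F p.2.2.1) = ((⟪lam, F p.2.2.1⟫_ℝ : ℝ) : EReal)}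
  set L := (𝓝[>] (0 : ℝ) ×ˢ (𝓝 h ×ˢ (𝓝 x₀ ×ˢ
    𝓝 (ContinuousLinearMap.adjoint (F' x₀) lam₀)))) ⊓ 𝓟 S
  have hLS : ∀ᶠ p in L, p ∈ S := mem_inf_of_right (mem_principal_self S)
  obtain ⟨ht, hk, hx, hv⟩ : Tendsto (·.1) L (𝓝[>] 0) ∧ Tendsto (·.2.1) L (𝓝 h) ∧
      Tendsto (·.2.2.1) L (𝓝 x₀) ∧
      Tendsto (·.2.2.2) L (𝓝 (ContinuousLinearMap.adjoint (F' x₀) lam₀)) := by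
    have hid := tendsto_id.mono_right (inf_le_left : L ≤ _)
    simpa only [tendsto_prod_iff', id_eq] using hid
  choose! lam hlamQ hadjoint hsubgrad using fun p (hp : p ∈ S) => hp
  have hlam : Tendsto lam L (𝓝 lam₀) :=
    tendsto_multiplier_of_forall_exists_sub_normalCone (eq_univ_iff_forall.1 hStrict)
      (hF'.continuousAt.tendsto.comp hx) (hLS.mono hlamQ) (hv.congr' (hLS.mono hadjoint))
  refine (strictD2supp_add_le_liminf_secondDQ_comp hF hF' hF₀ ht hk hx hlam
    (hLS.mono fun p hp => ⟨hlamQ p hp, hsubgrad p hp⟩)).trans_eq (liminf_congr ?_)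
  filter_upwards [hLS] with p hp
  rw [← hadjoint p hp]

end ChainRule

theorem stmt6 {n m : ℕ} (Q : Set (EuclideanSpace ℝ (Fin m)))
    (hQne : Q.Nonempty) (hQc : IsClosed Q) (hQconv : Convex ℝ Q)
    (U : Set (EuclideanSpace ℝ (Fin n))) (hU : IsOpen U)
    (xbar : EuclideanSpace ℝ (Fin n)) (hxbar : xbar ∈ U)
    (F : EuclideanSpace ℝ (Fin n) → EuclideanSpace ℝ (Fin m))
    (F' : EuclideanSpace ℝ (Fin n) → (EuclideanSpace ℝ (Fin n) →L[ℝ] EuclideanSpace ℝ (Fin m)))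
    (F'' : EuclideanSpace ℝ (Fin n) →
      (EuclideanSpace ℝ (Fin n) →L[ℝ] EuclideanSpace ℝ (Fin n) →L[ℝ] EuclideanSpace ℝ (Fin m)))
    (hF' : ∀ x ∈ U, HasFDerivAt F (F' x) x)
    (hF'' : ∀ x ∈ U, HasFDerivAt F' (F'' x) x)
    (hF''cont : ContinuousOn F'' U)
    (hF0 : F xbar = 0)
    (lambar : EuclideanSpace ℝ (Fin m)) (hlambar : lambar ∈ Q)
    (hRob : (0 : EuclideanSpace ℝ (Fin m)) ∈
      interior {z | ∃ h : EuclideanSpace ℝ (Fin n), ∃ y : EuclideanSpace ℝ (Fin m),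
        supportFn Q y ≠ ⊤ ∧ z = F' xbar h - y})
    (hStrict : {z | ∃ h : EuclideanSpace ℝ (Fin n), ∃ v ∈ normalCone Q lambar,
        z = F' xbar h - v} = Set.univ) :
    ∀ h : EuclideanSpace ℝ (Fin n),
      strictD2phi Q F F' xbar (ContinuousLinearMap.adjoint (F' xbar) lambar) h ≥
        strictD2supp Q lambar (F' xbar h) + ((⟪lambar, F'' xbar h h⟫_ℝ : ℝ) : EReal) := by
  have hUnhds : U ∈ 𝓝 xbar := hU.mem_nhds hxbar
  exact stmt6_general (eventually_of_mem hUnhds hF')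
    (hasStrictFDerivAt_of_hasFDerivAt_of_continuousAt (eventually_of_mem hUnhds hF'')
      (hF''cont.continuousAt hUnhds)) hF0 hStrict

end
end

section
/- Let Q ⊆ ℝ^m be a nonempty closed convex set, let U be an open neighborhood of x̄ ∈ ℝⁿ, let F : U → ℝ^m be twice continuously differentiable with F(x̄) = 0, and let λ̄ ∈ Q. Assume Robinson's constraint qualification 0 ∈ int{DF(x̄)h − y : h ∈ ℝⁿ, y ∈ ℝ^m with σ_Q(y) < +∞} and the strict constraint qualification {DF(x̄)h − v : h ∈ ℝⁿ, v ∈ N_Q(λ̄)} = ℝ^m. Set φ(x) = σ_Q(F(x)) for x ∈ U. Then for every h ∈ ℝⁿ with DF(x̄)h ∈ aff(N_Q(λ̄)) one has d²_s φ(x̄ | DF(x̄)ᵀλ̄)(h) = ⟨λ̄, D²F(x̄)[h,h]⟩ and d²_s σ_Q(0|λ̄)(DF(x̄)h) = 0. -/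
open Filter Topology Set
open scoped InnerProductSpace

noncomputable section

/-!
Write `N` for the normal cone of `Q` at `λ̄`, `A` for `DF(x̄)`, and `T` for the second-order
Taylor quotient `(2 / t²)(F(x + t k) - F(x) - t DF(x) k)`, which tends to `D²F(x̄)[h, h]` jointly
as `t → 0`, `k → h` and `x → x̄`.

Lower bound: if `σ_Q(F x) = ⟨λ, F x⟩` with `λ ∈ Q`, then `σ_Q ≥ ⟨λ, ·⟩` gives
`Δ²_t φ(x | DF(x)ᵀλ)(k) ≥ ⟨λ, T⟩`. By the strict constraint qualification, `Aᵀ` vanishes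
at no nonzero point of the dual cone of `N`, which contains every `λ̄ - λ`; by compactness of the
unit sphere, `DF(x)ᵀλ → Aᵀλ̄` forces `λ → λ̄`, so the bound tends to `⟨λ̄, D²F(x̄)[h, h]⟩`.

Upper bound: on `N` the support function is the linear form `⟨λ̄, ·⟩`. Choose `k` such that both
`A k` and `A (k + h)` lie in the relative interior of `N`. The implicit function theorem modulo
`span N` provides curves through `x̄` with velocities `k` and `k + h` that `F` maps into `N`, and
along this pair of curves the difference quotient equals `⟨λ̄, T⟩`.

The claim about `σ_Q` is the case `F = id`.
-/

section Liminf

variable {ι κ R : Type*} [CompleteLinearOrder R] [TopologicalSpace R] [OrderTopology R]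
  {f : ι → R} {l : Filter ι} {a : R}

theorem liminf_le_of_tendsto_comp {l' : Filter κ} [l'.NeBot] {g : κ → ι} (hg : Tendsto g l' l)
    (hf : Tendsto (fun i => f (g i)) l' (𝓝 a)) : liminf f l ≤ a :=
  hf.liminf_eq ▸ liminf_le_liminf_of_le hg

theorem le_liminf_of_tendsto_of_eventually_le {g : ι → R} (hg : Tendsto g l (𝓝 a))
    (hgf : ∀ᶠ i in l, g i ≤ f i) : a ≤ liminf f l := by
  rcases l.eq_or_neBot with rfl | _
  · simp only [liminf_bot, le_top]
  · exact hg.liminf_eq ▸ liminf_le_liminf hgf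

end Liminf

section StrictTaylor

variable {E G : Type*} [NormedAddCommGroup E] [NormedSpace ℝ E] [NormedAddCommGroup G]
  [NormedSpace ℝ G] {f : E → G} {f' : E → E →L[ℝ] G} {B : E →L[ℝ] E →L[ℝ] G} {x₀ : E}

theorem norm_sub_taylor_two_le_of_convex {s : Set E} (hs : Convex ℝ s)
    (hf : ∀ y ∈ s, HasFDerivWithinAt f (f' y) s y) {x k : E} (hx : x ∈ s) (hxk : x + k ∈ s)
    {c : ℝ} (hc : 0 ≤ c) (hB : ∀ y ∈ s, ‖f' y - f' x - B (y - x)‖ ≤ c * ‖y - x‖) :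
    ‖f (x + k) - f x - f' x k - (1 / 2 : ℝ) • B k k‖ ≤ c * ‖k‖ ^ 2 := by
  set g : ℝ → G := fun s => f (x + s • k) - s • f' x k - (s ^ 2 / 2) • B k k with hg
  have segment_mem : ∀ r ∈ Icc (0 : ℝ) 1, x + r • k ∈ s := fun r hr =>
    hs.add_smul_mem hx hxk hr
  have hasDeriv_g : ∀ r ∈ Icc (0 : ℝ) 1, HasDerivWithinAt g
      ((f' (x + r • k) - f' x - B (x + r • k - x)) k) (Icc 0 1) r := by
    intro r hr
    have hline : HasDerivWithinAt (fun r : ℝ => x + r • k) k (Icc 0 1) r := by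
      simpa using (((hasDerivAt_id r).smul_const k).const_add x).hasDerivWithinAt
    have hlin : HasDerivAt (fun r : ℝ => r • f' x k) (f' x k) r := by
      simpa using (hasDerivAt_id r).smul_const (f' x k)
    have hquad : HasDerivAt (fun r : ℝ => (r ^ 2 / 2) • B k k) (r • B k k) r := by
      simpa using ((hasDerivAt_pow 2 r).div_const 2).smul_const (B k k)
    refine ((((hf _ (segment_mem r hr)).comp_hasDerivWithinAt r hline segment_mem).sub
      hlin.hasDerivWithinAt).sub hquad.hasDerivWithinAt).congr_deriv ?_
    simp
  have norm_deriv_le : ∀ r ∈ Ico (0 : ℝ) 1,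
      ‖(f' (x + r • k) - f' x - B (x + r • k - x)) k‖ ≤ c * ‖k‖ ^ 2 := by
    intro r hr
    have hrk : ‖x + r • k - x‖ ≤ ‖k‖ := by
      rw [add_sub_cancel_left, norm_smul, Real.norm_of_nonneg hr.1]
      exact mul_le_of_le_one_left (norm_nonneg k) hr.2.le
    calc ‖(f' (x + r • k) - f' x - B (x + r • k - x)) k‖
        ≤ ‖f' (x + r • k) - f' x - B (x + r • k - x)‖ * ‖k‖ := ContinuousLinearMap.le_opNorm _ _
      _ ≤ c * ‖x + r • k - x‖ * ‖k‖ := by gcongr; exact hB _ (segment_mem r ⟨hr.1, hr.2.le⟩)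
      _ ≤ c * ‖k‖ * ‖k‖ := by gcongr
      _ = c * ‖k‖ ^ 2 := by ring
  have increment_g : g 1 - g 0 = f (x + k) - f x - f' x k - (1 / 2 : ℝ) • B k k := by
    simp only [hg, one_smul, zero_smul, add_zero, one_pow, ne_eq, OfNat.ofNat_ne_zero,
      not_false_eq_true, zero_pow, zero_div, sub_zero]
    abel
  exact increment_g ▸ norm_image_sub_le_of_norm_deriv_le_segment_01' hasDeriv_g norm_deriv_le

theorem isLittleO_sub_taylor_two_of_hasStrictFDerivAt (hf : ∀ᶠ x in 𝓝 x₀, HasFDerivAt f (f' x) x)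
    (hf' : HasStrictFDerivAt f' B x₀) :
    (fun p : E × E => f p.1 - f p.2 - f' p.2 (p.1 - p.2) -
      (1 / 2 : ℝ) • B (p.1 - p.2) (p.1 - p.2)) =o[𝓝 (x₀, x₀)] fun p => ‖p.1 - p.2‖ ^ 2 := by
  refine Asymptotics.isLittleO_iff.2 fun c hc => ?_
  have hB := hf'.isLittleO.def hc
  have hdiff : ∀ᶠ p : E × E in 𝓝 (x₀, x₀), HasFDerivAt f (f' p.1) p.1 :=
    (continuous_fst.tendsto (x₀, x₀)).eventually hf
  obtain ⟨ρ, hρ, hball⟩ := Metric.eventually_nhds_iff_ball.1 (hB.and hdiff)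
  simp only [← ball_prod_same, Set.mem_prod, Prod.forall] at hball
  filter_upwards [Metric.ball_mem_nhds (x₀, x₀) hρ] with p hp
  obtain ⟨hy, hx⟩ : p.1 ∈ Metric.ball x₀ ρ ∧ p.2 ∈ Metric.ball x₀ ρ := by
    rwa [← ball_prod_same] at hp
  have h := norm_sub_taylor_two_le_of_convex (k := p.1 - p.2) (convex_ball x₀ ρ)
    (fun y hy => (hball y p.2 ⟨hy, hx⟩).2.hasFDerivWithinAt) hx (by rwa [add_sub_cancel])
    hc.le (fun y hy => (hball y p.2 ⟨hy, hx⟩).1)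
  simpa only [add_sub_cancel, norm_pow, norm_norm] using h

theorem tendsto_second_order_quotient_of_hasStrictFDerivAt
    (hf : ∀ᶠ x in 𝓝 x₀, HasFDerivAt f (f' x) x) (hf' : HasStrictFDerivAt f' B x₀)
    {ι : Type*} {l : Filter ι} {t : ι → ℝ} {k x : ι → E} {h : E}
    (ht : Tendsto t l (𝓝[≠] 0)) (hk : Tendsto k l (𝓝 h)) (hx : Tendsto x l (𝓝 x₀)) :
    Tendsto (fun i => (2 / t i ^ 2) • (f (x i + t i • k i) - f (x i) - t i • f' (x i) (k i))) l
      (𝓝 (B h h)) := by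
  set R : ι → G := fun i => f (x i + t i • k i) - f (x i) - f' (x i) (t i • k i) -
    (1 / 2 : ℝ) • B (t i • k i) (t i • k i) with hR
  have htk : Tendsto (fun i => x i + t i • k i) l (𝓝 x₀) := by
    simpa using hx.add ((tendsto_nhds_of_tendsto_nhdsWithin ht).smul hk)
  have remainder_isLittleO : R =o[l] fun i => t i ^ 2 := by
    have h₁ : R =o[l] fun i => ‖t i • k i‖ ^ 2 := by
      simpa only [Function.comp_def, add_sub_cancel_left] using
        (isLittleO_sub_taylor_two_of_hasStrictFDerivAt hf hf').comp_tendsto (htk.prodMk_nhds hx)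
    have h₂ : (fun i => t i • k i) =O[l] t := by
      simpa using (Asymptotics.isBigO_refl t l).smul (hk.isBigO_one ℝ)
    exact h₁.trans_isBigO (h₂.norm_left.pow 2)
  have remainder_tendsto : Tendsto (fun i => (2 : ℝ) • (t i ^ 2)⁻¹ • R i) l (𝓝 0) := by
    simpa using remainder_isLittleO.tendsto_inv_smul_nhds_zero.const_smul (2 : ℝ)
  have hBk : Tendsto (fun i => B (k i) (k i)) l (𝓝 (B h h)) :=
    ((B.continuous.clm_apply continuous_id).tendsto h).comp hk
  refine (zero_add (B h h) ▸ remainder_tendsto.add hBk).congr' ?_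
  filter_upwards [ht.eventually self_mem_nhdsWithin] with i hi
  have hti : t i ≠ 0 := hi
  simp only [hR, map_smul, smul_apply]
  match_scalars <;> (field_simp; try ring)

end StrictTaylor

section CurvesInFibres

variable {𝕜 : Type*} [NontriviallyNormedField 𝕜] [CompleteSpace 𝕜] {E G : Type*}
  [NormedAddCommGroup E] [NormedSpace 𝕜 E] [CompleteSpace E] [NormedAddCommGroup G]
  [NormedSpace 𝕜 G] [FiniteDimensional 𝕜 G] {f : E → G} {f' : E →L[𝕜] G} {x k : E}

theorem exists_hasDerivAt_eventually_map_eq (hf : HasStrictFDerivAt f f' x)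
    (hf' : f'.range = ⊤) (hk : f' k = 0) :
    ∃ γ : 𝕜 → E, HasDerivAt γ k 0 ∧ γ 0 = x ∧ ∀ᶠ t in 𝓝 0, f (γ t) = f x := by
  let κ : f'.ker := ⟨k, hk⟩
  have line_tendsto : Tendsto (fun t : 𝕜 => (f x, t • κ)) (𝓝 0) (𝓝 (f x, 0)) := by
    simpa using (by fun_prop : Continuous fun t : 𝕜 => (f x, t • κ)).tendsto 0
  refine ⟨fun t => hf.implicitFunction f f' hf' (f x) (t • κ), ?_, ?_,
    line_tendsto.eventually (hf.map_implicitFunction_eq hf')⟩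
  · have hline : HasDerivAt (fun t : 𝕜 => t • κ) κ 0 := by
      simpa using (hasDerivAt_id (0 : 𝕜)).smul_const κ
    have himplicit := (hf.to_implicitFunction hf').hasFDerivAt
    rw [← zero_smul 𝕜 κ] at himplicit
    exact himplicit.comp_hasDerivAt 0 hline
  · simp only [zero_smul, hf.implicitFunction_apply_image hf']

theorem exists_hasDerivAt_eventually_map_mem_submodule (hf : HasStrictFDerivAt f f' x)
    {L : Submodule 𝕜 G} (hL : ∀ z, ∃ h, f' h - z ∈ L) (hx : f x ∈ L) (hk : f' k ∈ L) :
    ∃ γ : 𝕜 → E, HasDerivAt γ k 0 ∧ γ 0 = x ∧ ∀ᶠ t in 𝓝 0, f (γ t) ∈ L := by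
  have : IsClosed (L : Set G) := L.closed_of_finiteDimensional
  have hrange : (L.mkQL.comp f').range = ⊤ := by
    refine LinearMap.range_eq_top.2 fun q => ?_
    obtain ⟨z, rfl⟩ := L.mkQ_surjective q
    obtain ⟨h, hh⟩ := hL z
    exact ⟨h, (Submodule.Quotient.eq L).2 hh⟩
  obtain ⟨γ, hγ, hγ0, hγL⟩ := exists_hasDerivAt_eventually_map_eq (k := k)
    (L.mkQL.hasStrictFDerivAt.comp x hf) hrange ((Submodule.Quotient.mk_eq_zero L).2 hk)
  refine ⟨γ, hγ, hγ0, hγL.mono fun t ht => ?_⟩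
  exact (Submodule.Quotient.mk_eq_zero L).1 (ht.trans ((Submodule.Quotient.mk_eq_zero L).2 hx))

end CurvesInFibres

section PointedCone

open Submodule

variable {G : Type*} [AddCommGroup G] [Module ℝ G] (C : PointedCone ℝ G)

theorem coe_affineSpan_pointedCone :
    (affineSpan ℝ (C : Set G) : Set G) = span ℝ (C : Set G) := by
  rw [← affineSpan_insert_zero, insert_eq_of_mem C.zero_mem]

variable {C} in
theorem exists_sub_eq_of_mem_span_pointedCone {w : G} (hw : w ∈ span ℝ (C : Set G)) :
    ∃ a ∈ C, ∃ b ∈ C, a - b = w := by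
  induction hw using span_induction with
  | mem x hx => exact ⟨x, hx, 0, C.zero_mem, sub_zero x⟩
  | zero => exact ⟨0, C.zero_mem, 0, C.zero_mem, sub_zero 0⟩
  | add x y _ _ hx hy =>
    obtain ⟨a, ha, b, hb, rfl⟩ := hx
    obtain ⟨a', ha', b', hb', rfl⟩ := hy
    exact ⟨a + a', C.add_mem ha ha', b + b', C.add_mem hb hb', add_sub_add_comm a a' b b'⟩
  | smul t x _ hx =>
    obtain ⟨a, ha, b, hb, rfl⟩ := hx
    rcases le_total 0 t with ht | ht
    · exact ⟨t • a, C.smul_mem ht ha, t • b, C.smul_mem ht hb, (smul_sub t a b).symm⟩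
    · have ht' : 0 ≤ -t := neg_nonneg.2 ht
      exact ⟨-t • b, C.smul_mem ht' hb, -t • a, C.smul_mem ht' ha, by module⟩

end PointedCone

section RelativeInterior

open Submodule

variable {G : Type*} [NormedAddCommGroup G] [NormedSpace ℝ G] {C : PointedCone ℝ G}

theorem mem_intrinsicInterior_pointedCone_iff {r : G} :
    r ∈ intrinsicInterior ℝ (C : Set G) ↔
      r ∈ span ℝ (C : Set G) ∧ (C : Set G) ∈ 𝓝[span ℝ (C : Set G)] r := by
  rw [← SetLike.mem_coe (p := span ℝ (C : Set G)), ← coe_affineSpan_pointedCone,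
    mem_intrinsicInterior]
  constructor
  · rintro ⟨y, hy, rfl⟩
    exact ⟨y.2, map_nhds_subtype_val y ▸ mem_interior_iff_mem_nhds.1 hy⟩
  · rintro ⟨hr, hC⟩
    rw [← map_nhds_subtype_val ⟨r, hr⟩] at hC
    exact ⟨⟨r, hr⟩, mem_interior_iff_mem_nhds.2 hC, rfl⟩

theorem add_mem_intrinsicInterior_pointedCone {r c : G}
    (hr : r ∈ intrinsicInterior ℝ (C : Set G)) (hc : c ∈ C) :
    r + c ∈ intrinsicInterior ℝ (C : Set G) := by
  obtain ⟨hrL, hrC⟩ := mem_intrinsicInterior_pointedCone_iff.1 hr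
  have hcL : c ∈ span ℝ (C : Set G) := subset_span hc
  refine mem_intrinsicInterior_pointedCone_iff.2 ⟨add_mem hrL hcL, ?_⟩
  have sub_tendsto : Tendsto (· - c) (𝓝[span ℝ (C : Set G)] (r + c))
      (𝓝[span ℝ (C : Set G)] r) := by
    have h := (continuous_sub_right c).continuousWithinAt (s := span ℝ (C : Set G)) (x := r + c)
      |>.tendsto_nhdsWithin (t := span ℝ (C : Set G)) fun z hz => sub_mem hz hcL
    rwa [add_sub_cancel_right] at h
  filter_upwards [sub_tendsto hrC] with z hz
  simpa only [sub_add_cancel, SetLike.mem_coe] using C.add_mem hz hc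

theorem eventually_mem_pointedCone_of_hasDerivAt {g : ℝ → G} {g' : G} (hg : HasDerivAt g g' 0)
    (hg0 : g 0 = 0) (hgL : ∀ᶠ t in 𝓝 0, g t ∈ span ℝ (C : Set G))
    (hg' : g' ∈ intrinsicInterior ℝ (C : Set G)) : ∀ᶠ t in 𝓝[>] 0, g t ∈ C := by
  have slope_tendsto : Tendsto (fun t => t⁻¹ • g t) (𝓝[>] 0) (𝓝[span ℝ (C : Set G)] g') := by
    refine tendsto_nhdsWithin_iff.2 ⟨?_, ?_⟩
    · simpa only [zero_add, hg0, sub_zero] using hg.tendsto_slope_zero_right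
    · filter_upwards [nhdsWithin_le_nhds hgL] with t ht using smul_mem _ _ ht
  filter_upwards [slope_tendsto (mem_intrinsicInterior_pointedCone_iff.1 hg').2,
    self_mem_nhdsWithin] with t ht (htpos : 0 < t)
  simpa only [smul_inv_smul₀ htpos.ne'] using C.smul_mem htpos.le ht

end RelativeInterior

section ConstraintQualification

open Submodule

variable {E G : Type*} [NormedAddCommGroup E] [NormedSpace ℝ E] [NormedAddCommGroup G]
  [NormedSpace ℝ G] [FiniteDimensional ℝ G] {C : PointedCone ℝ G} {A : E →L[ℝ] G}

theorem exists_map_mem_and_map_add_mem_intrinsicInterior (hA : ∀ z, ∃ k, A k - z ∈ C) {h : E}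
    (hh : A h ∈ span ℝ (C : Set G)) :
    ∃ k, A k ∈ intrinsicInterior ℝ (C : Set G) ∧
      A (k + h) ∈ intrinsicInterior ℝ (C : Set G) := by
  obtain ⟨a, ha, b, hb, hab⟩ := exists_sub_eq_of_mem_span_pointedCone hh
  obtain ⟨r, hr⟩ := Set.Nonempty.intrinsicInterior C.convex ⟨0, C.zero_mem⟩
  obtain ⟨k, hk⟩ := hA (r + b)
  have hAk : A k = r + (b + (A k - (r + b))) := by abel
  have hAkh : A (k + h) = r + (a + (A k - (r + b))) := by rw [map_add, ← hab]; abel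
  refine ⟨k, ?_, ?_⟩
  · exact hAk ▸ add_mem_intrinsicInterior_pointedCone hr (C.add_mem hb hk)
  · exact hAkh ▸ add_mem_intrinsicInterior_pointedCone hr (C.add_mem ha hk)

theorem exists_hasDerivAt_eventually_map_mem_pointedCone [CompleteSpace E] {F : E → G} {x k : E}
    (hF : HasStrictFDerivAt F A x) (hFx : F x = 0) (hA : ∀ z, ∃ k, A k - z ∈ C)
    (hk : A k ∈ intrinsicInterior ℝ (C : Set G)) :
    ∃ γ : ℝ → E, HasDerivAt γ k 0 ∧ γ 0 = x ∧ ∀ᶠ t in 𝓝[>] 0, F (γ t) ∈ C := by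
  have hAspan : ∀ z, ∃ k, A k - z ∈ span ℝ (C : Set G) := fun z =>
    (hA z).imp fun _ hk => subset_span hk
  obtain ⟨γ, hγ, hγ0, hγL⟩ := exists_hasDerivAt_eventually_map_mem_submodule hF hAspan
    (hFx ▸ zero_mem _) (mem_intrinsicInterior_pointedCone_iff.1 hk).1
  refine ⟨γ, hγ, hγ0, eventually_mem_pointedCone_of_hasDerivAt ?_ ?_ hγL hk⟩
  · exact HasFDerivAt.comp_hasDerivAt 0 (hγ0 ▸ hF.hasFDerivAt) hγ
  · simp only [hγ0, hFx]

end ConstraintQualification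

section Multipliers

variable {E G : Type*}

theorem exists_pos_eventually_forall_mem_mul_norm_le [NormedAddCommGroup E] [NormedSpace ℝ E]
    [NormedAddCommGroup G] [NormedSpace ℝ G] [ProperSpace G] {K : ProperCone ℝ G} {T : G →L[ℝ] E}
    (hT : ∀ d ∈ K, T d = 0 → d = 0) :
    ∃ c > 0, ∀ᶠ S in 𝓝 T, ∀ d ∈ K, c * ‖d‖ ≤ ‖S d‖ := by
  have hcompact : IsCompact (Metric.sphere (0 : G) 1 ∩ K) :=
    (isCompact_sphere 0 1).inter_right K.isClosed
  obtain ⟨c, hc, hcT⟩ := hcompact.exists_forall_le' (f := fun d => ‖T d‖) (a := 0)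
    (by fun_prop) fun d hd => norm_pos_iff.2 fun hTd => by simpa [hT d hd.2 hTd] using hd.1
  have bound_T : ∀ d ∈ K, c * ‖d‖ ≤ ‖T d‖ := by
    intro d hd
    rcases eq_or_ne d 0 with rfl | hd0
    · simp
    have h := hcT (‖d‖⁻¹ • d) ⟨by simp [norm_smul, hd0], ProperCone.smul_mem K hd (by positivity)⟩
    rwa [map_smul, norm_smul, norm_inv, norm_norm, inv_mul_eq_div,
      le_div_iff₀ (norm_pos_iff.2 hd0)] at h
  refine ⟨c / 2, half_pos hc, ?_⟩
  filter_upwards [Metric.ball_mem_nhds T (half_pos hc)] with S hS d hd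
  rw [mem_ball_iff_norm'] at hS
  have hTS : ‖(T - S) d‖ ≤ c / 2 * ‖d‖ := (T - S).le_of_opNorm_le hS.le d
  have htri : ‖T d‖ ≤ ‖(T - S) d‖ + ‖S d‖ := by
    simpa using norm_add_le ((T - S) d) (S d)
  linarith [bound_T d hd]

variable [NormedAddCommGroup E] [InnerProductSpace ℝ E] [CompleteSpace E] [NormedAddCommGroup G]
  [InnerProductSpace ℝ G]

theorem continuous_adjoint_apply [CompleteSpace G] (μ : G) :
    Continuous fun A : E →L[ℝ] G => ContinuousLinearMap.adjoint A μ :=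
  ContinuousLinearMap.adjoint.continuous.clm_apply continuous_const

theorem eq_zero_of_mem_innerDual_of_adjoint_eq_zero [CompleteSpace G] {C : PointedCone ℝ G}
    {A : E →L[ℝ] G} (hA : ∀ z, ∃ k, A k - z ∈ C) {d : G}
    (hd : d ∈ ProperCone.innerDual (C : Set G))
    (hAd : ContinuousLinearMap.adjoint A d = 0) : d = 0 := by
  obtain ⟨k, hk⟩ := hA d
  have h : 0 ≤ ⟪A k - d, d⟫_ℝ := hd hk
  rw [inner_sub_left, ← ContinuousLinearMap.adjoint_inner_right, hAd, inner_zero_right,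
    zero_sub, neg_nonneg] at h
  exact real_inner_self_nonpos.1 h

theorem tendsto_of_tendsto_adjoint_apply [FiniteDimensional ℝ G] {C : PointedCone ℝ G}
    {A₀ : E →L[ℝ] G} (hA₀ : ∀ z, ∃ k, A₀ k - z ∈ C) {ι : Type*} {l : Filter ι}
    {A : ι → E →L[ℝ] G} {μ : ι → G} {μ₀ : G} (hA : Tendsto A l (𝓝 A₀))
    (hμ : ∀ᶠ i in l, μ₀ - μ i ∈ ProperCone.innerDual (C : Set G))
    (hAμ : Tendsto (fun i => ContinuousLinearMap.adjoint (A i) (μ i)) l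
      (𝓝 (ContinuousLinearMap.adjoint A₀ μ₀))) :
    Tendsto μ l (𝓝 μ₀) := by
  have hadj : Tendsto (fun i => ContinuousLinearMap.adjoint (A i)) l
      (𝓝 (ContinuousLinearMap.adjoint A₀)) :=
    (ContinuousLinearMap.adjoint.continuous.tendsto A₀).comp hA
  obtain ⟨c, hc, hbound⟩ := exists_pos_eventually_forall_mem_mul_norm_le
    fun d hd => eq_zero_of_mem_innerDual_of_adjoint_eq_zero hA₀ (d := d) hd
  have hadj₀ : Tendsto (fun i => ContinuousLinearMap.adjoint (A i) μ₀) l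
      (𝓝 (ContinuousLinearMap.adjoint A₀ μ₀)) :=
    ((continuous_adjoint_apply μ₀).tendsto A₀).comp hA
  have residual_tendsto :
      Tendsto (fun i => c⁻¹ * ‖ContinuousLinearMap.adjoint (A i) (μ₀ - μ i)‖) l (𝓝 0) := by
    simpa using (hadj₀.sub hAμ).norm.const_mul c⁻¹
  refine tendsto_iff_norm_sub_tendsto_zero.2 (squeeze_zero' (by simp) ?_ residual_tendsto)
  filter_upwards [hadj.eventually hbound, hμ] with i hi hμi
  rw [norm_sub_rev, inv_mul_eq_div, le_div_iff₀' hc]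
  exact hi _ hμi

end Multipliers

section SupportFunction

variable {m : ℕ} {Q : Set (EuclideanSpace ℝ (Fin m))} {lam x : EuclideanSpace ℝ (Fin m)}

/-- The normal cone `normalCone Q lam`, bundled as a pointed cone: it is the dual cone of
`lam - Q`. -/
def normalPointedCone (Q : Set (EuclideanSpace ℝ (Fin m))) (lam : EuclideanSpace ℝ (Fin m)) :
    PointedCone ℝ (EuclideanSpace ℝ (Fin m)) :=
  ProperCone.innerDual ((lam - ·) '' Q)

theorem coe_normalPointedCone (Q : Set (EuclideanSpace ℝ (Fin m)))
    (lam : EuclideanSpace ℝ (Fin m)) :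
    (normalPointedCone Q lam : Set (EuclideanSpace ℝ (Fin m))) = normalCone Q lam := by
  ext v
  change (∀ ⦃d⦄, d ∈ (lam - ·) '' Q → 0 ≤ ⟪d, v⟫_ℝ) ↔ ∀ y ∈ Q, ⟪v, y - lam⟫_ℝ ≤ 0
  refine Set.forall_mem_image.trans (forall₂_congr fun y _ => ?_)
  rw [real_inner_comm, ← neg_sub y lam, inner_neg_right, neg_nonneg]

theorem sub_mem_innerDual_normalPointedCone {y : EuclideanSpace ℝ (Fin m)} (hy : y ∈ Q) :
    lam - y ∈ ProperCone.innerDual (normalPointedCone Q lam : Set (EuclideanSpace ℝ (Fin m))) := by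
  intro v hv
  have h : 0 ≤ ⟪lam - y, v⟫_ℝ := hv (mem_image_of_mem _ hy)
  rwa [real_inner_comm] at h

theorem coe_inner_le_supportFn_s7 (hlam : lam ∈ Q) : ((⟪lam, x⟫_ℝ : ℝ) : EReal) ≤ supportFn Q x :=
  le_iSup₂ (f := fun z (_ : z ∈ Q) => ((⟪z, x⟫_ℝ : ℝ) : EReal)) lam hlam

theorem supportFn_eq_of_mem_normalPointedCone (hlam : lam ∈ Q) (hx : x ∈ normalPointedCone Q lam) :
    supportFn Q x = ((⟪lam, x⟫_ℝ : ℝ) : EReal) := by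
  refine le_antisymm (iSup₂_le fun z hz => ?_) (coe_inner_le_supportFn_s7 hlam)
  have h : 0 ≤ ⟪lam - z, x⟫_ℝ := hx (mem_image_of_mem _ hz)
  rw [inner_sub_left, sub_nonneg] at h
  exact_mod_cast h

end SupportFunction

section StrictSecondSubderivative

variable {n m : ℕ} {Q : Set (EuclideanSpace ℝ (Fin m))}
  {F : EuclideanSpace ℝ (Fin n) → EuclideanSpace ℝ (Fin m)}
  {A : EuclideanSpace ℝ (Fin n) →L[ℝ] EuclideanSpace ℝ (Fin m)}
  {F' : EuclideanSpace ℝ (Fin n) → EuclideanSpace ℝ (Fin n) →L[ℝ] EuclideanSpace ℝ (Fin m)}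
  {B : EuclideanSpace ℝ (Fin n) →L[ℝ] EuclideanSpace ℝ (Fin n) →L[ℝ] EuclideanSpace ℝ (Fin m)}
  {lam : EuclideanSpace ℝ (Fin m)} {x h : EuclideanSpace ℝ (Fin n)} {t : ℝ}

theorem coe_inner_second_order_quotient :
    ((⟪lam, (2 / t ^ 2) • (F (x + t • h) - F x - t • A h)⟫_ℝ : ℝ) : EReal) =
      secondDQ (fun y => ((⟪lam, F y⟫_ℝ : ℝ) : EReal)) x
        (ContinuousLinearMap.adjoint A lam) t h := by
  simp only [secondDQ, ← EReal.coe_sub, ← EReal.coe_mul, inner_smul_right, inner_sub_right,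
    ContinuousLinearMap.adjoint_inner_left]

theorem secondDQ_le_secondDQ {f g : EuclideanSpace ℝ (Fin n) → EReal}
    {v : EuclideanSpace ℝ (Fin n)} (hx : f x = g x) (hxt : f (x + t • h) ≤ g (x + t • h)) :
    secondDQ f x v t h ≤ secondDQ g x v t h := by
  unfold secondDQ
  rw [hx]
  refine mul_le_mul_of_nonneg_left ?_ (EReal.coe_nonneg.2 (by positivity))
  exact EReal.sub_le_sub (EReal.sub_le_sub hxt le_rfl) le_rfl

theorem secondDQ_congr {f g : EuclideanSpace ℝ (Fin n) → EReal}
    {v : EuclideanSpace ℝ (Fin n)} (hx : f x = g x) (hxt : f (x + t • h) = g (x + t • h)) :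
    secondDQ f x v t h = secondDQ g x v t h := by
  simp only [secondDQ, hx, hxt]

variable {lambar : EuclideanSpace ℝ (Fin m)} {xbar : EuclideanSpace ℝ (Fin n)}

theorem coe_inner_le_strictD2phi (hF' : ∀ᶠ x in 𝓝 xbar, HasFDerivAt F (F' x) x)
    (hF'' : HasStrictFDerivAt F' B xbar)
    (hA : ∀ z, ∃ k, F' xbar k - z ∈ normalPointedCone Q lambar) :
    ((⟪lambar, B h h⟫_ℝ : ℝ) : EReal) ≤
      strictD2phi Q F F' xbar (ContinuousLinearMap.adjoint (F' xbar) lambar) h := by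
  unfold strictD2phi
  set S := {p : ℝ × EuclideanSpace ℝ (Fin n) × EuclideanSpace ℝ (Fin n) ×
    EuclideanSpace ℝ (Fin n) | ∃ lam ∈ Q, p.2.2.2 = ContinuousLinearMap.adjoint (F' p.2.2.1) lam ∧
      supportFn Q (F p.2.2.1) = ((⟪lam, F p.2.2.1⟫_ℝ : ℝ) : EReal)}
  set l := 𝓝[>] (0 : ℝ) ×ˢ (𝓝 h ×ˢ
    (𝓝 xbar ×ˢ 𝓝 (ContinuousLinearMap.adjoint (F' xbar) lambar))) ⊓ 𝓟 S
  obtain ⟨ht, hk, hx, hv⟩ : Tendsto (·.1) l (𝓝[>] 0) ∧ Tendsto (·.2.1) l (𝓝 h) ∧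
      Tendsto (·.2.2.1) l (𝓝 xbar) ∧
      Tendsto (·.2.2.2) l (𝓝 (ContinuousLinearMap.adjoint (F' xbar) lambar)) := by
    simpa only [tendsto_prod_iff', id] using (tendsto_id.mono_left inf_le_left : Tendsto id l _)
  have hS : ∀ᶠ p in l, p ∈ S := mem_inf_of_right (mem_principal_self S)
  choose! lam hlamQ hlam_adj hlam_supp using fun p (hp : p ∈ S) => hp
  have lam_tendsto : Tendsto lam l (𝓝 lambar) := by
    refine tendsto_of_tendsto_adjoint_apply hA (hF''.continuousAt.tendsto.comp hx) ?_ ?_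
    · exact hS.mono fun p hp => sub_mem_innerDual_normalPointedCone (hlamQ p hp)
    · exact hv.congr' (hS.mono hlam_adj)
  have taylor_tendsto := tendsto_second_order_quotient_of_hasStrictFDerivAt hF' hF''
    (ht.mono_right (nhdsGT_le_nhdsNE 0)) hk hx
  refine le_liminf_of_tendsto_of_eventually_le
    ((continuous_coe_real_ereal.tendsto _).comp (lam_tendsto.inner taylor_tendsto)) ?_
  filter_upwards [hS] with p hp
  rw [Function.comp_apply, coe_inner_second_order_quotient, hlam_adj p hp]
  exact secondDQ_le_secondDQ (hlam_supp p hp).symm (coe_inner_le_supportFn_s7 (hlamQ p hp))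

theorem strictD2phi_le_of_curves (hF' : ∀ᶠ x in 𝓝 xbar, HasFDerivAt F (F' x) x)
    (hF'' : HasStrictFDerivAt F' B xbar) (hlambar : lambar ∈ Q)
    {γ η : ℝ → EuclideanSpace ℝ (Fin n)} {k : EuclideanSpace ℝ (Fin n)}
    (hγ : HasDerivAt γ k 0) (hη : HasDerivAt η (k + h) 0) (hγ0 : γ 0 = xbar) (hη0 : η 0 = xbar)
    (hγC : ∀ᶠ t in 𝓝[>] 0, F (γ t) ∈ normalPointedCone Q lambar)
    (hηC : ∀ᶠ t in 𝓝[>] 0, F (η t) ∈ normalPointedCone Q lambar) :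
    strictD2phi Q F F' xbar (ContinuousLinearMap.adjoint (F' xbar) lambar) h ≤
      ((⟪lambar, B h h⟫_ℝ : ℝ) : EReal) := by
  have γ_tendsto : Tendsto γ (𝓝[>] 0) (𝓝 xbar) :=
    hγ0 ▸ hγ.continuousAt.tendsto.mono_left nhdsWithin_le_nhds
  have direction_tendsto : Tendsto (fun t => t⁻¹ • (η t - γ t)) (𝓝[>] 0) (𝓝 h) := by
    simpa only [zero_add, Pi.sub_apply, hγ0, hη0, sub_self, sub_zero, add_sub_cancel_left] using
      (hη.sub hγ).tendsto_slope_zero_right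
  have adjoint_tendsto : Tendsto (fun t => ContinuousLinearMap.adjoint (F' (γ t)) lambar) (𝓝[>] 0)
      (𝓝 (ContinuousLinearMap.adjoint (F' xbar) lambar)) :=
    ((continuous_adjoint_apply lambar).tendsto _).comp (hF''.continuousAt.tendsto.comp γ_tendsto)
  have taylor_tendsto := tendsto_second_order_quotient_of_hasStrictFDerivAt hF' hF''
    (tendsto_id.mono_right (nhdsGT_le_nhdsNE 0)) direction_tendsto γ_tendsto
  refine liminf_le_of_tendsto_comp (l' := 𝓝[>] (0 : ℝ)) (g := fun t =>
    (t, t⁻¹ • (η t - γ t), γ t, ContinuousLinearMap.adjoint (F' (γ t)) lambar)) ?_ ?_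
  · refine tendsto_inf.2 ⟨tendsto_id.prodMk (direction_tendsto.prodMk
      (γ_tendsto.prodMk adjoint_tendsto)), tendsto_principal.2 ?_⟩
    filter_upwards [hγC] with t ht
    exact ⟨lambar, hlambar, rfl, supportFn_eq_of_mem_normalPointedCone hlambar ht⟩
  · refine ((continuous_coe_real_ereal.tendsto _).comp
      (tendsto_const_nhds.inner taylor_tendsto)).congr' ?_
    filter_upwards [hγC, hηC, self_mem_nhdsWithin] with t htγ htη (ht : 0 < t)
    have hγη : γ t + t • t⁻¹ • (η t - γ t) = η t := by
      rw [smul_inv_smul₀ ht.ne', add_sub_cancel]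
    rw [Function.comp_apply, id, coe_inner_second_order_quotient]
    refine secondDQ_congr (supportFn_eq_of_mem_normalPointedCone hlambar htγ).symm ?_
    exact (supportFn_eq_of_mem_normalPointedCone hlambar (by rwa [hγη])).symm

theorem strictD2phi_eq_coe_inner (hF' : ∀ᶠ x in 𝓝 xbar, HasFDerivAt F (F' x) x)
    (hF'' : HasStrictFDerivAt F' B xbar) (hF0 : F xbar = 0) (hlambar : lambar ∈ Q)
    (hA : ∀ z, ∃ k, F' xbar k - z ∈ normalPointedCone Q lambar)
    (hh : F' xbar h ∈ affineSpan ℝ (normalCone Q lambar)) :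
    strictD2phi Q F F' xbar (ContinuousLinearMap.adjoint (F' xbar) lambar) h =
      ((⟪lambar, B h h⟫_ℝ : ℝ) : EReal) := by
  refine le_antisymm ?_ (coe_inner_le_strictD2phi hF' hF'' hA)
  rw [← coe_normalPointedCone, ← SetLike.mem_coe, coe_affineSpan_pointedCone] at hh
  have hF : HasStrictFDerivAt F (F' xbar) xbar :=
    hasStrictFDerivAt_of_hasFDerivAt_of_continuousAt hF' hF''.continuousAt
  obtain ⟨k, hk, hkh⟩ := exists_map_mem_and_map_add_mem_intrinsicInterior hA hh
  obtain ⟨γ, hγ, hγ0, hγC⟩ := exists_hasDerivAt_eventually_map_mem_pointedCone hF hF0 hA hk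
  obtain ⟨η, hη, hη0, hηC⟩ := exists_hasDerivAt_eventually_map_mem_pointedCone hF hF0 hA hkh
  exact strictD2phi_le_of_curves hF' hF'' hlambar hγ hη hγ0 hη0 hγC hηC

theorem strictD2supp_eq_strictD2phi_id (Q : Set (EuclideanSpace ℝ (Fin m)))
    (lam w : EuclideanSpace ℝ (Fin m)) :
    strictD2supp Q lam w = strictD2phi Q id (fun _ => .id ℝ _) 0 lam w := by
  simp only [strictD2supp, strictD2phi, id, ContinuousLinearMap.adjoint_id,
    ContinuousLinearMap.id_apply, ↓existsAndEq, true_and]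

theorem strictD2supp_eq_zero {w : EuclideanSpace ℝ (Fin m)} (hlambar : lambar ∈ Q)
    (hw : w ∈ affineSpan ℝ (normalCone Q lambar)) : strictD2supp Q lambar w = 0 := by
  have h := strictD2phi_eq_coe_inner (B := 0) (xbar := 0) (F := id) (h := w)
    (F' := fun _ => .id ℝ (EuclideanSpace ℝ (Fin m))) (.of_forall fun x => hasFDerivAt_id x)
    (hasStrictFDerivAt_const _ _) rfl hlambar
    (fun z => ⟨z, by simp⟩) hw
  simpa [strictD2supp_eq_strictD2phi_id, ContinuousLinearMap.adjoint_id] using h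

end StrictSecondSubderivative

theorem stmt7_general {n m : ℕ} {Q : Set (EuclideanSpace ℝ (Fin m))}
    {F : EuclideanSpace ℝ (Fin n) → EuclideanSpace ℝ (Fin m)}
    {F' : EuclideanSpace ℝ (Fin n) → EuclideanSpace ℝ (Fin n) →L[ℝ] EuclideanSpace ℝ (Fin m)}
    {B : EuclideanSpace ℝ (Fin n) →L[ℝ] EuclideanSpace ℝ (Fin n) →L[ℝ] EuclideanSpace ℝ (Fin m)}
    {xbar : EuclideanSpace ℝ (Fin n)} {lambar : EuclideanSpace ℝ (Fin m)}
    (hF' : ∀ᶠ x in 𝓝 xbar, HasFDerivAt F (F' x) x) (hF'' : HasStrictFDerivAt F' B xbar)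
    (hF0 : F xbar = 0) (hlambar : lambar ∈ Q)
    (hStrict : {z | ∃ h, ∃ v ∈ normalCone Q lambar, z = F' xbar h - v} = Set.univ)
    {h : EuclideanSpace ℝ (Fin n)} (hh : F' xbar h ∈ affineSpan ℝ (normalCone Q lambar)) :
    strictD2phi Q F F' xbar (ContinuousLinearMap.adjoint (F' xbar) lambar) h =
        ((⟪lambar, B h h⟫_ℝ : ℝ) : EReal) ∧
      strictD2supp Q lambar (F' xbar h) = 0 := by
  have hA : ∀ z, ∃ k, F' xbar k - z ∈ normalPointedCone Q lambar := by
    intro z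
    obtain ⟨k, v, hv, rfl⟩ := hStrict.ge (mem_univ z)
    rw [← coe_normalPointedCone] at hv
    exact ⟨k, by simpa only [sub_sub_cancel, SetLike.mem_coe] using hv⟩
  exact ⟨strictD2phi_eq_coe_inner hF' hF'' hF0 hlambar hA hh, strictD2supp_eq_zero hlambar hh⟩

theorem stmt7 {n m : ℕ} (Q : Set (EuclideanSpace ℝ (Fin m)))
    (hQne : Q.Nonempty) (hQc : IsClosed Q) (hQconv : Convex ℝ Q)
    (U : Set (EuclideanSpace ℝ (Fin n))) (hU : IsOpen U)
    (xbar : EuclideanSpace ℝ (Fin n)) (hxbar : xbar ∈ U)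
    (F : EuclideanSpace ℝ (Fin n) → EuclideanSpace ℝ (Fin m))
    (F' : EuclideanSpace ℝ (Fin n) → (EuclideanSpace ℝ (Fin n) →L[ℝ] EuclideanSpace ℝ (Fin m)))
    (F'' : EuclideanSpace ℝ (Fin n) →
      (EuclideanSpace ℝ (Fin n) →L[ℝ] EuclideanSpace ℝ (Fin n) →L[ℝ] EuclideanSpace ℝ (Fin m)))
    (hF' : ∀ x ∈ U, HasFDerivAt F (F' x) x)
    (hF'' : ∀ x ∈ U, HasFDerivAt F' (F'' x) x)
    (hF''cont : ContinuousOn F'' U)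
    (hF0 : F xbar = 0)
    (lambar : EuclideanSpace ℝ (Fin m)) (hlambar : lambar ∈ Q)
    (hRob : (0 : EuclideanSpace ℝ (Fin m)) ∈
      interior {z | ∃ h : EuclideanSpace ℝ (Fin n), ∃ y : EuclideanSpace ℝ (Fin m),
        supportFn Q y ≠ ⊤ ∧ z = F' xbar h - y})
    (hStrict : {z | ∃ h : EuclideanSpace ℝ (Fin n), ∃ v ∈ normalCone Q lambar,
        z = F' xbar h - v} = Set.univ) :
    ∀ h : EuclideanSpace ℝ (Fin n),
      F' xbar h ∈ (affineSpan ℝ (normalCone Q lambar) : Set (EuclideanSpace ℝ (Fin m))) →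
        strictD2phi Q F F' xbar (ContinuousLinearMap.adjoint (F' xbar) lambar) h =
            ((⟪lambar, F'' xbar h h⟫_ℝ : ℝ) : EReal) ∧
          strictD2supp Q lambar (F' xbar h) = 0 := by
  have hU' : U ∈ 𝓝 xbar := hU.mem_nhds hxbar
  exact fun h hh => stmt7_general (eventually_of_mem hU' hF')
    (hasStrictFDerivAt_of_hasFDerivAt_of_continuousAt (eventually_of_mem hU' hF'')
      (hF''cont.continuousAt hU')) hF0 hlambar hStrict hh

end
end

section
/- Let U₀ ⊆ ℝⁿ be open with x̄ ∈ U₀, let F : U₀ → ℝ^m be continuously differentiable with F(x̄) = 0, and let N ⊆ ℝ^m be a nonempty closed convex cone such that {DF(x̄)h − v : h ∈ ℝⁿ, v ∈ N} = ℝ^m. Then there exists a sequence x_k → x̄ such that F(x_k) ∈ ri(N) for all k and the sets (DF(x_k))⁻¹(aff N) converge to (DF(x̄))⁻¹(aff N) in the Painlevé–Kuratowski sense. -/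
open Filter Topology Set

/-- Painlevé–Kuratowski convergence of a sequence of sets to a limit set: every point of the
limit is a limit of a selection, and every cluster point of every selection lies in the limit. -/
def PKConv {E : Type*} [TopologicalSpace E] (S : ℕ → Set E) (L : Set E) : Prop :=
  (∀ x ∈ L, ∃ u : ℕ → E, (∀ k, u k ∈ S k) ∧ Tendsto u atTop (𝓝 x)) ∧
  (∀ u : ℕ → E, (∀ k, u k ∈ S k) → ∀ p, MapClusterPt p atTop u → p ∈ L)

/-!
Write `L` for the linear span of the cone, which is also its affine hull, and `q` for the quotient
map modulo `L`. The constraint qualification makes `q ∘ DF(x̄)` surjective and provides a direction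
`h` with `DF(x̄) h` in the relative interior of the cone. By the implicit function theorem some
curve `γ` through `x̄` has velocity `h` and keeps `q ∘ F` constant, so `F ∘ γ` stays in `L`. Its
difference quotients lie in `L` and tend to a point of the relative interior, which is open in `L`
and stable under positive scaling and under adding points of the cone; hence `F (γ t)` is in the
relative interior for small `t > 0`. The preimages of `L` are the kernels of `q ∘ DF(x)`, and
kernels vary continuously near an operator that has a continuous right inverse.
-/

section IntrinsicInterior

variable {𝕜 V P : Type*} [Ring 𝕜] [AddCommGroup V] [Module 𝕜 V] [TopologicalSpace P]
  [AddTorsor V P] {s : Set P} {x : P}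

theorem mem_intrinsicInterior_iff_mem_nhdsWithin :
    x ∈ intrinsicInterior 𝕜 s ↔ x ∈ affineSpan 𝕜 s ∧ s ∈ 𝓝[affineSpan 𝕜 s] x := by
  simp only [mem_intrinsicInterior, mem_interior_iff_mem_nhds]
  constructor
  · rintro ⟨y, hy, rfl⟩
    exact ⟨y.2, preimage_coe_mem_nhds_subtype.1 hy⟩
  · rintro ⟨hx, hs⟩
    exact ⟨⟨x, hx⟩, preimage_coe_mem_nhds_subtype.2 hs, rfl⟩

theorem intrinsicInterior_mem_nhdsWithin (hx : x ∈ intrinsicInterior 𝕜 s) :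
    intrinsicInterior 𝕜 s ∈ 𝓝[affineSpan 𝕜 s] x := by
  have hs := (mem_intrinsicInterior_iff_mem_nhdsWithin.1 hx).2
  filter_upwards [self_mem_nhdsWithin, eventually_eventually_nhdsWithin.2 hs] with y hyspan hy
  exact mem_intrinsicInterior_iff_mem_nhdsWithin.2 ⟨hyspan, hy⟩

theorem mem_intrinsicInterior_of_mapsTo {g : P → P} (hg : ContinuousAt g x)
    (hspan : MapsTo g (affineSpan 𝕜 s) (affineSpan 𝕜 s)) (hpre : g ⁻¹' s ⊆ s)
    (hx : x ∈ affineSpan 𝕜 s) (hgx : g x ∈ intrinsicInterior 𝕜 s) :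
    x ∈ intrinsicInterior 𝕜 s := by
  have hs := (mem_intrinsicInterior_iff_mem_nhdsWithin.1 hgx).2
  have hg' : Tendsto g (𝓝[affineSpan 𝕜 s] x) (𝓝[affineSpan 𝕜 s] (g x)) :=
    hg.continuousWithinAt.tendsto_nhdsWithin hspan
  exact mem_intrinsicInterior_iff_mem_nhdsWithin.2 ⟨hx, mem_of_superset (hg' hs) hpre⟩

end IntrinsicInterior

section ConvexCone

variable {𝕜 W : Type*} [AddCommGroup W]

theorem coe_affineSpan_convexCone [Ring 𝕜] [PartialOrder 𝕜] [Module 𝕜 W] {C : ConvexCone 𝕜 W}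
    (hC : (C : Set W).Nonempty) :
    (affineSpan 𝕜 (C : Set W) : Set W) = Submodule.span 𝕜 (C : Set W) := by
  obtain ⟨v, hv⟩ := hC
  have hzero : (0 : W) ∈ affineSpan 𝕜 (C : Set W) := by
    have hline := AffineMap.lineMap_mem (-1 : 𝕜) (subset_affineSpan 𝕜 _ hv)
      (subset_affineSpan 𝕜 _ (C.add_mem hv hv))
    simpa [AffineMap.lineMap_apply] using hline
  rw [← affineSpan_insert_eq_affineSpan 𝕜 hzero, affineSpan_insert_zero]

variable [TopologicalSpace W]

theorem mem_span_of_mem_intrinsicInterior [Ring 𝕜] [Module 𝕜 W] {s : Set W} {w : W}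
    (hw : w ∈ intrinsicInterior 𝕜 s) : w ∈ Submodule.span 𝕜 s :=
  Submodule.subset_span (intrinsicInterior_subset hw)

theorem add_mem_intrinsicInterior [Ring 𝕜] [PartialOrder 𝕜] [Module 𝕜 W] [ContinuousSub W]
    {C : ConvexCone 𝕜 W} {v w : W} (hv : v ∈ C)
    (hw : w ∈ intrinsicInterior 𝕜 (C : Set W)) : v + w ∈ intrinsicInterior 𝕜 (C : Set W) := by
  have hspan := coe_affineSpan_convexCone ⟨v, hv⟩
  have hv' : v ∈ Submodule.span 𝕜 (C : Set W) := Submodule.subset_span hv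
  refine mem_intrinsicInterior_of_mapsTo (g := fun z => z - v) (by fun_prop) ?_ ?_ ?_ ?_
  · rw [hspan]
    exact fun z hz => Submodule.sub_mem _ hz hv'
  · intro z hz
    simpa using C.add_mem hz hv
  · rw [← SetLike.mem_coe, hspan]
    exact Submodule.add_mem _ hv' (mem_span_of_mem_intrinsicInterior hw)
  · rwa [add_sub_cancel_left]

theorem smul_mem_intrinsicInterior [Field 𝕜] [LinearOrder 𝕜] [IsStrictOrderedRing 𝕜] [Module 𝕜 W]
    [ContinuousConstSMul 𝕜 W] {C : ConvexCone 𝕜 W} {c : 𝕜} {w : W} (hc : 0 < c)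
    (hw : w ∈ intrinsicInterior 𝕜 (C : Set W)) : c • w ∈ intrinsicInterior 𝕜 (C : Set W) := by
  have hspan := coe_affineSpan_convexCone ⟨w, intrinsicInterior_subset hw⟩
  refine mem_intrinsicInterior_of_mapsTo (g := fun z => c⁻¹ • z) (by fun_prop) ?_ ?_ ?_ ?_
  · rw [hspan]
    exact fun z hz => Submodule.smul_mem _ _ hz
  · exact fun z hz => (C.smul_mem_iff (inv_pos.2 hc)).1 hz
  · rw [← SetLike.mem_coe, hspan]
    exact Submodule.smul_mem _ _ (mem_span_of_mem_intrinsicInterior hw)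
  · rwa [inv_smul_smul₀ hc.ne']

end ConvexCone

section Tangent

theorem eventually_mem_intrinsicInterior_of_hasDerivWithinAt {W : Type*} [NormedAddCommGroup W]
    [NormedSpace ℝ W] {C : ConvexCone ℝ W} {φ : ℝ → W} {d : W}
    (hφ : HasDerivWithinAt φ d (Ioi 0) 0) (hφ0 : φ 0 ∈ C)
    (hspan : ∀ᶠ t in 𝓝[>] 0, φ t ∈ Submodule.span ℝ (C : Set W))
    (hd : d ∈ intrinsicInterior ℝ (C : Set W)) :
    ∀ᶠ t in 𝓝[>] 0, φ t ∈ intrinsicInterior ℝ (C : Set W) := by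
  have hslope_span : ∀ᶠ t in 𝓝[>] 0, slope φ 0 t ∈ affineSpan ℝ (C : Set W) := by
    filter_upwards [hspan] with t ht
    rw [← SetLike.mem_coe, coe_affineSpan_convexCone ⟨φ 0, hφ0⟩]
    exact Submodule.smul_mem _ _ (Submodule.sub_mem _ ht (Submodule.subset_span hφ0))
  have hslope : Tendsto (slope φ 0) (𝓝[>] 0) (𝓝[affineSpan ℝ (C : Set W)] d) :=
    tendsto_nhdsWithin_iff.2
      ⟨(hasDerivWithinAt_iff_tendsto_slope' self_notMem_Ioi).1 hφ, hslope_span⟩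
  filter_upwards [hslope (intrinsicInterior_mem_nhdsWithin hd), self_mem_nhdsWithin]
    with t ht htpos
  have hexpand : φ t = φ 0 + t • slope φ 0 t := by
    simpa [add_comm] using (sub_smul_slope_vadd φ 0 t).symm
  rw [hexpand]
  exact add_mem_intrinsicInterior hφ0 (smul_mem_intrinsicInterior htpos ht)

theorem exists_curve_eventually_eq {𝕜 E G : Type*} [NontriviallyNormedField 𝕜]
    [NormedAddCommGroup E] [NormedSpace 𝕜 E] [CompleteSpace E] [NormedAddCommGroup G]
    [NormedSpace 𝕜 G] [CompleteSpace G] {f : E → G} {f' : E →L[𝕜] G} {a h : E}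
    (hf : HasStrictFDerivAt f f' a) (hf' : f'.HasRightInverse) (hh : f' h = 0) :
    ∃ γ : 𝕜 → E, γ 0 = a ∧ HasDerivAt γ h 0 ∧ ∀ᶠ t in 𝓝 0, f (γ t) = f a := by
  have hrange : f'.range = ⊤ := f'.range_eq_top_of_surjective hf'.surjective
  have hker : f'.ker.ClosedComplemented :=
    f'.closedComplemented_ker_of_rightInverse _ hf'.rightInverse_rightInverse
  let ψ : f'.ker → E := hf.implicitFunctionOfComplemented f f' hrange hker (f a)
  let line : 𝕜 → f'.ker := fun t => t • ⟨h, hh⟩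
  have hline0 : line 0 = 0 := zero_smul _ _
  have hline : HasDerivAt line ⟨h, hh⟩ 0 := by
    simpa using (hasDerivAt_id (0 : 𝕜)).smul_const (⟨h, hh⟩ : f'.ker)
  refine ⟨ψ ∘ line, ?_, ?_, ?_⟩
  · rw [Function.comp_apply, hline0]
    exact hf.implicitFunctionOfComplemented_apply_image hrange hker
  · have hψ : HasFDerivAt ψ f'.ker.subtypeL (line 0) := by
      rw [hline0]
      exact (hf.to_implicitFunctionOfComplemented hrange hker).hasFDerivAt
    exact hψ.comp_hasDerivAt 0 hline
  · have hpair : Tendsto (fun t => (f a, line t)) (𝓝 0) (𝓝 (f a, 0)) :=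
      tendsto_const_nhds.prodMk_nhds (hline0 ▸ hline.continuousAt.tendsto)
    exact hpair.eventually (hf.map_implicitFunctionOfComplemented_eq hrange hker)

end Tangent

section KernelConvergence

variable {𝕜 E G : Type*} [NontriviallyNormedField 𝕜] [NormedAddCommGroup E] [NormedSpace 𝕜 E]
  [NormedAddCommGroup G] [NormedSpace 𝕜 G]

theorem exists_tendsto_mem_ker [CompleteSpace G] {B₀ : E →L[𝕜] G} (hB₀ : B₀.HasRightInverse)
    {x : E} (hx : B₀ x = 0) :
    ∃ v : (E →L[𝕜] G) → E, Tendsto v (𝓝 B₀) (𝓝 x) ∧ ∀ B : E →L[𝕜] G, B (v B) = 0 := by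
  classical
  obtain ⟨R, hR⟩ := hB₀
  have hBR₀ : B₀ ∘L R = 1 := ContinuousLinearMap.ext hR
  have hBR : ContinuousAt (fun B : E →L[𝕜] G => B ∘L R) B₀ := by fun_prop
  have hunit : ∀ᶠ B : E →L[𝕜] G in 𝓝 B₀, IsUnit (B ∘L R) :=
    hBR.eventually_mem (Units.isOpen.mem_nhds (by rw [hBR₀]; exact isUnit_one))
  have hinv : ContinuousAt (fun B : E →L[𝕜] G => Ring.inverse (B ∘L R)) B₀ := by
    refine ContinuousAt.comp (g := Ring.inverse) ?_ hBR
    rw [hBR₀]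
    exact NormedRing.inverse_continuousAt 1
  -- `B` restricts to an isomorphism on `range R`, so `x` can be moved into `ker B` along it.
  let v : (E →L[𝕜] G) → E := fun B => x - R (Ring.inverse (B ∘L R) (B x))
  have hv : Tendsto v (𝓝 B₀) (𝓝 x) := by
    have hvcont : ContinuousAt v B₀ :=
      continuousAt_const.sub
        (R.continuous.continuousAt.comp (hinv.clm_apply (by fun_prop)))
    simpa [v, hx] using hvcont.tendsto
  have hvker : ∀ B : E →L[𝕜] G, IsUnit (B ∘L R) → B (v B) = 0 := by
    intro B hB
    have hcancel := DFunLike.congr_fun (Ring.mul_inverse_cancel _ hB) (B x)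
    rw [map_sub, sub_eq_zero]
    exact hcancel.symm
  refine ⟨fun B => if IsUnit (B ∘L R) then v B else 0, hv.congr' ?_, fun B => ?_⟩
  · filter_upwards [hunit] with B hB
    rw [if_pos hB]
  · by_cases hB : IsUnit (B ∘L R)
    · simpa only [if_pos hB] using hvker B hB
    · simp only [if_neg hB, map_zero]

theorem pkConv_ker [CompleteSpace G] {B : ℕ → E →L[𝕜] G} {B₀ : E →L[𝕜] G}
    (hB : Tendsto B atTop (𝓝 B₀)) (hB₀ : B₀.HasRightInverse) :
    PKConv (fun k => ((B k).ker : Set E)) B₀.ker := by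
  refine ⟨fun x hx => ?_, fun u hu p hp => ?_⟩
  · obtain ⟨v, hv, hvker⟩ := exists_tendsto_mem_ker hB₀ hx
    exact ⟨v ∘ B, fun k => hvker (B k), hv.comp hB⟩
  · obtain ⟨l, hl, hlp⟩ := mapClusterPt_iff_ultrafilter.1 hp
    have heval : Tendsto (fun k => B k (u k)) l (𝓝 (B₀ p)) :=
      (isBoundedBilinearMap_apply.continuous.tendsto (B₀, p)).comp
        ((hB.mono_left hl).prodMk_nhds hlp)
    exact tendsto_nhds_unique heval (tendsto_const_nhds.congr fun k => (hu k).symm)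

end KernelConvergence

section Transversality

variable {𝕜 E W : Type*} [NontriviallyNormedField 𝕜] [CompleteSpace 𝕜] [NormedAddCommGroup E]
  [NormedSpace 𝕜 E] [NormedAddCommGroup W] [NormedSpace 𝕜 W] {L : Submodule 𝕜 W}
  [IsClosed (L : Set W)] [FiniteDimensional 𝕜 (W ⧸ L)]

theorem hasRightInverse_mkQL_comp {A : E →L[𝕜] W} (hA : A.range ⊔ L = ⊤) :
    (L.mkQL ∘L A).HasRightInverse := by
  refine .of_surjective_of_finiteDimensional fun y => ?_
  obtain ⟨z, rfl⟩ := L.mkQ_surjective y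
  obtain ⟨_, ⟨h, rfl⟩, v, hv, rfl⟩ := Submodule.mem_sup.1 (hA ▸ Submodule.mem_top : z ∈ _)
  exact ⟨h, by simp [(Submodule.Quotient.mk_eq_zero L).2 hv]⟩

theorem pkConv_preimage {A : ℕ → E →L[𝕜] W} {A₀ : E →L[𝕜] W}
    (hA : Tendsto A atTop (𝓝 A₀)) (hA₀ : A₀.range ⊔ L = ⊤) :
    PKConv (fun k => A k ⁻¹' L) (A₀ ⁻¹' L) := by
  have := FiniteDimensional.complete 𝕜 (W ⧸ L)
  have hker : ∀ B : E →L[𝕜] W, ((L.mkQL ∘L B).ker : Set E) = B ⁻¹' L := fun B => by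
    ext x
    simp
  have hcomp : Tendsto (fun k => L.mkQL ∘L A k) atTop (𝓝 (L.mkQL ∘L A₀)) :=
    ((ContinuousLinearMap.compL 𝕜 E W (W ⧸ L) L.mkQL).continuous.tendsto A₀).comp hA
  simpa only [hker] using pkConv_ker hcomp (hasRightInverse_mkQL_comp hA₀)

end Transversality

section ConstraintQualification

theorem range_sup_span_eq_top {𝕜 E W : Type*} [Ring 𝕜] [AddCommGroup E] [Module 𝕜 E]
    [AddCommGroup W] [Module 𝕜 W] {s : Set W} {A : E →ₗ[𝕜] W}
    (hA : ∀ z, ∃ h, ∃ v ∈ s, z = A h - v) : A.range ⊔ Submodule.span 𝕜 s = ⊤ := by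
  refine eq_top_iff.2 fun z _ => ?_
  obtain ⟨h, v, hv, rfl⟩ := hA z
  exact Submodule.sub_mem _ (Submodule.mem_sup_left ⟨h, rfl⟩)
    (Submodule.mem_sup_right (Submodule.subset_span hv))

theorem exists_apply_mem_intrinsicInterior {𝕜 ι W : Type*} [Ring 𝕜] [PartialOrder 𝕜]
    [AddCommGroup W] [Module 𝕜 W] [TopologicalSpace W] [ContinuousSub W] {C : ConvexCone 𝕜 W}
    {A : ι → W} (hA : ∀ z, ∃ h, ∃ v ∈ C, z = A h - v)
    (hC : (intrinsicInterior 𝕜 (C : Set W)).Nonempty) :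
    ∃ h, A h ∈ intrinsicInterior 𝕜 (C : Set W) := by
  obtain ⟨w, hw⟩ := hC
  obtain ⟨h, v, hv, rfl⟩ := hA w
  exact ⟨h, by simpa using add_mem_intrinsicInterior hv hw⟩

variable {E W : Type*} [NormedAddCommGroup E] [NormedSpace ℝ E] [CompleteSpace E]
  [NormedAddCommGroup W] [NormedSpace ℝ W] {C : ConvexCone ℝ W}
  [IsClosed (Submodule.span ℝ (C : Set W) : Set W)]
  [FiniteDimensional ℝ (W ⧸ Submodule.span ℝ (C : Set W))]

theorem exists_seq_tendsto_mem_intrinsicInterior {F : E → W} {A : E →L[ℝ] W} {a h : E}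
    (hF : HasStrictFDerivAt F A a) (hFa : F a ∈ C)
    (hA : A.range ⊔ Submodule.span ℝ (C : Set W) = ⊤)
    (hh : A h ∈ intrinsicInterior ℝ (C : Set W)) :
    ∃ x : ℕ → E, Tendsto x atTop (𝓝 a) ∧ ∀ k, F (x k) ∈ intrinsicInterior ℝ (C : Set W) := by
  set L := Submodule.span ℝ (C : Set W)
  have hmkQ : ∀ w, L.mkQL w = 0 ↔ w ∈ L := fun w => Submodule.Quotient.mk_eq_zero L
  obtain ⟨γ, rfl, hγ, hγF⟩ := exists_curve_eventually_eq (L.mkQL.hasStrictFDerivAt.comp a hF)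
    (hasRightInverse_mkQL_comp hA) ((hmkQ _).2 (mem_span_of_mem_intrinsicInterior hh))
  have hFγ_span : ∀ᶠ t in 𝓝[>] 0, F (γ t) ∈ L := by
    filter_upwards [hγF.filter_mono nhdsWithin_le_nhds] with t ht
    exact (hmkQ _).1 (ht.trans ((hmkQ _).2 (Submodule.subset_span hFa)))
  have hFγ : ∀ᶠ t in 𝓝[>] 0, F (γ t) ∈ intrinsicInterior ℝ (C : Set W) :=
    eventually_mem_intrinsicInterior_of_hasDerivWithinAt
      (hF.hasFDerivAt.comp_hasDerivAt 0 hγ).hasDerivWithinAt hFa hFγ_span hh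
  obtain ⟨t, ht, htF⟩ := exists_seq_forall_of_frequently hFγ.frequently
  exact ⟨γ ∘ t, hγ.continuousAt.tendsto.comp (ht.mono_right nhdsWithin_le_nhds), htF⟩

theorem stmt8_general (hC : (intrinsicInterior ℝ (C : Set W)).Nonempty)
    {F : E → W} {F' : E → E →L[ℝ] W} {a : E} (hF' : ∀ᶠ x in 𝓝 a, HasFDerivAt F (F' x) x)
    (hF'cont : ContinuousAt F' a) (hFa : F a ∈ C)
    (hCQ : ∀ z, ∃ h, ∃ v ∈ C, z = F' a h - v) :
    ∃ x : ℕ → E, Tendsto x atTop (𝓝 a) ∧ (∀ k, F (x k) ∈ intrinsicInterior ℝ (C : Set W)) ∧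
      PKConv (fun k => F' (x k) ⁻¹' (affineSpan ℝ (C : Set W) : Set W))
        (F' a ⁻¹' (affineSpan ℝ (C : Set W) : Set W)) := by
  have hstrict : HasStrictFDerivAt F (F' a) a :=
    hasStrictFDerivAt_of_hasFDerivAt_of_continuousAt hF' hF'cont
  have htransversal := range_sup_span_eq_top hCQ
  obtain ⟨h, hh⟩ := exists_apply_mem_intrinsicInterior hCQ hC
  obtain ⟨x, hx, hFx⟩ := exists_seq_tendsto_mem_intrinsicInterior hstrict hFa htransversal hh
  refine ⟨x, hx, hFx, ?_⟩
  rw [coe_affineSpan_convexCone ⟨F a, hFa⟩]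
  exact pkConv_preimage (hF'cont.tendsto.comp hx) htransversal

end ConstraintQualification

theorem stmt8 {n m : ℕ}
    (U₀ : Set (EuclideanSpace ℝ (Fin n))) (hU₀ : IsOpen U₀)
    (xbar : EuclideanSpace ℝ (Fin n)) (hxbar : xbar ∈ U₀)
    (F : EuclideanSpace ℝ (Fin n) → EuclideanSpace ℝ (Fin m))
    (F' : EuclideanSpace ℝ (Fin n) → (EuclideanSpace ℝ (Fin n) →L[ℝ] EuclideanSpace ℝ (Fin m)))
    (hF' : ∀ x ∈ U₀, HasFDerivAt F (F' x) x)
    (hF'cont : ContinuousOn F' U₀)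
    (hF0 : F xbar = 0)
    (N : Set (EuclideanSpace ℝ (Fin m)))
    (hNne : N.Nonempty) (hNc : IsClosed N) (hNconv : Convex ℝ N)
    (hNcone : ∀ c : ℝ, 0 ≤ c → ∀ x ∈ N, c • x ∈ N)
    (hCQ : {z | ∃ h, ∃ v ∈ N, z = F' xbar h - v} = Set.univ) :
    ∃ x : ℕ → EuclideanSpace ℝ (Fin n),
      Tendsto x atTop (𝓝 xbar) ∧
      (∀ k, F (x k) ∈ intrinsicInterior ℝ N) ∧

      PKConv (fun k => F' (x k) ⁻¹' (affineSpan ℝ N : Set (EuclideanSpace ℝ (Fin m))))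
        (F' xbar ⁻¹' (affineSpan ℝ N : Set (EuclideanSpace ℝ (Fin m)))) := by
  have hadd : ∀ ⦃v⦄, v ∈ N → ∀ ⦃w⦄, w ∈ N → v + w ∈ N := fun v hv w hw => by
    simpa [midpoint_eq_smul_add] using hNcone 2 zero_le_two _ (hNconv.midpoint_mem hv hw)
  let C : ConvexCone ℝ (EuclideanSpace ℝ (Fin m)) := ⟨N, fun c hc v => hNcone c hc.le v, hadd⟩
  have h0N : (0 : EuclideanSpace ℝ (Fin m)) ∈ N :=
    hNne.elim fun v hv => zero_smul ℝ v ▸ hNcone 0 le_rfl v hv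
  have := (Submodule.span ℝ N).closed_of_finiteDimensional
  exact stmt8_general (C := C) (hNne.intrinsicInterior hNconv)
    (eventually_of_mem (hU₀.mem_nhds hxbar) hF') (hF'cont.continuousAt (hU₀.mem_nhds hxbar))
    (hF0.symm ▸ h0N) (eq_univ_iff_forall.1 hCQ)
end
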